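/- Let k ≥ 3 be an integer, A ≥ 1, and ε > 0. There is a constant C = C(A,k,ε) such that: if 1 ≤ a < b ≤ 2a, f : [a,b] → ℝ has continuous derivatives up to order k, and λ_k > 0 satisfies λ_k ≤ |f^{(k)}(x)| ≤ A λ_k for all x ∈ [a,b], then |Σ_{a < n ≤ b} e(f(n))| ≤ C · a^{1+ε} ( λ_k^{1/(k(k−1))} + a^{−1/(k(k−1))} + a^{−2/(k(k−1))} λ_k^{−2/(k²(k−1))} ), where n runs over integers. -/

import Mathlib

/-- `e(x) = exp(2πix)`. -/
noncomputable def eexp (x : ℝ) : ℂ := Complex.exp (2 * Real.pi * Complex.I * x)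

/-!
Heath-Brown's argument with `d = k - 1`. Averaging over shifts, the sum is controlled by sums of
length `H ≈ lam ^ (-1 / k)`, on which the Taylor polynomial of degree `d` at the starting point `x`
replaces `f` up to a bounded error. Round its coefficients to grids of spacing about `H ^ (-j)` in
degree `j`. By Hölder's inequality, the sum over `x` of the resulting Weyl sums is bounded by the
mean value of Weyl sums over all coefficient vectors, times the number of pairs `x`, `y` with the
same rounded coefficients. The bounds on the `k`-th derivative make such coincidences rare, and
the mean value is bounded by Vinogradov's mean value theorem with the critical exponent `d (d + 1)`.

Vinogradov's mean value theorem comes from `ℓ²` decoupling of the moment curve over `ℤ / p ^ n`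
for a large prime `p`. Sums over two pieces of the curve that are separated modulo `p` are bounded
by decoupling in lower dimensions, alternately on either piece. A positive decoupling exponent
would improve on itself under iteration of these bilinear bounds, so the exponent can be made
arbitrarily small.
-/

namespace HeathBrown

open Filter Finset Matrix Polynomial
open scoped ComplexConjugate

section ResidueClasses

/-- The elements of `T` congruent to `x` modulo `m`. -/
def residueClass (m : ℕ) (T : Finset ℤ) (x : ℤ) : Finset ℤ :=
  T.filter fun y ↦ (m : ℤ) ∣ y - x

/-- The partition of `T` into its nonempty residue classes modulo `m`. -/
def residueClasses (m : ℕ) (T : Finset ℤ) : Finset (Finset ℤ) :=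
  T.image (residueClass m T)

variable {m m' : ℕ} {T U : Finset ℤ} {x y : ℤ}

lemma mem_residueClass : y ∈ residueClass m T x ↔ y ∈ T ∧ (m : ℤ) ∣ y - x := by
  simp [residueClass]

lemma mem_residueClasses : U ∈ residueClasses m T ↔ ∃ x ∈ T, residueClass m T x = U := by
  simp [residueClasses]

lemma subset_of_mem_residueClasses (hU : U ∈ residueClasses m T) : U ⊆ T := by
  obtain ⟨x, _, rfl⟩ := mem_residueClasses.1 hU
  exact filter_subset _ _

lemma dvd_sub_of_mem_residueClasses (hU : U ∈ residueClasses m T) (hx : x ∈ U) (hy : y ∈ U) :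
    (m : ℤ) ∣ y - x := by
  obtain ⟨z, _, rfl⟩ := mem_residueClasses.1 hU
  simpa using dvd_sub (mem_residueClass.1 hy).2 (mem_residueClass.1 hx).2

lemma residueClass_congr (h : (m : ℤ) ∣ y - x) : residueClass m T x = residueClass m T y := by
  ext z
  rw [mem_residueClass, mem_residueClass, ← sub_sub_sub_cancel_right z y x, dvd_sub_left h]

lemma mem_residueClass_self (hx : x ∈ T) : x ∈ residueClass m T x := by
  simp [mem_residueClass, hx]

lemma residueClass_mem_residueClasses (hx : x ∈ T) :
    residueClass m T x ∈ residueClasses m T :=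
  mem_residueClasses.2 ⟨x, hx, rfl⟩

lemma eq_residueClass_of_mem (hU : U ∈ residueClasses m T) (hx : x ∈ U) :
    U = residueClass m T x := by
  obtain ⟨z, _, rfl⟩ := mem_residueClasses.1 hU
  exact residueClass_congr (mem_residueClass.1 hx).2

lemma nonempty_of_mem_residueClasses (hU : U ∈ residueClasses m T) : U.Nonempty := by
  obtain ⟨x, hx, rfl⟩ := mem_residueClasses.1 hU
  exact ⟨x, mem_residueClass_self hx⟩

lemma pairwiseDisjoint_residueClasses (m : ℕ) (T : Finset ℤ) :
    (residueClasses m T : Set (Finset ℤ)).PairwiseDisjoint id := by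
  refine fun U hU V hV hne ↦ disjoint_left.2 fun x hxU hxV ↦ hne ?_
  exact (eq_residueClass_of_mem hU hxU).trans (eq_residueClass_of_mem hV hxV).symm

lemma biUnion_residueClasses (m : ℕ) (T : Finset ℤ) : (residueClasses m T).biUnion id = T := by
  ext x
  simp only [mem_biUnion, id]
  exact ⟨fun ⟨_, hU, hx⟩ ↦ subset_of_mem_residueClasses hU hx,
    fun hx ↦ ⟨_, residueClass_mem_residueClasses hx, mem_residueClass_self hx⟩⟩

lemma sum_residueClasses {β : Type*} [AddCommMonoid β] (m : ℕ) (T : Finset ℤ) (f : ℤ → β) :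
    ∑ U ∈ residueClasses m T, ∑ x ∈ U, f x = ∑ x ∈ T, f x := by
  conv_rhs => rw [← biUnion_residueClasses m T, sum_biUnion (pairwiseDisjoint_residueClasses m T)]
  rfl

lemma residueClass_residueClass {z : ℤ} (hmm' : m ∣ m') (hx : (m : ℤ) ∣ x - z) :
    residueClass m' (residueClass m T z) x = residueClass m' T x := by
  ext y
  simp only [mem_residueClass]
  refine ⟨fun ⟨⟨hy, _⟩, hyx⟩ ↦ ⟨hy, hyx⟩, fun ⟨hy, hyx⟩ ↦ ⟨⟨hy, ?_⟩, hyx⟩⟩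
  simpa using dvd_add ((Int.natCast_dvd_natCast.2 hmm').trans hyx) hx

lemma biUnion_residueClasses_residueClasses (hmm' : m ∣ m') (T : Finset ℤ) :
    (residueClasses m T).biUnion (residueClasses m') = residueClasses m' T := by
  ext V
  simp only [mem_biUnion]
  constructor
  · rintro ⟨U, hU, hV⟩
    obtain ⟨z, _, rfl⟩ := mem_residueClasses.1 hU
    obtain ⟨x, hx, rfl⟩ := mem_residueClasses.1 hV
    rw [residueClass_residueClass hmm' (mem_residueClass.1 hx).2]
    exact residueClass_mem_residueClasses (mem_residueClass.1 hx).1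
  · intro hV
    obtain ⟨x, hx, rfl⟩ := mem_residueClasses.1 hV
    refine ⟨residueClass m T x, residueClass_mem_residueClasses hx, ?_⟩
    rw [← residueClass_residueClass hmm' (by simp : (m : ℤ) ∣ x - x)]
    exact residueClass_mem_residueClasses (mem_residueClass_self hx)

lemma sum_residueClasses_residueClasses {β : Type*} [AddCommMonoid β] (hmm' : m ∣ m')
    (T : Finset ℤ) (g : Finset ℤ → β) :
    ∑ U ∈ residueClasses m T, ∑ V ∈ residueClasses m' U, g V =
      ∑ V ∈ residueClasses m' T, g V := by
  rw [← biUnion_residueClasses_residueClasses hmm' T, sum_biUnion]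
  refine fun U hU U' hU' hne ↦ disjoint_left.2 fun V hV hV' ↦ ?_
  obtain ⟨x, hx⟩ := nonempty_of_mem_residueClasses hV
  exact disjoint_left.1 (pairwiseDisjoint_residueClasses m T hU hU' hne)
    (subset_of_mem_residueClasses hV hx) (subset_of_mem_residueClasses hV' hx)

lemma card_residueClasses_le (hm : 0 < m) (T : Finset ℤ) : (residueClasses m T).card ≤ m := by
  have hsurj : Set.SurjOn (residueClass m T) (Ico (0 : ℤ) m) (residueClasses m T) := by
    intro U hU
    obtain ⟨x, _, rfl⟩ := mem_residueClasses.1 hU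
    refine ⟨x % m, ?_, residueClass_congr Int.dvd_self_sub_emod⟩
    rw [coe_Ico]
    exact ⟨Int.emod_nonneg x (by lia), Int.emod_lt_of_pos x (by lia)⟩
  simpa using card_le_card_of_surjOn _ hsurj

end ResidueClasses

section AffineImage

lemma affine_injective {P : ℕ} (hP : 0 < P) (x₀ : ℤ) :
    Function.Injective fun y : ℤ ↦ x₀ + P * y := by
  refine (add_right_injective x₀).comp (mul_right_injective₀ ?_)
  exact_mod_cast hP.ne'

lemma residueClass_image_affine {P : ℕ} (m : ℕ) (hP : 0 < P) (x₀ : ℤ) (Y : Finset ℤ) (y : ℤ) :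
    residueClass (P * m) (Y.image fun y ↦ x₀ + P * y) (x₀ + P * y) =
      (residueClass m Y y).image fun y ↦ x₀ + P * y := by
  have hP' : (P : ℤ) ≠ 0 := by exact_mod_cast hP.ne'
  have hdvd (z : ℤ) : ((P * m : ℕ) : ℤ) ∣ (x₀ + P * z) - (x₀ + P * y) ↔ (m : ℤ) ∣ z - y := by
    rw [add_sub_add_left_eq_sub, ← mul_sub, Nat.cast_mul, mul_dvd_mul_iff_left hP']
  simp only [residueClass, filter_image, hdvd]

lemma residueClasses_image_affine {P : ℕ} (m : ℕ) (hP : 0 < P) (x₀ : ℤ) (Y : Finset ℤ) :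
    residueClasses (P * m) (Y.image fun y ↦ x₀ + P * y) =
      (residueClasses m Y).image (image fun y ↦ x₀ + P * y) := by
  unfold residueClasses
  rw [image_image, image_image]
  exact image_congr fun y _ ↦ residueClass_image_affine m hP x₀ Y y

lemma sum_residueClasses_image_affine {β : Type*} [AddCommMonoid β] {P : ℕ} (m : ℕ) (hP : 0 < P)
    (x₀ : ℤ) (Y : Finset ℤ) (g : Finset ℤ → β) :
    ∑ U ∈ residueClasses (P * m) (Y.image fun y ↦ x₀ + P * y), g U =
      ∑ U ∈ residueClasses m Y, g (U.image fun y ↦ x₀ + P * y) := by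
  rw [residueClasses_image_affine m hP, sum_image]
  exact fun U _ V _ h ↦ image_injective (affine_injective hP x₀) h

lemma exists_eq_image_affine {P x₀ : ℤ} {T : Finset ℤ} (hT : ∀ x ∈ T, P ∣ x - x₀) :
    ∃ Y : Finset ℤ, T = Y.image fun y ↦ x₀ + P * y := by
  refine ⟨T.image fun x ↦ (x - x₀) / P, ?_⟩
  rw [image_image]
  refine image_id.symm.trans (image_congr fun x hx ↦ ?_)
  simp [Int.mul_ediv_cancel' (hT x hx)]

end AffineImage

section Inequalities

lemma sum_pow_le_pow_sum {ι : Type*} {s : Finset ι} {x : ι → ℝ} (hx : ∀ i ∈ s, 0 ≤ x i) {q : ℕ}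
    (hq : 1 ≤ q) : ∑ i ∈ s, x i ^ q ≤ (∑ i ∈ s, x i) ^ q := by
  obtain ⟨t, rfl⟩ := Nat.exists_eq_add_of_le' hq
  simp only [pow_succ, mul_sum]
  gcongr with i hi
  exacts [hx i hi, hx i hi, single_le_sum hx hi]

lemma norm_sum_pow_le {ι E : Type*} [SeminormedAddCommGroup E] (s : Finset ι) (z : ι → E) (q : ℕ) :
    ‖∑ i ∈ s, z i‖ ^ (q + 1) ≤ (s.card : ℝ) ^ q * ∑ i ∈ s, ‖z i‖ ^ (q + 1) :=
  (pow_le_pow_left₀ (norm_nonneg _) (norm_sum_le _ _) _).trans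
    (pow_sum_le_card_mul_sum_pow (fun _ _ ↦ norm_nonneg _) q)

lemma sum_pow_succ_le_of_pow_succ_le {ι : Type*} (s : Finset ι) {A B W : ι → ℝ} (t : ℕ)
    (hA : ∀ i, 0 ≤ A i) (hB : ∀ i, 0 ≤ B i) (hW : ∀ i, 0 ≤ W i)
    (h : ∀ i, W i ^ (t + 1) ≤ A i ^ t * B i) :
    (∑ i ∈ s, W i) ^ (t + 1) ≤ (∑ i ∈ s, A i) ^ t * ∑ i ∈ s, B i := by
  have hSA : 0 ≤ ∑ i ∈ s, A i := sum_nonneg fun i _ ↦ hA i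
  have hSB : 0 ≤ ∑ i ∈ s, B i := sum_nonneg fun i _ ↦ hB i
  rcases Nat.eq_zero_or_pos t with rfl | ht
  · simpa using sum_le_sum fun i (_ : i ∈ s) ↦ by simpa using h i
  have hW0 (i) (hi : A i = 0) : W i = 0 := by
    have := h i
    rw [hi, zero_pow ht.ne', zero_mul] at this
    exact pow_eq_zero_iff (by lia) |>.1 (this.antisymm (pow_nonneg (hW i) _))
  have hmul (i) : A i * (W i / A i) = W i := mul_div_cancel_of_imp' (hW0 i)
  have hpow (i) : A i * (W i / A i) ^ (t + 1) ≤ B i := by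
    rcases (hA i).eq_or_lt with hi | hi
    · simpa [← hi] using hB i
    · rw [div_pow, ← mul_div_assoc, div_le_iff₀ (by positivity)]
      calc A i * W i ^ (t + 1) ≤ A i * (A i ^ t * B i) := by gcongr; exact h i
        _ = B i * A i ^ (t + 1) := by ring
  have hr : (0 : ℝ) < t + 1 := by positivity
  have key := Real.inner_le_weight_mul_Lp_of_nonneg s (p := t + 1) (by simp) A (fun i ↦ W i / A i)
    hA fun i ↦ div_nonneg (hW i) (hA i)
  simp only [hmul] at key
  calc (∑ i ∈ s, W i) ^ (t + 1)
      ≤ ((∑ i ∈ s, A i) ^ (1 - (t + 1 : ℝ)⁻¹) * (∑ i ∈ s, B i) ^ (t + 1 : ℝ)⁻¹) ^ (t + 1) := by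
        refine pow_le_pow_left₀ (sum_nonneg fun i _ ↦ hW i) (key.trans ?_) _
        gcongr with i
        · exact sum_nonneg fun i _ ↦ mul_nonneg (hA i)
            (Real.rpow_nonneg (div_nonneg (hW i) (hA i)) _)
        · exact_mod_cast hpow i
    _ = (∑ i ∈ s, A i) ^ t * ∑ i ∈ s, B i := by
        rw [mul_pow, ← Real.rpow_mul_natCast hSA, ← Real.rpow_mul_natCast hSB,
          ← Real.rpow_natCast _ t]
        push_cast
        rw [inv_mul_cancel₀ hr.ne', sub_mul, inv_mul_cancel₀ hr.ne', Real.rpow_one]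
        ring_nf

lemma Lp_sum_le_of_nonneg {Ω ι : Type*} {Ω' : Finset Ω} (s : Finset ι) {u : ι → Ω → ℝ}
    (hu : ∀ i w, 0 ≤ u i w) {r : ℝ} (hr : 1 ≤ r) :
    (∑ w ∈ Ω', (∑ i ∈ s, u i w) ^ r) ^ (1 / r) ≤ ∑ i ∈ s, (∑ w ∈ Ω', u i w ^ r) ^ (1 / r) := by
  have hr0 : r ≠ 0 := by positivity
  classical
  induction s using Finset.induction_on with
  | empty => simp [Real.zero_rpow hr0, hr0]
  | insert i s hi ih =>
    simp only [sum_insert hi]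
    exact (Real.Lp_add_le_of_nonneg _ hr (fun w _ ↦ hu i w)
      (fun w _ ↦ sum_nonneg fun j _ ↦ hu j w)).trans (by gcongr)

lemma weighted_minkowski {Ω ι : Type*} [Fintype Ω] (s : Finset ι) {G : Ω → ℝ} (hG : ∀ w, 0 ≤ G w)
    {h : ι → Ω → ℝ} (hh : ∀ i w, 0 ≤ h i w) {r : ℕ} (hr : 1 ≤ r) :
    ∑ w, G w * (∑ i ∈ s, h i w ^ (1 / (r : ℝ))) ^ r ≤
      (∑ i ∈ s, (∑ w, G w * h i w) ^ (1 / (r : ℝ))) ^ r := by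
  have hr0 : r ≠ 0 := by lia
  set u : ι → Ω → ℝ := fun i w ↦ (G w * h i w) ^ (1 / (r : ℝ)) with hu
  have hu0 (i w) : 0 ≤ u i w := Real.rpow_nonneg (mul_nonneg (hG w) (hh i w)) _
  have hur (i w) : G w * h i w = u i w ^ r := by
    rw [hu, one_div, Real.rpow_inv_natCast_pow (mul_nonneg (hG w) (hh i w)) hr0]
  have hsum (w) : G w * (∑ i ∈ s, h i w ^ (1 / (r : ℝ))) ^ r = (∑ i ∈ s, u i w) ^ r := by
    simp only [hu, Real.mul_rpow (hG w) (hh _ w), ← mul_sum, mul_pow]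
    rw [one_div, Real.rpow_inv_natCast_pow (hG w) hr0]
  have key := Lp_sum_le_of_nonneg (Ω' := univ) s hu0 (r := r) (by exact_mod_cast hr)
  simp only [Real.rpow_natCast] at key
  simp only [hsum, hur]
  have h0 : 0 ≤ ∑ w, (∑ i ∈ s, u i w) ^ r :=
    sum_nonneg fun w _ ↦ pow_nonneg (sum_nonneg fun i _ ↦ hu0 i w) _
  calc ∑ w, (∑ i ∈ s, u i w) ^ r = ((∑ w, (∑ i ∈ s, u i w) ^ r) ^ (1 / (r : ℝ))) ^ r := by
        rw [one_div, Real.rpow_inv_natCast_pow h0 hr0]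
    _ ≤ _ := pow_le_pow_left₀ (Real.rpow_nonneg h0 _) key _

end Inequalities

/-! ### Curve sums and decoupling constants -/

section Phases

variable {M k : ℕ} [NeZero M]

/-- The additive character of `(ℤ/M)^k` with frequency `w`, evaluated at an integer vector `m`. -/
noncomputable def phase (w : Fin k → ZMod M) (m : Fin k → ℤ) : ℂ :=
  ZMod.stdAddChar (∑ j, w j * (m j : ZMod M))

lemma phase_add (w v : Fin k → ZMod M) (m : Fin k → ℤ) :
    phase (w + v) m = phase w m * phase v m := by
  simp only [phase, ← AddChar.map_add_eq_mul, ← sum_add_distrib, Pi.add_apply, add_mul]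

lemma norm_phase (w : Fin k → ZMod M) (m : Fin k → ℤ) : ‖phase w m‖ = 1 :=
  AddChar.norm_apply _ _

lemma stdAddChar_mul_left {P M' : ℕ} [NeZero M'] (h : M = P * M') (N : ℤ) :
    (ZMod.stdAddChar ((P * N : ℤ) : ZMod M) : ℂ) = ZMod.stdAddChar (N : ZMod M') := by
  have hP : (P : ℂ) ≠ 0 := by
    rintro hP
    exact NeZero.ne M (by rw [h, Nat.cast_eq_zero.1 hP, zero_mul])
  have hM' : (M' : ℂ) ≠ 0 := NeZero.ne _
  rw [ZMod.stdAddChar_coe, ZMod.stdAddChar_coe, h]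
  congr 1
  push_cast
  field_simp

/-- The point of parameter `x` on the polynomial curve `ψ`. -/
def curvePoint (ψ : Fin k → ℤ[X]) (x : ℤ) : Fin k → ℤ := fun j ↦ (ψ j).eval x

/-- The exponential sum with coefficients `a` over the points of `ψ` with parameter in `T`. -/
noncomputable def curveSum (ψ : Fin k → ℤ[X]) (a : ℤ → ℂ) (T : Finset ℤ)
    (w : Fin k → ZMod M) : ℂ :=
  ∑ x ∈ T, a x * phase w (curvePoint ψ x)

/-- The curve `ψ` is congruent modulo `p` to a unit multiple of the moment curve
`x ↦ (x, x², …, x^k)`. -/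
def IsScaledMomentCurve (p : ℕ) (ψ : Fin k → ℤ[X]) : Prop :=
  ∃ u : ℤ, ¬ (p : ℤ) ∣ u ∧ ∀ j : Fin k, ∃ q : ℤ[X], ψ j = C u * X ^ ((j : ℕ) + 1) + C (p : ℤ) * q

end Phases

section Triangular

/-- The triangular number `l (l + 1) / 2`, half of the critical exponent in dimension `l`. -/
def triangular (l : ℕ) : ℕ := l * (l + 1) / 2

lemma two_mul_triangular (l : ℕ) : 2 * triangular l = l * (l + 1) :=
  Nat.mul_div_cancel' (Nat.even_mul_succ_self l).two_dvd

lemma triangular_succ (l : ℕ) : triangular (l + 1) = triangular l + (l + 1) := by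
  linarith [two_mul_triangular l, two_mul_triangular (l + 1)]

lemma triangular_strictMono : StrictMono triangular :=
  strictMono_nat_of_lt_succ fun l ↦ by rw [triangular_succ]; omega

lemma triangular_mono : Monotone triangular :=
  triangular_strictMono.monotone

lemma triangular_pos {l : ℕ} (hl : 1 ≤ l) : 0 < triangular l :=
  triangular_mono hl

end Triangular

section Decoupling

variable {p : ℕ} [NeZero p] {k l m n : ℕ}

/-- The square of the `L^{k(k+1)}` norm of the exponential sum of `T` over frequencies modulo
`p ^ (k n)`. -/
noncomputable def curveNorm (p : ℕ) [NeZero p] (n : ℕ) (ψ : Fin k → ℤ[X]) (a : ℤ → ℂ)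
    (T : Finset ℤ) : ℝ :=
  (∑ w : Fin k → ZMod (p ^ (k * n)), ‖curveSum ψ a T w‖ ^ (2 * triangular k)) ^
    (1 / (triangular k : ℝ))

/-- The sum of the squares of the norms of the pieces of `T` in the residue classes modulo
`p ^ n`. -/
noncomputable def squareFunction (p : ℕ) [NeZero p] (n : ℕ) (ψ : Fin k → ℤ[X]) (a : ℤ → ℂ)
    (T : Finset ℤ) : ℝ :=
  ∑ U ∈ residueClasses (p ^ n) T, curveNorm p n ψ a U

/-- The `p`-adic `ℓ²` decoupling inequality in dimension `k` at scale `p ^ (-n)`, with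
constant `K`, uniformly over all curves congruent to the moment curve. -/
def DecouplingBound (p : ℕ) [NeZero p] (k n : ℕ) (K : ℝ) : Prop :=
  ∀ ψ : Fin k → ℤ[X], IsScaledMomentCurve p ψ → ∀ (a : ℤ → ℂ) (T : Finset ℤ),
    ∑ w : Fin k → ZMod (p ^ (k * n)), ‖curveSum ψ a T w‖ ^ (2 * triangular k) ≤
      K * squareFunction p n ψ a T ^ triangular k

lemma curveNorm_nonneg (ψ : Fin k → ℤ[X]) (a : ℤ → ℂ) (T : Finset ℤ) :
    0 ≤ curveNorm p n ψ a T := by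
  unfold curveNorm
  positivity

lemma squareFunction_nonneg (ψ : Fin k → ℤ[X]) (a : ℤ → ℂ) (T : Finset ℤ) :
    0 ≤ squareFunction p n ψ a T :=
  sum_nonneg fun _ _ ↦ curveNorm_nonneg ψ a _

lemma curveSum_eq_sum_residueClasses {M : ℕ} [NeZero M] (m : ℕ) (ψ : Fin k → ℤ[X]) (a : ℤ → ℂ)
    (T : Finset ℤ) (w : Fin k → ZMod M) :
    curveSum ψ a T w = ∑ U ∈ residueClasses m T, curveSum ψ a U w :=
  (sum_residueClasses m T _).symm

lemma sum_squareFunction_residueClasses {m : ℕ} (hmn : m ≤ n) (ψ : Fin k → ℤ[X]) (a : ℤ → ℂ)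
    (T : Finset ℤ) :
    ∑ U ∈ residueClasses (p ^ m) T, squareFunction p n ψ a U = squareFunction p n ψ a T :=
  sum_residueClasses_residueClasses (pow_dvd_pow p hmn) T _

lemma card_mul_sum_eq_sum_sum_shift {Ω ι : Type*} [Fintype Ω] [AddGroup Ω] [Fintype ι]
    {G : Ω → ℝ} {v : ι → Ω} (hG : ∀ w c, G (w + v c) = G w) (H : Ω → ℝ) :
    (Fintype.card ι : ℝ) * ∑ w, G w * H w = ∑ w, G w * ∑ c, H (w + v c) := by
  have translate (c : ι) : ∑ w, G w * H w = ∑ w, G w * H (w + v c) := by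
    rw [← Equiv.sum_comp (Equiv.addRight (v c))]
    simp only [Equiv.coe_addRight, hG]
  simp_rw [mul_sum]
  rw [sum_comm, ← mul_sum, ← nsmul_eq_mul, ← card_univ, ← sum_const]
  exact sum_congr rfl fun c _ ↦ translate c

/-- Averaging over the translations by `v c` turns the inner sums into curve sums with frequency
`c`; Minkowski's inequality then moves the weight inside the sum over residue classes. -/
lemma DecouplingBound.fibred {K : ℝ} (hD : DecouplingBound p l m K) (hK : 0 ≤ K) (hl : 1 ≤ l)
    {ψ : Fin l → ℤ[X]} (hψ : IsScaledMomentCurve p ψ) {Ω : Type*} [Fintype Ω] [AddCommGroup Ω]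
    {G : Ω → ℝ} (hG_nonneg : ∀ w, 0 ≤ G w) {v : (Fin l → ZMod (p ^ (l * m))) → Ω}
    (hG : ∀ w c, G (w + v c) = G w) {F : ℤ → Ω → ℂ} {u : (Fin l → ZMod (p ^ (l * m))) → ℂ}
    (hu : ∀ c, ‖u c‖ = 1)
    (hF : ∀ y w c, F y (w + v c) = u c * (F y w * phase c (curvePoint ψ y))) (Y : Finset ℤ) :
    ∑ w, G w * ‖∑ y ∈ Y, F y w‖ ^ (2 * triangular l) ≤
      K * (∑ U ∈ residueClasses (p ^ m) Y,
        (∑ w, G w * ‖∑ y ∈ U, F y w‖ ^ (2 * triangular l)) ^ (1 / (triangular l : ℝ))) ^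
          triangular l := by
  set r := triangular l
  have hr1 : 1 ≤ r := triangular_pos hl
  set N : ℝ := (Fintype.card (Fin l → ZMod (p ^ (l * m))) : ℝ) with hN
  have hN_pos : 0 < N := Nat.cast_pos.2 Fintype.card_pos
  set I : Finset ℤ → ℝ := fun U ↦ ∑ w, G w * ‖∑ y ∈ U, F y w‖ ^ (2 * r) with hI
  have hI_nonneg (U) : 0 ≤ I U := sum_nonneg fun w _ ↦ mul_nonneg (hG_nonneg w) (by positivity)
  have norm_shift (U w c) : ‖∑ y ∈ U, F y (w + v c)‖ = ‖curveSum ψ (F · w) U c‖ := by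
    simp only [hF, ← mul_sum, norm_mul, hu, one_mul, curveSum]
  have average (U) : N * I U =
      ∑ w, G w * ∑ c : Fin l → ZMod (p ^ (l * m)), ‖curveSum ψ (F · w) U c‖ ^ (2 * r) := by
    rw [hN, hI, card_mul_sum_eq_sum_sum_shift hG fun w ↦ ‖∑ y ∈ U, F y w‖ ^ (2 * r)]
    simp only [norm_shift]
  have scale : (∑ U ∈ residueClasses (p ^ m) Y, (N * I U) ^ (1 / (r : ℝ))) ^ r =
      N * (∑ U ∈ residueClasses (p ^ m) Y, I U ^ (1 / (r : ℝ))) ^ r := by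
    simp only [Real.mul_rpow hN_pos.le (hI_nonneg _), ← mul_sum, mul_pow]
    rw [one_div, Real.rpow_inv_natCast_pow hN_pos.le (by omega)]
  refine le_of_mul_le_mul_left ?_ hN_pos
  calc N * I Y
      ≤ ∑ w, G w * (K * (∑ U ∈ residueClasses (p ^ m) Y, (∑ c : Fin l → ZMod (p ^ (l * m)),
          ‖curveSum ψ (F · w) U c‖ ^ (2 * r)) ^ (1 / (r : ℝ))) ^ r) := by
        rw [average]
        exact sum_le_sum fun w _ ↦ mul_le_mul_of_nonneg_left (hD ψ hψ _ _) (hG_nonneg w)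
    _ = K * ∑ w, G w * (∑ U ∈ residueClasses (p ^ m) Y, (∑ c : Fin l → ZMod (p ^ (l * m)),
          ‖curveSum ψ (F · w) U c‖ ^ (2 * r)) ^ (1 / (r : ℝ))) ^ r := by
        simp only [mul_sum, mul_left_comm]
    _ ≤ K * (∑ U ∈ residueClasses (p ^ m) Y, (N * I U) ^ (1 / (r : ℝ))) ^ r := by
        simp only [average]
        gcongr
        exact weighted_minkowski _ hG_nonneg (fun U w ↦ by positivity) hr1
    _ = N * (K * (∑ U ∈ residueClasses (p ^ m) Y, I U ^ (1 / (r : ℝ))) ^ r) := by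
        rw [scale, mul_left_comm]

end Decoupling

/-! ### Rescaling a short piece of a curve -/

section DualShift

variable {p k n l m A : ℕ} [NeZero p]

/-- The vector of frequencies `c`, dual to `l` linear forms, pulled back along the matrix `B` of
those forms. The powers of `p` adapt it to the anisotropic dilation by `p ^ A` of the moment
curve; the subtractions in the exponent are exact as soon as `l m + A l ≤ k n`. -/
def dualShift (A : ℕ) (B : Matrix (Fin l) (Fin k) ℤ) (c : Fin l → ZMod (p ^ (l * m))) :
    Fin k → ZMod (p ^ (k * n)) := fun i ↦
  ((∑ j : Fin l, (p : ℤ) ^ (k * n - l * m - A * ((j : ℕ) + 1)) * (c j).val * B j i : ℤ) :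
    ZMod (p ^ (k * n)))

/-- The phase by which the frequency `dualShift A B c` acts on a point `z` with `B z = b`. -/
noncomputable def dualPhase (k n A : ℕ) (c : Fin l → ZMod (p ^ (l * m))) (b : Fin l → ℤ) : ℂ :=
  ZMod.stdAddChar
    ((∑ j : Fin l, (p : ℤ) ^ (k * n - l * m - A * ((j : ℕ) + 1)) * (c j).val * b j : ℤ) :
      ZMod (p ^ (k * n)))

lemma norm_dualPhase (c : Fin l → ZMod (p ^ (l * m))) (b : Fin l → ℤ) :
    ‖dualPhase k n A c b‖ = 1 :=
  AddChar.norm_apply _ _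

lemma phase_dualShift (B : Matrix (Fin l) (Fin k) ℤ) (c : Fin l → ZMod (p ^ (l * m)))
    (z : Fin k → ℤ) :
    phase (dualShift (n := n) A B c) z = dualPhase k n A c (B *ᵥ z) := by
  unfold phase dualShift dualPhase
  congr 1
  push_cast
  simp only [mulVec, dotProduct, sum_mul, mul_sum, Int.cast_sum, Int.cast_mul]
  rw [sum_comm]
  simp only [mul_assoc]

lemma dualPhase_congr {s : ℕ} (hs : l * m + A * l ≤ s) (hn : s ≤ k * n)
    (c : Fin l → ZMod (p ^ (l * m))) {b b' : Fin l → ℤ} (h : ∀ j, (p : ℤ) ^ s ∣ b j - b' j) :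
    dualPhase k n A c b = dualPhase k n A c b' := by
  unfold dualPhase
  congr 1
  rw [← sub_eq_zero, ← Int.cast_sub, ← sum_sub_distrib, ZMod.intCast_zmod_eq_zero_iff_dvd]
  refine dvd_sum fun j _ ↦ ?_
  have hj : A * ((j : ℕ) + 1) ≤ A * l := Nat.mul_le_mul_left _ j.2
  rw [← mul_sub, mul_right_comm]
  refine Dvd.dvd.mul_right ?_ _
  calc ((p ^ (k * n) : ℕ) : ℤ) ∣ (p : ℤ) ^ (k * n - l * m - A * ((j : ℕ) + 1)) * (p : ℤ) ^ s := by
        rw [← pow_add]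
        push_cast
        exact pow_dvd_pow _ (by omega)
    _ ∣ _ := mul_dvd_mul_left _ (h j)

lemma dualPhase_add_dilate (hn : l * m + A * l ≤ k * n) (c : Fin l → ZMod (p ^ (l * m)))
    (b y : Fin l → ℤ) :
    dualPhase k n A c (fun j ↦ b j + (p : ℤ) ^ (A * ((j : ℕ) + 1)) * y j) =
      dualPhase k n A c b * phase c y := by
  have dilate (j : Fin l) : (p : ℤ) ^ (k * n - l * m - A * ((j : ℕ) + 1)) *
      (p : ℤ) ^ (A * ((j : ℕ) + 1)) = ((p ^ (k * n - l * m) : ℕ) : ℤ) := by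
    have hj : A * ((j : ℕ) + 1) ≤ A * l := Nat.mul_le_mul_left _ j.2
    push_cast
    rw [← pow_add]
    congr 1
    omega
  have split : ∑ j : Fin l, (p : ℤ) ^ (k * n - l * m - A * ((j : ℕ) + 1)) * (c j).val *
        (b j + (p : ℤ) ^ (A * ((j : ℕ) + 1)) * y j) =
      ∑ j : Fin l, (p : ℤ) ^ (k * n - l * m - A * ((j : ℕ) + 1)) * (c j).val * b j +
        ((p ^ (k * n - l * m) : ℕ) : ℤ) * ∑ j : Fin l, ((c j).val : ℤ) * y j := by
    rw [mul_sum, ← sum_add_distrib]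
    refine sum_congr rfl fun j _ ↦ ?_
    rw [← dilate j]
    ring
  have hpow : p ^ (k * n) = p ^ (k * n - l * m) * p ^ (l * m) := by
    rw [← pow_add]
    congr 1
    omega
  unfold dualPhase phase
  rw [split, Int.cast_add, AddChar.map_add_eq_mul, stdAddChar_mul_left hpow]
  push_cast
  simp only [ZMod.natCast_zmod_val]

/-- On the progression `x₁ + p ^ A y`, the linear image `B ψ` is a translate of the anisotropic
dilate of `ψ'` by the powers `p ^ A, p ^ (2 A), …`. -/
def RescalesTo (p A : ℕ) (B : Matrix (Fin l) (Fin k) ℤ) (x₁ : ℤ) (ψ : Fin k → ℤ[X])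
    (ψ' : Fin l → ℤ[X]) : Prop :=
  ∃ b : Fin l → ℤ, ∀ y : ℤ, B *ᵥ curvePoint ψ (x₁ + ((p ^ A : ℕ) : ℤ) * y) =
    fun j ↦ b j + (p : ℤ) ^ (A * ((j : ℕ) + 1)) * (ψ' j).eval y

lemma norm_curveSum_add_dualShift {s : ℕ} (hs : l * m + A * l ≤ s) (hn : s ≤ k * n)
    {B : Matrix (Fin l) (Fin k) ℤ} {b : Fin l → ℤ} {ψ : Fin k → ℤ[X]} {T : Finset ℤ}
    (h : ∀ x ∈ T, ∀ j, (p : ℤ) ^ s ∣ (B *ᵥ curvePoint ψ x) j - b j) (a : ℤ → ℂ)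
    (w : Fin k → ZMod (p ^ (k * n))) (c : Fin l → ZMod (p ^ (l * m))) :
    ‖curveSum ψ a T (w + dualShift A B c)‖ = ‖curveSum ψ a T w‖ := by
  have shift : curveSum ψ a T (w + dualShift A B c) =
      curveSum ψ a T w * dualPhase k n A c b := by
    unfold curveSum
    rw [sum_mul]
    refine sum_congr rfl fun x hx ↦ ?_
    rw [phase_add, phase_dualShift, dualPhase_congr hs hn c (h x hx), mul_assoc]
  rw [shift, norm_mul, norm_dualPhase, mul_one]

lemma DecouplingBound.block {K : ℝ} (hD : DecouplingBound p l m K) (hK : 0 ≤ K) (hl : 1 ≤ l)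
    {B : Matrix (Fin l) (Fin k) ℤ} {x₁ : ℤ} {ψ : Fin k → ℤ[X]} {ψ' : Fin l → ℤ[X]}
    (hψ' : IsScaledMomentCurve p ψ') (hB : RescalesTo p A B x₁ ψ ψ')
    (hexp : l * m + A * l ≤ k * n) {G : (Fin k → ZMod (p ^ (k * n))) → ℝ}
    (hG_nonneg : ∀ w, 0 ≤ G w)
    (hG : ∀ w (c : Fin l → ZMod (p ^ (l * m))), G (w + dualShift A B c) = G w)
    (a : ℤ → ℂ) {T : Finset ℤ} (hT : ∀ x ∈ T, ((p ^ A : ℕ) : ℤ) ∣ x - x₁) :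
    ∑ w, G w * ‖curveSum ψ a T w‖ ^ (2 * triangular l) ≤
      K * (∑ U ∈ residueClasses (p ^ (A + m)) T,
        (∑ w, G w * ‖curveSum ψ a U w‖ ^ (2 * triangular l)) ^ (1 / (triangular l : ℝ))) ^
          triangular l := by
  have hp : 0 < p ^ A := pow_pos (NeZero.pos p) _
  obtain ⟨b, hb⟩ := hB
  obtain ⟨Y, rfl⟩ := exists_eq_image_affine hT
  rw [pow_add, sum_residueClasses_image_affine _ hp]
  have curveSum_image (U : Finset ℤ) (w : Fin k → ZMod (p ^ (k * n))) :
      curveSum ψ a (U.image fun y ↦ x₁ + ((p ^ A : ℕ) : ℤ) * y) w =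
        ∑ y ∈ U, a (x₁ + ((p ^ A : ℕ) : ℤ) * y) *
          phase w (curvePoint ψ (x₁ + ((p ^ A : ℕ) : ℤ) * y)) :=
    sum_image (affine_injective hp x₁).injOn
  simp only [curveSum_image]
  refine hD.fibred hK hl hψ' hG_nonneg hG (u := fun c ↦ dualPhase k n A c b)
    (fun c ↦ norm_dualPhase c b) (fun y w c ↦ ?_) Y
  rw [phase_add, phase_dualShift, hb, dualPhase_add_dilate hexp]
  unfold curvePoint
  ring

end DualShift

section TaylorMatrix

variable {R : Type*} [CommRing R] {k : ℕ}

/-- The matrix of Taylor coefficients of degrees `1, …, k` at `x` of the coordinates of `Φ`. -/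
noncomputable def taylorMatrix (x : R) (Φ : Fin k → R[X]) : Matrix (Fin k) (Fin k) R :=
  of fun j i ↦ (taylor x (Φ j)).coeff ((i : ℕ) + 1)

/-- The image of the curve `y ↦ Φ (x + y)` under the adjugate of its Taylor matrix. Up to degree
`k` it is a multiple of the moment curve plus a constant. -/
noncomputable def straightenedCurve (x : R) (Φ : Fin k → R[X]) : Fin k → R[X] :=
  fun j ↦ ∑ t, C ((taylorMatrix x Φ).adjugate j t) * taylor x (Φ t)

lemma coeff_straightenedCurve (x : R) (Φ : Fin k → R[X]) (j : Fin k) {i : ℕ} (hi : i < k) :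
    (straightenedCurve x Φ j).coeff (i + 1) =
      if i = (j : ℕ) then (taylorMatrix x Φ).det else 0 := by
  have entry : (straightenedCurve x Φ j).coeff (i + 1) =
      ((taylorMatrix x Φ).adjugate * taylorMatrix x Φ) j ⟨i, hi⟩ := by
    simp [straightenedCurve, mul_apply, taylorMatrix]
  simp [entry, adjugate_mul, one_apply, Fin.ext_iff, eq_comm]

lemma curvePoint_straightenedCurve (x y : ℤ) (Φ : Fin k → ℤ[X]) :
    curvePoint (straightenedCurve x Φ) y =
      (taylorMatrix x Φ).adjugate *ᵥ curvePoint Φ (x + y) := by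
  funext j
  simp [curvePoint, straightenedCurve, mulVec, dotProduct, eval_finsetSum, taylor_eval, add_comm]

lemma exists_eq_C_add_C_mul_X_pow_add {l j : ℕ} {Q : R[X]} {d : R}
    (h : ∀ i < l, Q.coeff (i + 1) = if i = j then d else 0) :
    ∃ S : R[X], Q = C (Q.coeff 0) + C d * X ^ (j + 1) + X ^ (l + 1) * S := by
  have hdvd : X ^ (l + 1) ∣ Q - (C (Q.coeff 0) + C d * X ^ (j + 1)) := by
    refine X_pow_dvd_iff.2 fun t ht ↦ ?_
    rcases t with _ | i
    · simp
    · simp [h i (by omega), coeff_X_pow]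
  obtain ⟨S, hS⟩ := hdvd
  exact ⟨S, by rw [← hS]; ring⟩

lemma eq_C_add_C_mul_X_pow_of_natDegree_le {l j : ℕ} {Q : R[X]} {d : R} (hdeg : Q.natDegree ≤ l)
    (h : ∀ i < l, Q.coeff (i + 1) = if i = j then d else 0) (hj : j < l) :
    Q = C (Q.coeff 0) + C d * X ^ (j + 1) := by
  ext t
  rcases t with _ | i
  · simp
  by_cases hi : i < l
  · simp [h i hi, coeff_X_pow]
  · rw [coeff_eq_zero_of_natDegree_lt (by omega)]
    simp [coeff_X_pow, show i ≠ j by omega]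

lemma det_taylorMatrix_C_mul_X_pow (u x : R) :
    (taylorMatrix x fun j : Fin k ↦ C u * X ^ ((j : ℕ) + 1)).det = u ^ k := by
  have lower (i j : Fin k) (hij : i < j) :
      taylorMatrix x (fun j : Fin k ↦ C u * X ^ ((j : ℕ) + 1)) i j = 0 := by
    change (taylor x (C u * X ^ ((i : ℕ) + 1))).coeff ((j : ℕ) + 1) = 0
    refine coeff_eq_zero_of_natDegree_lt ?_
    rw [natDegree_taylor]
    exact (natDegree_C_mul_X_pow_le _ _).trans_lt (by simpa using hij)
  rw [det_of_isLowerTriangular _ fun i j hij ↦ lower i j hij]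
  have diag (j : Fin k) :
      taylorMatrix x (fun j : Fin k ↦ C u * X ^ ((j : ℕ) + 1)) j j = u := by
    simp [taylorMatrix, taylor_mul, taylor_pow, coeff_X_add_C_pow]
  simp [diag]

end TaylorMatrix

section ModP

variable {p k l A : ℕ}

lemma intCast_det_taylorMatrix (x : ℤ) (Φ : Fin k → ℤ[X]) :
    ((taylorMatrix x Φ).det : ZMod p) =
      (taylorMatrix (x : ZMod p) fun j ↦ (Φ j).map (Int.castRingHom (ZMod p))).det := by
  rw [← eq_intCast (Int.castRingHom (ZMod p)), RingHom.map_det]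
  congr 1
  ext j i
  have hmap := map_taylor (Φ j) x (Int.castRingHom (ZMod p))
  rw [eq_intCast] at hmap
  simp only [taylorMatrix, RingHom.mapMatrix_apply, map_apply, of_apply, ← hmap, coeff_map]

lemma IsScaledMomentCurve.exists_map_eq {ψ : Fin k → ℤ[X]} (hψ : IsScaledMomentCurve p ψ) :
    ∃ u : ZMod p, u ≠ 0 ∧
      ∀ j, (ψ j).map (Int.castRingHom (ZMod p)) = C u * X ^ ((j : ℕ) + 1) := by
  obtain ⟨u, hu, hq⟩ := hψ
  refine ⟨u, by rwa [Ne, ZMod.intCast_zmod_eq_zero_iff_dvd], fun j ↦ ?_⟩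
  obtain ⟨q, hq⟩ := hq j
  simp [hq]

lemma IsScaledMomentCurve.not_dvd_det_taylorMatrix [Fact p.Prime] {ψ : Fin k → ℤ[X]}
    (hψ : IsScaledMomentCurve p ψ) (x : ℤ) : ¬ (p : ℤ) ∣ (taylorMatrix x ψ).det := by
  obtain ⟨u, hu, hmap⟩ := hψ.exists_map_eq
  rw [← ZMod.intCast_zmod_eq_zero_iff_dvd, intCast_det_taylorMatrix]
  simp only [hmap, det_taylorMatrix_C_mul_X_pow]
  exact pow_ne_zero _ hu

/-- The terms of degree above `l` in the straightened curve gain a factor `p ^ A` from the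
dilation, so they disappear modulo `p`. -/
lemma exists_rescalesTo {Φ : Fin l → ℤ[X]} {x : ℤ} (hA : 1 ≤ A)
    (hdet : ¬ (p : ℤ) ∣ (taylorMatrix x Φ).det) :
    ∃ ψ' : Fin l → ℤ[X], IsScaledMomentCurve p ψ' ∧
      RescalesTo p A (taylorMatrix x Φ).adjugate x Φ ψ' := by
  set d := (taylorMatrix x Φ).det
  choose S hS using fun j : Fin l ↦ exists_eq_C_add_C_mul_X_pow_add
    (Q := straightenedCurve x Φ j) fun i hi ↦ coeff_straightenedCurve x Φ j hi
  refine ⟨fun j ↦ C d * X ^ ((j : ℕ) + 1) + C (p : ℤ) *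
    (C ((p : ℤ) ^ (A * (l - j) - 1)) * X ^ (l + 1) * (S j).comp (C ((p : ℤ) ^ A) * X)),
    ⟨d, hdet, fun j ↦ ⟨_, rfl⟩⟩, fun j ↦ (straightenedCurve x Φ j).coeff 0, fun y ↦ ?_⟩
  rw [← curvePoint_straightenedCurve]
  funext j
  have gain : (p : ℤ) ^ (A * (l + 1)) =
      (p : ℤ) ^ (A * ((j : ℕ) + 1)) * ((p : ℤ) * (p : ℤ) ^ (A * (l - j) - 1)) := by
    have hpos : 1 ≤ A * (l - j) := Nat.mul_pos hA (by omega)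
    rw [← pow_succ', ← pow_add, Nat.sub_add_cancel hpos, ← Nat.mul_add]
    congr 2
    omega
  unfold curvePoint
  conv_lhs => rw [hS j]
  simp only [eval_add, eval_mul, eval_C, eval_pow, eval_X, eval_comp]
  push_cast
  rw [mul_pow, mul_pow, ← pow_mul, ← pow_mul, gain]
  ring

end ModP

section Nondegeneracy

variable {F : Type*} [Field F] {l : ℕ}

lemma pow_X_sub_C_dvd_derivative {Q : F[X]} {z : F}
    (h : ∀ i < l, (taylor z Q).coeff (i + 1) = 0) : (X - C z) ^ l ∣ derivative Q := by
  have derivative_comp_eq : (derivative Q).comp (X + C z) = derivative (taylor z Q) := by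
    simp [taylor_apply, derivative_comp]
  rw [X_sub_C_pow_dvd_iff, derivative_comp_eq, X_pow_dvd_iff]
  intro i hi
  rw [coeff_derivative, h i hi, zero_mul]

/-- If the determinant vanished, some combination `Q` of the coordinates would have
`(X - z) ^ l ∣ Q'`; but `Q'` is `X ^ s` times a polynomial of degree less than `l`. -/
lemma det_taylorMatrix_C_add_C_mul_X_pow_ne_zero {p s : ℕ} [CharP F p] (hp : s + l < p) {z : F}
    (hz : z ≠ 0) (c : Fin l → F) {d : F} (hd : d ≠ 0) :
    (taylorMatrix z fun j : Fin l ↦ C (c j) + C d * X ^ (s + (j : ℕ) + 1)).det ≠ 0 := by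
  intro hdet
  obtain ⟨w, hw_ne, hw⟩ := exists_vecMul_eq_zero_iff.2 hdet
  set Q : F[X] := ∑ j : Fin l, C (w j) * (C (c j) + C d * X ^ (s + (j : ℕ) + 1)) with hQ
  set S : F[X] := ∑ j : Fin l, C (w j * (d * (s + (j : ℕ) + 1 : ℕ))) * X ^ (j : ℕ) with hS
  have derivative_Q : derivative Q = X ^ s * S := by
    simp only [hQ, hS, derivative_sum, mul_sum]
    refine sum_congr rfl fun j _ ↦ ?_
    simp only [derivative_C_mul, derivative_add, derivative_C, derivative_X_pow, zero_add,
      Nat.add_sub_cancel, C_mul]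
    ring
  have hdvd : (X - C z) ^ l ∣ X ^ s * S := by
    rw [← derivative_Q]
    refine pow_X_sub_C_dvd_derivative fun i hi ↦ ?_
    have entry := congrFun hw ⟨i, hi⟩
    simpa only [hQ, map_sum, finsetSum_coeff, taylor_mul, taylor_C, coeff_C_mul, vecMul,
      dotProduct, taylorMatrix, of_apply, Pi.zero_apply] using entry
  have hcop : IsCoprime ((X - C z) ^ l) ((X : F[X]) ^ s) := by
    simpa using (isCoprime_X_sub_C_of_isUnit_sub (a := z) (b := 0) (by simpa using hz)).pow
  have degree_S : S.degree < ((X - C z) ^ l).degree := by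
    rw [degree_pow, degree_X_sub_C, nsmul_one]
    refine (degree_sum_le _ _).trans_lt ((Finset.sup_lt_iff (WithBot.bot_lt_coe _)).2 fun j _ ↦ ?_)
    exact (degree_C_mul_X_pow_le _ _).trans_lt (by exact_mod_cast j.2)
  have S_eq_zero : S = 0 :=
    eq_zero_of_dvd_of_degree_lt (hcop.dvd_of_dvd_mul_left hdvd) degree_S
  refine hw_ne (funext fun j ↦ ?_)
  have coeff_S : S.coeff j = w j * (d * (s + (j : ℕ) + 1 : ℕ)) := by
    simp only [hS, finsetSum_coeff, coeff_C_mul, coeff_X_pow, Fin.val_inj, mul_ite, mul_one,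
      mul_zero, sum_ite_eq, mem_univ, if_true]
  have cast_ne_zero : ((s + (j : ℕ) + 1 : ℕ) : F) ≠ 0 := by
    rw [Ne, CharP.cast_eq_zero_iff F p]
    exact fun hdvd ↦ absurd (Nat.le_of_dvd (by omega) hdvd) (by omega)
  rw [S_eq_zero, coeff_zero, eq_comm] at coeff_S
  exact (mul_eq_zero.1 coeff_S).resolve_right (mul_ne_zero hd cast_ne_zero)

end Nondegeneracy

section BilinearRescaling

variable {p k l : ℕ}

/-- The indices of the last `l` among `k` coordinates. -/
def lastCoords (hlk : l ≤ k) (j : Fin l) : Fin k := ⟨k - l + j, by omega⟩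

lemma IsScaledMomentCurve.map_straightenedCurve {ψ : Fin k → ℤ[X]}
    (hψ : IsScaledMomentCurve p ψ) (x : ℤ) (j : Fin k) :
    (straightenedCurve x ψ j).map (Int.castRingHom (ZMod p)) =
      C (((straightenedCurve x ψ j).coeff 0 : ℤ) : ZMod p) +
        C ((taylorMatrix x ψ).det : ZMod p) * X ^ ((j : ℕ) + 1) := by
  obtain ⟨u, -, hmap⟩ := hψ.exists_map_eq
  have natDegree_le :
      ((straightenedCurve x ψ j).map (Int.castRingHom (ZMod p))).natDegree ≤ k := by
    simp only [straightenedCurve, Polynomial.map_sum, Polynomial.map_mul, map_C]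
    refine natDegree_sum_le_of_forall_le _ _ fun t _ ↦ (natDegree_C_mul_le _ _).trans ?_
    rw [map_taylor, natDegree_taylor, hmap]
    exact (natDegree_C_mul_X_pow_le _ _).trans t.2
  rw [← eq_intCast (Int.castRingHom (ZMod p)), ← coeff_map]
  refine eq_C_add_C_mul_X_pow_of_natDegree_le natDegree_le (fun i hi ↦ ?_) j.2
  rw [coeff_map, coeff_straightenedCurve x ψ j hi]
  split_ifs <;> simp

lemma IsScaledMomentCurve.not_dvd_det_taylorMatrix_last [Fact p.Prime] {ψ : Fin k → ℤ[X]}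
    (hψ : IsScaledMomentCurve p ψ) (hkp : k < p) (hlk : l ≤ k) (x₀ : ℤ) {z : ℤ}
    (hz : ¬ (p : ℤ) ∣ z) :
    ¬ (p : ℤ) ∣ (taylorMatrix z fun j ↦ straightenedCurve x₀ ψ (lastCoords hlk j)).det := by
  have hdet := hψ.not_dvd_det_taylorMatrix x₀
  rw [← ZMod.intCast_zmod_eq_zero_iff_dvd] at hz hdet ⊢
  rw [intCast_det_taylorMatrix]
  simp only [hψ.map_straightenedCurve]
  exact det_taylorMatrix_C_add_C_mul_X_pow_ne_zero (p := p) (by omega) hz _ hdet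

/-- The first `k - l` Taylor coefficients at `x₀` vanish on the last `l` coordinates of the
straightened curve. -/
lemma pow_dvd_straightenedCurve_sub (x₀ : ℤ) (ψ : Fin k → ℤ[X]) (hlk : l ≤ k) {b : ℕ} {x : ℤ}
    (hx : (p : ℤ) ^ b ∣ x) (j : Fin l) :
    (p : ℤ) ^ (b * (k - l + 1)) ∣ (straightenedCurve x₀ ψ (lastCoords hlk j)).eval x -
      (straightenedCurve x₀ ψ (lastCoords hlk j)).coeff 0 := by
  set Q := straightenedCurve x₀ ψ (lastCoords hlk j) with hQ
  have hdvd : X ^ (k - l + 1) ∣ Q - C (Q.coeff 0) := by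
    refine X_pow_dvd_iff.2 fun t ht ↦ ?_
    rcases t with _ | i
    · simp
    · rw [coeff_sub, coeff_C_succ, sub_zero, hQ, coeff_straightenedCurve _ _ _ (by omega),
        if_neg (by simp only [lastCoords]; omega)]
  obtain ⟨S, hS⟩ := hdvd
  have hS_eval := congrArg (eval x) hS
  simp only [eval_sub, eval_C, eval_mul, eval_pow, eval_X] at hS_eval
  rw [hS_eval, pow_mul]
  exact (pow_dvd_pow_of_dvd hx _).mul_right _

lemma IsScaledMomentCurve.exists_rescalesTo_of_not_dvd [Fact p.Prime] {ψ : Fin k → ℤ[X]}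
    (hψ : IsScaledMomentCurve p ψ) (hkp : k < p) (hlk : l ≤ k) {A : ℕ} (hA : 1 ≤ A) {x₀ x₁ : ℤ}
    (hx : ¬ (p : ℤ) ∣ x₁ - x₀) :
    ∃ (B : Matrix (Fin l) (Fin k) ℤ) (ψ' : Fin l → ℤ[X]) (b₀ : Fin l → ℤ),
      IsScaledMomentCurve p ψ' ∧ RescalesTo p A B x₁ ψ ψ' ∧
      ∀ (b : ℕ) (x : ℤ), (p : ℤ) ^ b ∣ x - x₀ →
        ∀ j, (p : ℤ) ^ (b * (k - l + 1)) ∣ (B *ᵥ curvePoint ψ x) j - b₀ j := by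
  set Φ : Fin l → ℤ[X] := fun j ↦ straightenedCurve x₀ ψ (lastCoords hlk j)
  set E := taylorMatrix (x₁ - x₀) Φ
  set B := E.adjugate * (taylorMatrix x₀ ψ).adjugate.submatrix (lastCoords hlk) id
  have image_eq (x : ℤ) : B *ᵥ curvePoint ψ x = E.adjugate *ᵥ curvePoint Φ (x - x₀) := by
    have last : curvePoint Φ (x - x₀) =
        (taylorMatrix x₀ ψ).adjugate.submatrix (lastCoords hlk) id *ᵥ curvePoint ψ x := by
      funext j
      have := congrFun (curvePoint_straightenedCurve x₀ (x - x₀) ψ) (lastCoords hlk j)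
      rwa [add_sub_cancel] at this
    rw [last, mulVec_mulVec]
  obtain ⟨ψ', hψ', b₁, hb₁⟩ := exists_rescalesTo (A := A) (x := x₁ - x₀) hA
    (hψ.not_dvd_det_taylorMatrix_last hkp hlk x₀ hx)
  refine ⟨B, ψ', E.adjugate *ᵥ fun j ↦ (Φ j).coeff 0, hψ', ⟨b₁, fun y ↦ ?_⟩,
    fun b x hb j ↦ ?_⟩
  · rw [image_eq, add_sub_right_comm, hb₁]
  · rw [image_eq, ← Pi.sub_apply, ← mulVec_sub, mulVec, dotProduct]
    exact dvd_sum fun t _ ↦ (pow_dvd_straightenedCurve_sub x₀ ψ hlk hb t).mul_left _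

end BilinearRescaling

/-! ### Bilinear decoupling -/

section BilinearBound

variable {p : ℕ} {k n l A b : ℕ}

/-- The bilinear decoupling inequality with constant `M`, for pieces of scales `p ^ (-A)` and
`p ^ (-b)` that are separated modulo `p`. The first piece carries `triangular l` of the
`triangular k` factors. -/
def BilinearBound (p : ℕ) [NeZero p] (k n l A b : ℕ) (M : ℝ) : Prop :=
  ∀ ψ : Fin k → ℤ[X], IsScaledMomentCurve p ψ → ∀ (a : ℤ → ℂ) (x₀ x₁ : ℤ),
    ¬ (p : ℤ) ∣ x₁ - x₀ → ∀ T T' : Finset ℤ,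
    (∀ x ∈ T, ((p ^ A : ℕ) : ℤ) ∣ x - x₁) → (∀ x ∈ T', ((p ^ b : ℕ) : ℤ) ∣ x - x₀) →
    ∑ w : Fin k → ZMod (p ^ (k * n)), ‖curveSum ψ a T w‖ ^ (2 * triangular l) *
        ‖curveSum ψ a T' w‖ ^ (2 * (triangular k - triangular l)) ≤
      M * (squareFunction p n ψ a T ^ triangular l *
        squareFunction p n ψ a T' ^ (triangular k - triangular l))

lemma BilinearBound.mono [NeZero p] {M M' : ℝ} (h : BilinearBound p k n l A b M) (hM : M ≤ M') :
    BilinearBound p k n l A b M' := by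
  intro ψ hψ a x₀ x₁ hx T T' hT hT'
  have := squareFunction_nonneg (p := p) (n := n) ψ a T
  have := squareFunction_nonneg (p := p) (n := n) ψ a T'
  exact (h ψ hψ a x₀ x₁ hx T T' hT hT').trans (by gcongr)

lemma DecouplingBound.le_squareFunction_of_dvd [Fact p.Prime] (hk : 1 ≤ k) {K : ℝ} (hK : 0 ≤ K)
    (hb : 1 ≤ b) (hbn : b ≤ n) (hD : DecouplingBound p k (n - b) K) {ψ : Fin k → ℤ[X]}
    (hψ : IsScaledMomentCurve p ψ) (a : ℤ → ℂ) {x₀ : ℤ} {T : Finset ℤ}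
    (hT : ∀ x ∈ T, ((p ^ b : ℕ) : ℤ) ∣ x - x₀) :
    ∑ w : Fin k → ZMod (p ^ (k * n)), ‖curveSum ψ a T w‖ ^ (2 * triangular k) ≤
      K * squareFunction p n ψ a T ^ triangular k := by
  obtain ⟨ψ', hψ', hB⟩ := exists_rescalesTo hb (hψ.not_dvd_det_taylorMatrix x₀)
  have hexp : k * (n - b) + b * k ≤ k * n := by
    rw [mul_comm b k, ← mul_add, Nat.sub_add_cancel hbn]
  have key := hD.block hK hk hψ' hB hexp (G := 1) (fun _ ↦ zero_le_one) (fun _ _ ↦ rfl) a hT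
  simpa only [Pi.one_apply, one_mul, Nat.add_sub_cancel' hbn, squareFunction, curveNorm] using key

lemma DecouplingBound.bilinearBound_zero [Fact p.Prime] (hk : 1 ≤ k) {K : ℝ} (hK : 0 ≤ K)
    (hb : 1 ≤ b) (hbn : b ≤ n) (hD : DecouplingBound p k (n - b) K) (A : ℕ) :
    BilinearBound p k n 0 A b K := by
  intro ψ hψ a x₀ x₁ _ T T' _ hT'
  simpa [show triangular 0 = 0 from rfl] using hD.le_squareFunction_of_dvd hk hK hb hbn hψ a hT'

lemma BilinearBound.rpow_sum_le [NeZero p] (hl : 1 ≤ l) {M : ℝ} (hM : 0 ≤ M)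
    (hB : BilinearBound p k n l A b M) {ψ : Fin k → ℤ[X]} (hψ : IsScaledMomentCurve p ψ)
    (a : ℤ → ℂ) {x₀ x₁ : ℤ} (hx : ¬ (p : ℤ) ∣ x₁ - x₀) {T T' : Finset ℤ}
    (hT : ∀ x ∈ T, ((p ^ A : ℕ) : ℤ) ∣ x - x₁) (hT' : ∀ x ∈ T', ((p ^ b : ℕ) : ℤ) ∣ x - x₀) :
    (∑ w : Fin k → ZMod (p ^ (k * n)), ‖curveSum ψ a T' w‖ ^ (2 * (triangular k - triangular l)) *
        ‖curveSum ψ a T w‖ ^ (2 * triangular l)) ^ (1 / (triangular l : ℝ)) ≤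
      (M * squareFunction p n ψ a T' ^ (triangular k - triangular l)) ^
        (1 / (triangular l : ℝ)) * squareFunction p n ψ a T := by
  have hS := squareFunction_nonneg (p := p) (n := n) ψ a T
  have hS' := squareFunction_nonneg (p := p) (n := n) ψ a T'
  have hl0 : triangular l ≠ 0 := (triangular_pos hl).ne'
  calc _ ≤ ((M * squareFunction p n ψ a T' ^ (triangular k - triangular l)) *
          squareFunction p n ψ a T ^ triangular l) ^ (1 / (triangular l : ℝ)) := by
        refine Real.rpow_le_rpow (by positivity) ?_ (by positivity)
        simpa only [mul_comm, mul_left_comm, mul_assoc] using hB ψ hψ a x₀ x₁ hx T T' hT hT'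
    _ = _ := by
        rw [Real.mul_rpow (by positivity) (by positivity), one_div (triangular l : ℝ),
          Real.pow_rpow_inv_natCast hS hl0]

/-- The second factor is unchanged by the frequency shifts dual to the first `l` coordinates of
the first piece, so it can serve as the weight in a decoupling of dimension `l`. -/
lemma BilinearBound.of_decouplingBound [Fact p.Prime] {A' : ℕ} (hkp : k < p) (hl : 1 ≤ l)
    (hlk : l ≤ k) {K M : ℝ} (hK : 0 ≤ K) (hM : 0 ≤ M) (hA : 1 ≤ A) (hAA' : A ≤ A') (hA'n : A' ≤ n)
    (hbn : (k - l + 1) * b ≤ k * n) (hA'b : l * A' ≤ (k - l + 1) * b)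
    (hD : DecouplingBound p l (A' - A) K) (hB : BilinearBound p k n l A' b M) :
    BilinearBound p k n l A b (K * M) := by
  intro ψ hψ a x₀ x₁ hx T T' hT hT'
  obtain ⟨B, ψ', b₀, hψ', hresc, hconst⟩ := hψ.exists_rescalesTo_of_not_dvd hkp hlk hA hx
  rw [mul_comm] at hbn
  have hexp : l * (A' - A) + A * l ≤ b * (k - l + 1) := by
    rwa [mul_comm A l, ← mul_add, mul_comm b, Nat.sub_add_cancel hAA']
  have decouple := hD.block hK hl hψ' hresc (hexp.trans hbn)
    (G := fun w ↦ ‖curveSum ψ a T' w‖ ^ (2 * (triangular k - triangular l)))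
    (fun _ ↦ by positivity) (fun w c ↦ by
      rw [norm_curveSum_add_dualShift hexp hbn fun x hx j ↦
        hconst b x (by exact_mod_cast hT' x hx) j]) a hT
  rw [Nat.add_sub_cancel' hAA'] at decouple
  have hS' := squareFunction_nonneg (p := p) (n := n) ψ a T'
  calc _ = ∑ w : Fin k → ZMod (p ^ (k * n)), ‖curveSum ψ a T' w‖ ^
          (2 * (triangular k - triangular l)) * ‖curveSum ψ a T w‖ ^ (2 * triangular l) := by
        simp only [mul_comm]
    _ ≤ K * (∑ U ∈ residueClasses (p ^ A') T,
          (M * squareFunction p n ψ a T' ^ (triangular k - triangular l)) ^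
            (1 / (triangular l : ℝ)) * squareFunction p n ψ a U) ^ triangular l := by
        refine decouple.trans ?_
        gcongr with U hU
        obtain ⟨x₂, hx₂⟩ := nonempty_of_mem_residueClasses hU
        have hx₂₁ : (p : ℤ) ∣ x₂ - x₁ :=
          ((Int.natCast_dvd_natCast.2 (dvd_pow_self p (by omega))).trans
            (hT x₂ (subset_of_mem_residueClasses hU hx₂)))
        have hx₂₀ : ¬ (p : ℤ) ∣ x₂ - x₀ := by
          rwa [← sub_add_sub_cancel x₂ x₁ x₀, dvd_add_right hx₂₁]
        exact hB.rpow_sum_le hl hM hψ a hx₂₀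
          (fun x ↦ dvd_sub_of_mem_residueClasses hU hx₂) hT'
    _ = K * M * (squareFunction p n ψ a T ^ triangular l *
          squareFunction p n ψ a T' ^ (triangular k - triangular l)) := by
        rw [← mul_sum, sum_squareFunction_residueClasses hA'n, mul_pow, one_div,
          Real.rpow_inv_natCast_pow (by positivity) (triangular_pos hl).ne']
        ring

lemma triangular_bilinear_identity (hl : 1 ≤ l) (hlk : l ≤ k) :
    (k - l) * triangular (l - 1) + (triangular k - triangular (k - l)) =
      (k - l + 1) * triangular l := by
  obtain ⟨t, rfl⟩ : ∃ t, k = l + t := ⟨k - l, by omega⟩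
  obtain ⟨s, rfl⟩ : ∃ s, l = s + 1 := ⟨l - 1, by omega⟩
  have ht : triangular t ≤ triangular (s + 1 + t) := triangular_mono (by omega)
  have hs := two_mul_triangular (s + 1)
  have hst := two_mul_triangular (s + 1 + t)
  simp only [Nat.add_sub_cancel_left, Nat.add_sub_cancel]
  zify [ht] at *
  nlinarith [two_mul_triangular t, two_mul_triangular s]

lemma triangular_bilinear_identity' (hl : 1 ≤ l) (hlk : l ≤ k) :
    (k - l) * (triangular k - triangular (l - 1)) + triangular (k - l) =
      (k - l + 1) * (triangular k - triangular l) := by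
  have h₁ : triangular (l - 1) ≤ triangular k := triangular_mono (by omega)
  have h₂ : triangular (k - l) ≤ triangular k := triangular_mono (by omega)
  have h₃ : triangular l ≤ triangular k := triangular_mono hlk
  have key := triangular_bilinear_identity hl hlk
  zify [h₁, h₂, h₃] at *
  linarith

lemma pow_mul_pow_pow_succ {x y : ℝ} {α β α₁ β₁ α₂ β₂ t : ℕ} (hα : t * α₁ + α₂ = (t + 1) * α)
    (hβ : t * β₁ + β₂ = (t + 1) * β) :
    (x ^ α * y ^ β) ^ (t + 1) = (x ^ α₁ * y ^ β₁) ^ t * (y ^ β₂ * x ^ α₂) := by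
  rw [mul_pow, ← pow_mul, ← pow_mul, mul_comm α, mul_comm β, ← hα, ← hβ]
  ring

lemma BilinearBound.interpolate [NeZero p] (hl : 1 ≤ l) (hlk : l ≤ k) {M₁ M₂ M : ℝ}
    (hM₁ : 0 ≤ M₁) (hM : 0 ≤ M) (hM_pow : M₁ ^ (k - l) * M₂ ≤ M ^ (k - l + 1))
    (hB₁ : BilinearBound p k n (l - 1) A b M₁) (hB₂ : BilinearBound p k n (k - l) b A M₂) :
    BilinearBound p k n l A b M := by
  intro ψ hψ a x₀ x₁ hx T T' hT hT'
  have bound₁ := hB₁ ψ hψ a x₀ x₁ hx T T' hT hT'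
  have bound₂ := hB₂ ψ hψ a x₁ x₀ (by rwa [dvd_sub_comm]) T' T hT' hT
  set S := squareFunction p n ψ a T
  set S' := squareFunction p n ψ a T'
  have hS : 0 ≤ S := squareFunction_nonneg ψ a T
  have hS' : 0 ≤ S' := squareFunction_nonneg ψ a T'
  have exp₁ := triangular_bilinear_identity hl hlk
  have exp₂ := triangular_bilinear_identity' hl hlk
  refine le_of_pow_le_pow_left₀ (Nat.succ_ne_zero (k - l)) (by positivity) ?_
  refine (sum_pow_succ_le_of_pow_succ_le univ (k - l) (fun w ↦ by positivity)
    (fun w ↦ by positivity) (fun w ↦ by positivity) fun w ↦ (pow_mul_pow_pow_succ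
      (α₁ := 2 * triangular (l - 1)) (α₂ := 2 * (triangular k - triangular (k - l)))
      (β₁ := 2 * (triangular k - triangular (l - 1))) (β₂ := 2 * triangular (k - l))
      (by linarith) (by linarith)).le).trans ?_
  calc _ ≤ (M₁ * (S ^ triangular (l - 1) * S' ^ (triangular k - triangular (l - 1)))) ^ (k - l) *
        (M₂ * (S' ^ triangular (k - l) * S ^ (triangular k - triangular (k - l)))) := by gcongr
    _ = M₁ ^ (k - l) * M₂ *
        (S ^ triangular l * S' ^ (triangular k - triangular l)) ^ (k - l + 1) := by
        rw [pow_mul_pow_pow_succ exp₁ exp₂]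
        ring
    _ ≤ M ^ (k - l + 1) *
        (S ^ triangular l * S' ^ (triangular k - triangular l)) ^ (k - l + 1) := by gcongr
    _ = _ := by rw [← mul_pow]

end BilinearBound

section Crude

variable {p : ℕ} {k n m m' : ℕ}

lemma curveNorm_pow [NeZero p] (hk : 1 ≤ k) (ψ : Fin k → ℤ[X]) (a : ℤ → ℂ) (T : Finset ℤ) :
    curveNorm p n ψ a T ^ triangular k =
      ∑ w : Fin k → ZMod (p ^ (k * n)), ‖curveSum ψ a T w‖ ^ (2 * triangular k) := by
  rw [curveNorm, one_div, Real.rpow_inv_natCast_pow (by positivity) (triangular_pos hk).ne']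

lemma sum_squareFunction_pow_le [NeZero p] (hmn : m ≤ n) (ψ : Fin k → ℤ[X]) (a : ℤ → ℂ)
    (T : Finset ℤ) {q : ℕ} (hq : 1 ≤ q) :
    ∑ U ∈ residueClasses (p ^ m) T, squareFunction p n ψ a U ^ q ≤
      squareFunction p n ψ a T ^ q := by
  rw [← sum_squareFunction_residueClasses hmn ψ a T]
  exact sum_pow_le_pow_sum (fun U _ ↦ squareFunction_nonneg ψ a U) hq

lemma sum_squareFunction_pow_mul_sum_pow_le [NeZero p] (hmn : m ≤ n) (hmn' : m' ≤ n)
    (ψ : Fin k → ℤ[X]) (a : ℤ → ℂ) (T T' : Finset ℤ) {i j : ℕ} (hi : 1 ≤ i) (hj : 1 ≤ j) :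
    (∑ U ∈ residueClasses (p ^ m) T, squareFunction p n ψ a U ^ i) *
        ∑ U ∈ residueClasses (p ^ m') T', squareFunction p n ψ a U ^ j ≤
      squareFunction p n ψ a T ^ i * squareFunction p n ψ a T' ^ j := by
  have hS (U) : 0 ≤ squareFunction p n ψ a U := squareFunction_nonneg ψ a U
  exact mul_le_mul (sum_squareFunction_pow_le hmn ψ a T hi)
    (sum_squareFunction_pow_le hmn' ψ a T' hj) (sum_nonneg fun U _ ↦ pow_nonneg (hS U) _)
    (pow_nonneg (hS T) _)

lemma norm_curveSum_pow_le [NeZero p] {M : ℕ} [NeZero M] (m : ℕ) (ψ : Fin k → ℤ[X]) (a : ℤ → ℂ)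
    (T : Finset ℤ) (w : Fin k → ZMod M) {q : ℕ} (hq : 1 ≤ q) :
    ‖curveSum ψ a T w‖ ^ q ≤
      (p : ℝ) ^ (m * q) * ∑ U ∈ residueClasses (p ^ m) T, ‖curveSum ψ a U w‖ ^ q := by
  obtain ⟨t, rfl⟩ := Nat.exists_eq_add_of_le' hq
  have hcard : #(residueClasses (p ^ m) T) ^ t ≤ p ^ (m * (t + 1)) := by
    calc _ ≤ (p ^ m) ^ t :=
          Nat.pow_le_pow_left (card_residueClasses_le (pow_pos (NeZero.pos p) m) T) t
      _ ≤ _ := by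
          rw [← pow_mul]
          exact Nat.pow_le_pow_right (NeZero.pos p) (by gcongr; exact t.le_succ)
  rw [curveSum_eq_sum_residueClasses (p ^ m)]
  refine (norm_sum_pow_le _ _ _).trans ?_
  gcongr
  exact_mod_cast hcard

lemma DecouplingBound.crude [NeZero p] (hk : 1 ≤ k) :
    DecouplingBound p k n ((p : ℝ) ^ (n * (2 * triangular k))) := by
  intro ψ _ a T
  have hr := triangular_pos hk
  refine (sum_le_sum fun w _ ↦ norm_curveSum_pow_le (p := p) n ψ a T w (by omega)).trans ?_
  rw [← mul_sum, sum_comm]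
  simp only [← curveNorm_pow hk]
  gcongr
  exact sum_pow_le_pow_sum (fun U _ ↦ curveNorm_nonneg ψ a U) hr

lemma sum_norm_curveSum_pow_mul_pow_le [NeZero p] {M : ℕ} [NeZero M] (m m' : ℕ)
    (ψ : Fin k → ℤ[X]) (a : ℤ → ℂ) (T T' : Finset ℤ) {i j : ℕ} (hi : 1 ≤ i) (hj : 1 ≤ j) :
    ∑ w : Fin k → ZMod M, ‖curveSum ψ a T w‖ ^ i * ‖curveSum ψ a T' w‖ ^ j ≤
      (p : ℝ) ^ ((m + m') * (i + j)) *
        ∑ U ∈ residueClasses (p ^ m) T, ∑ U' ∈ residueClasses (p ^ m') T',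
          ∑ w : Fin k → ZMod M, ‖curveSum ψ a U w‖ ^ i * ‖curveSum ψ a U' w‖ ^ j := by
  have hp : (1 : ℝ) ≤ p := mod_cast NeZero.one_le
  calc _ ≤ ∑ w : Fin k → ZMod M,
        ((p : ℝ) ^ (m * i) * ∑ U ∈ residueClasses (p ^ m) T, ‖curveSum ψ a U w‖ ^ i) *
          ((p : ℝ) ^ (m' * j) * ∑ U' ∈ residueClasses (p ^ m') T', ‖curveSum ψ a U' w‖ ^ j) := by
        gcongr
        exacts [norm_curveSum_pow_le m ψ a T _ hi, norm_curveSum_pow_le m' ψ a T' _ hj]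
    _ = (p : ℝ) ^ (m * i + m' * j) *
        ∑ U ∈ residueClasses (p ^ m) T, ∑ U' ∈ residueClasses (p ^ m') T',
          ∑ w : Fin k → ZMod M, ‖curveSum ψ a U w‖ ^ i * ‖curveSum ψ a U' w‖ ^ j := by
        simp_rw [mul_mul_mul_comm, ← pow_add, ← mul_sum, sum_mul_sum]
        rw [sum_comm]
        exact congrArg _ (sum_congr rfl fun U _ ↦ sum_comm)
    _ ≤ _ := by
        gcongr
        nlinarith

lemma BilinearBound.to_one_one [NeZero p] {l A b : ℕ} (hl : 1 ≤ l) (hlk : l < k)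
    (hA : A ≤ n) (hb : b ≤ n) {M : ℝ} (hM : 0 ≤ M) (hB : BilinearBound p k n l A b M) :
    BilinearBound p k n l 1 1 ((p : ℝ) ^ ((A + b) * (2 * triangular k)) * M) := by
  intro ψ hψ a x₀ x₁ hx T T' hT hT'
  have hl0 := triangular_pos hl
  have hr := triangular_strictMono hlk
  have bound_pieces : ∀ U ∈ residueClasses (p ^ A) T, ∀ U' ∈ residueClasses (p ^ b) T',
      ∑ w : Fin k → ZMod (p ^ (k * n)), ‖curveSum ψ a U w‖ ^ (2 * triangular l) *
          ‖curveSum ψ a U' w‖ ^ (2 * (triangular k - triangular l)) ≤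
        M * (squareFunction p n ψ a U ^ triangular l *
          squareFunction p n ψ a U' ^ (triangular k - triangular l)) := by
    intro U hU U' hU'
    obtain ⟨y, hy⟩ := nonempty_of_mem_residueClasses hU
    obtain ⟨y', hy'⟩ := nonempty_of_mem_residueClasses hU'
    refine hB ψ hψ a y' y (fun hdvd ↦ hx ?_) U U' (fun x ↦ dvd_sub_of_mem_residueClasses hU hy)
      (fun x ↦ dvd_sub_of_mem_residueClasses hU' hy')
    have hyT := hT y (subset_of_mem_residueClasses hU hy)
    have hyT' := hT' y' (subset_of_mem_residueClasses hU' hy')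
    rw [pow_one] at hyT hyT'
    rw [show x₁ - x₀ = y - y' - (y - x₁) + (y' - x₀) by ring]
    exact dvd_add (dvd_sub hdvd hyT) hyT'
  refine (sum_norm_curveSum_pow_mul_pow_le (p := p) (M := p ^ (k * n)) A b ψ a T T' (by omega)
    (by omega)).trans ?_
  rw [← mul_add, Nat.add_sub_cancel' hr.le, mul_assoc]
  gcongr
  refine (sum_le_sum fun U hU ↦ sum_le_sum fun U' hU' ↦ bound_pieces U hU U' hU').trans ?_
  simp_rw [← mul_sum, ← sum_mul]
  exact mul_le_mul_of_nonneg_left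
    (sum_squareFunction_pow_mul_sum_pow_le hA hb ψ a T T' hl0 (by omega)) hM

lemma sum_pow_mul_pow_le {ι : Type*} (s : Finset ι) {f g : ι → ℝ} (hf : ∀ i, 0 ≤ f i)
    (hg : ∀ i, 0 ≤ g i) {α β : ℕ} (hα : 1 ≤ α) (hβ : 1 ≤ β) {F G K : ℝ} (hF : 0 ≤ F)
    (hG : 0 ≤ G) (hK : 0 ≤ K) (hfF : ∑ i ∈ s, f i ^ (α + β) ≤ K * F ^ (α + β))
    (hgG : ∑ i ∈ s, g i ^ (α + β) ≤ K * G ^ (α + β)) :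
    ∑ i ∈ s, f i ^ α * g i ^ β ≤ K * (F ^ α * G ^ β) := by
  have hα' : (0 : ℝ) < α := by exact_mod_cast hα
  have hβ' : (0 : ℝ) < β := by exact_mod_cast hβ
  have hconj : ((α + β) / α : ℝ).HolderConjugate ((α + β) / β) :=
    Real.holderConjugate_iff.2 ⟨by rw [one_lt_div hα']; linarith, by field_simp⟩
  have rpow_eq {x : ℝ} (hx : 0 ≤ x) {γ : ℕ} (hγ : (γ : ℝ) ≠ 0) :
      (x ^ γ) ^ ((α + β) / γ : ℝ) = x ^ (α + β) := by
    rw [← Real.rpow_natCast_mul hx, mul_div_cancel₀ _ hγ, ← Nat.cast_add, Real.rpow_natCast]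
  have rpow_eq' {x : ℝ} (hx : 0 ≤ x) (γ : ℕ) :
      (x ^ (α + β)) ^ (1 / ((α + β) / γ) : ℝ) = x ^ γ := by
    rw [← Real.rpow_natCast_mul hx, one_div_div, Nat.cast_add, mul_div_cancel₀ _ (by positivity),
      Real.rpow_natCast]
  have holder := Real.inner_le_Lp_mul_Lq_of_nonneg s hconj (fun i _ ↦ pow_nonneg (hf i) α)
    (fun i _ ↦ pow_nonneg (hg i) β)
  simp only [rpow_eq (hf _) hα'.ne', rpow_eq (hg _) hβ'.ne'] at holder
  calc _ ≤ (K * F ^ (α + β)) ^ (1 / ((α + β) / α) : ℝ) *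
        (K * G ^ (α + β)) ^ (1 / ((α + β) / β) : ℝ) := by
        have hf_sum := sum_nonneg fun i (_ : i ∈ s) ↦ pow_nonneg (hf i) (α + β)
        have hg_sum := sum_nonneg fun i (_ : i ∈ s) ↦ pow_nonneg (hg i) (α + β)
        exact holder.trans (by gcongr)
    _ = K ^ (1 / ((α + β) / α) + 1 / ((α + β) / β) : ℝ) * (F ^ α * G ^ β) := by
        rw [Real.mul_rpow hK (by positivity), Real.mul_rpow hK (by positivity), rpow_eq' hF,
          rpow_eq' hG, Real.rpow_add_of_nonneg hK (by positivity) (by positivity)]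
        ring
    _ = _ := by
        rw [one_div, one_div, hconj.inv_add_inv_eq_one, Real.rpow_one]

lemma DecouplingBound.bilinearBound [NeZero p] {l : ℕ} (hl : 1 ≤ l) (hlk : l < k) {K : ℝ}
    (hK : 0 ≤ K) (hD : DecouplingBound p k n K) (A b : ℕ) : BilinearBound p k n l A b K := by
  intro ψ hψ a x₀ x₁ _ T T' _ _
  have hr := triangular_strictMono hlk
  have hsplit : triangular l + (triangular k - triangular l) = triangular k := by omega
  simp only [pow_mul]
  refine sum_pow_mul_pow_le univ (fun _ ↦ by positivity) (fun _ ↦ by positivity)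
    (triangular_pos hl) (by omega) (squareFunction_nonneg ψ a T) (squareFunction_nonneg ψ a T') hK
    ?_ ?_ <;>
  · simp only [hsplit, ← pow_mul]
    exact hD ψ hψ a _

end Crude

section BroadNarrow

lemma norm_sum_le_two_mul {ι E : Type*} [SeminormedAddCommGroup E] [DecidableEq ι] {s : Finset ι}
    {z : ι → E} {q : ℕ} (hs : #s ≤ q) {c : ι} (hc : c ∈ s)
    (hsmall : ∀ c' ∈ s.erase c, q * ‖z c'‖ ≤ ‖z c‖) : ‖∑ c' ∈ s, z c'‖ ≤ 2 * ‖z c‖ := by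
  have hq : (0 : ℝ) < q := by exact_mod_cast (card_pos.2 ⟨c, hc⟩).trans_le hs
  have hrest : ‖∑ c' ∈ s.erase c, z c'‖ ≤ ‖z c‖ :=
    calc _ ≤ ∑ c' ∈ s.erase c, ‖z c'‖ := norm_sum_le _ _
      _ ≤ #(s.erase c) • (‖z c‖ / q) :=
          sum_le_card_nsmul _ _ _ fun c' hc' ↦ by
            rw [le_div_iff₀' hq]
            exact hsmall c' hc'
      _ ≤ q * (‖z c‖ / q) := by
          rw [nsmul_eq_mul]
          gcongr
          exact (card_le_card (erase_subset c s)).trans hs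
      _ = _ := mul_div_cancel₀ _ hq.ne'
  rw [← add_sum_erase s z hc]
  linarith [norm_add_le (z c) (∑ c' ∈ s.erase c, z c')]

/-- Either the largest term dominates the sum, or there is a second term of comparable size. -/
lemma norm_sum_pow_le_broad_narrow {ι E : Type*} [SeminormedAddCommGroup E] [DecidableEq ι]
    (s : Finset ι) (z : ι → E) {q : ℕ} (hs : #s ≤ q) {i j : ℕ} (hij : i + j ≠ 0) :
    ‖∑ c ∈ s, z c‖ ^ (i + j) ≤ 2 ^ (i + j) * ∑ c ∈ s, ‖z c‖ ^ (i + j) +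
      (q : ℝ) ^ (2 * (i + j)) * ∑ c ∈ s, ∑ c' ∈ s.erase c, ‖z c‖ ^ i * ‖z c'‖ ^ j := by
  rcases s.eq_empty_or_nonempty with rfl | hne
  · simp [zero_pow hij]
  obtain ⟨c, hc, hmax⟩ := exists_max_image s (fun c ↦ ‖z c‖) hne
  have hq : (1 : ℝ) ≤ q := by exact_mod_cast hne.card_pos.trans_le hs
  by_cases hbroad : ∃ c' ∈ s.erase c, ‖z c‖ ≤ q * ‖z c'‖
  · obtain ⟨c', hc', hle⟩ := hbroad
    have hsum : ‖∑ c ∈ s, z c‖ ≤ q * ‖z c‖ := by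
      refine (norm_sum_le _ _).trans ((sum_le_card_nsmul _ _ _ hmax).trans ?_)
      rw [nsmul_eq_mul]
      gcongr
    have hpair : ‖z c‖ ^ i * ‖z c'‖ ^ j ≤
        ∑ c ∈ s, ∑ c' ∈ s.erase c, ‖z c‖ ^ i * ‖z c'‖ ^ j :=
      (single_le_sum (f := fun c' ↦ ‖z c‖ ^ i * ‖z c'‖ ^ j) (fun _ _ ↦ by positivity) hc').trans
        (single_le_sum (f := fun c ↦ ∑ c' ∈ s.erase c, ‖z c‖ ^ i * ‖z c'‖ ^ j)
          (fun _ _ ↦ by positivity) hc)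
    calc ‖∑ c ∈ s, z c‖ ^ (i + j) ≤ (q * ‖z c‖) ^ (i + j) := by gcongr
      _ = (q : ℝ) ^ (i + j) * (‖z c‖ ^ i * ‖z c‖ ^ j) := by rw [mul_pow, pow_add ‖z c‖]
      _ ≤ (q : ℝ) ^ (i + j) * (‖z c‖ ^ i * (q * ‖z c'‖) ^ j) := by gcongr
      _ = (q : ℝ) ^ (i + j + j) * (‖z c‖ ^ i * ‖z c'‖ ^ j) := by ring
      _ ≤ (q : ℝ) ^ (2 * (i + j)) * ∑ c ∈ s, ∑ c' ∈ s.erase c, ‖z c‖ ^ i * ‖z c'‖ ^ j := by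
          gcongr
          omega
      _ ≤ _ := le_add_of_nonneg_left (by positivity)
  · push Not at hbroad
    calc ‖∑ c ∈ s, z c‖ ^ (i + j) ≤ (2 * ‖z c‖) ^ (i + j) := by
          gcongr
          exact norm_sum_le_two_mul hs hc fun c' hc' ↦ (hbroad c' hc').le
      _ = 2 ^ (i + j) * ‖z c‖ ^ (i + j) := mul_pow _ _ _
      _ ≤ 2 ^ (i + j) * ∑ c ∈ s, ‖z c‖ ^ (i + j) := by
          gcongr
          exact single_le_sum (f := fun c ↦ ‖z c‖ ^ (i + j)) (fun _ _ ↦ by positivity) hc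
      _ ≤ _ := le_add_of_nonneg_right (by positivity)

variable {p : ℕ} {k n l : ℕ}

lemma sum_norm_curveSum_pow_le_broad_narrow [NeZero p] {M : ℕ} [NeZero M] (ψ : Fin k → ℤ[X])
    (a : ℤ → ℂ) (T : Finset ℤ) {i j : ℕ} (hij : i + j ≠ 0) :
    ∑ w : Fin k → ZMod M, ‖curveSum ψ a T w‖ ^ (i + j) ≤
      2 ^ (i + j) * ∑ c ∈ residueClasses (p ^ 1) T,
          ∑ w : Fin k → ZMod M, ‖curveSum ψ a c w‖ ^ (i + j) +
        (p : ℝ) ^ (2 * (i + j)) * ∑ c ∈ residueClasses (p ^ 1) T,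
          ∑ c' ∈ (residueClasses (p ^ 1) T).erase c,
            ∑ w : Fin k → ZMod M, ‖curveSum ψ a c w‖ ^ i * ‖curveSum ψ a c' w‖ ^ j := by
  have hcard : #(residueClasses (p ^ 1) T) ≤ p := by
    rw [pow_one]
    exact card_residueClasses_le (NeZero.pos p) T
  have pointwise (w : Fin k → ZMod M) := norm_sum_pow_le_broad_narrow (residueClasses (p ^ 1) T)
    (fun c ↦ curveSum ψ a c w) hcard hij
  simp only [← curveSum_eq_sum_residueClasses] at pointwise
  refine (sum_le_sum fun w _ ↦ pointwise w).trans_eq ?_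
  rw [sum_add_distrib, ← mul_sum, ← mul_sum, sum_comm]
  congr 2
  rw [sum_comm]
  exact sum_congr rfl fun c _ ↦ sum_comm

lemma DecouplingBound.sum_residueClasses_le [Fact p.Prime] (hk : 1 ≤ k) (hn : 1 ≤ n) {K : ℝ}
    (hK : 0 ≤ K) (hD : DecouplingBound p k (n - 1) K) {ψ : Fin k → ℤ[X]}
    (hψ : IsScaledMomentCurve p ψ) (a : ℤ → ℂ) (T : Finset ℤ) :
    ∑ c ∈ residueClasses (p ^ 1) T, ∑ w : Fin k → ZMod (p ^ (k * n)),
      ‖curveSum ψ a c w‖ ^ (2 * triangular k) ≤ K * squareFunction p n ψ a T ^ triangular k := by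
  refine le_trans (sum_le_sum fun c hc ↦ ?_) ((mul_sum _ _ _).symm.le.trans
    (mul_le_mul_of_nonneg_left (sum_squareFunction_pow_le hn ψ a T (triangular_pos hk)) hK))
  obtain ⟨x, hx⟩ := nonempty_of_mem_residueClasses hc
  exact hD.le_squareFunction_of_dvd hk hK le_rfl hn hψ a
    fun y ↦ dvd_sub_of_mem_residueClasses hc hx

lemma DecouplingBound.of_bilinearBound [Fact p.Prime] (hl : 1 ≤ l) (hlk : l < k) (hn : 1 ≤ n)
    {K M : ℝ} (hK : 0 ≤ K) (hM : 0 ≤ M) (hD : DecouplingBound p k (n - 1) K)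
    (hB : BilinearBound p k n l 1 1 M) :
    DecouplingBound p k n (2 ^ (2 * triangular k) * K + (p : ℝ) ^ (4 * triangular k) * M) := by
  intro ψ hψ a T
  have hk : 1 ≤ k := by omega
  have hr := triangular_strictMono hlk
  have hsplit : 2 * triangular l + 2 * (triangular k - triangular l) = 2 * triangular k := by
    omega
  have hS (U : Finset ℤ) : 0 ≤ squareFunction p n ψ a U := squareFunction_nonneg ψ a U
  have broad_narrow := sum_norm_curveSum_pow_le_broad_narrow (p := p) (M := p ^ (k * n)) ψ a T
    (i := 2 * triangular l) (j := 2 * (triangular k - triangular l)) (by omega)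
  rw [hsplit, show 2 * (2 * triangular k) = 4 * triangular k by ring] at broad_narrow
  have pair_le : ∀ c ∈ residueClasses (p ^ 1) T, ∀ c' ∈ (residueClasses (p ^ 1) T).erase c,
      ∑ w : Fin k → ZMod (p ^ (k * n)), ‖curveSum ψ a c w‖ ^ (2 * triangular l) *
        ‖curveSum ψ a c' w‖ ^ (2 * (triangular k - triangular l)) ≤
      M * (squareFunction p n ψ a c ^ triangular l *
        squareFunction p n ψ a c' ^ (triangular k - triangular l)) := by
    intro c hc c' hc'
    obtain ⟨hne, hc'⟩ := mem_erase.1 hc'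
    obtain ⟨x, hx⟩ := nonempty_of_mem_residueClasses hc
    obtain ⟨x', hx'⟩ := nonempty_of_mem_residueClasses hc'
    refine hB ψ hψ a x' x (fun hdvd ↦ hne ?_) c c' (fun y ↦ dvd_sub_of_mem_residueClasses hc hx)
      (fun y ↦ dvd_sub_of_mem_residueClasses hc' hx')
    rw [eq_residueClass_of_mem hc hx, eq_residueClass_of_mem hc' hx']
    exact residueClass_congr (by rwa [pow_one])
  have broad : ∑ c ∈ residueClasses (p ^ 1) T, ∑ c' ∈ (residueClasses (p ^ 1) T).erase c,
      ∑ w : Fin k → ZMod (p ^ (k * n)), ‖curveSum ψ a c w‖ ^ (2 * triangular l) *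
        ‖curveSum ψ a c' w‖ ^ (2 * (triangular k - triangular l)) ≤
      M * squareFunction p n ψ a T ^ triangular k := by
    refine (sum_le_sum fun c hc ↦ sum_le_sum fun c' hc' ↦ pair_le c hc c' hc').trans ?_
    refine (sum_le_sum fun c _ ↦ sum_le_sum_of_subset_of_nonneg (erase_subset c _)
      fun c' _ _ ↦ by have := hS c; have := hS c'; positivity).trans ?_
    simp_rw [← mul_sum, ← sum_mul]
    refine mul_le_mul_of_nonneg_left ?_ hM
    refine (sum_squareFunction_pow_mul_sum_pow_le hn hn ψ a T T (triangular_pos hl)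
      (by omega)).trans_eq ?_
    rw [← pow_add, Nat.add_sub_cancel' hr.le]
  calc _ ≤ _ := broad_narrow
    _ ≤ 2 ^ (2 * triangular k) * (K * squareFunction p n ψ a T ^ triangular k) +
        (p : ℝ) ^ (4 * triangular k) * (M * squareFunction p n ψ a T ^ triangular k) := by
        gcongr
        exact hD.sum_residueClasses_le hk hn hK hψ a T
    _ = _ := by ring

end BroadNarrow

section Orthogonality

lemma addChar_map_sum {A R ι : Type*} [AddCommMonoid A] [CommMonoid R] (χ : AddChar A R)
    (s : Finset ι) (f : ι → A) : χ (∑ i ∈ s, f i) = ∏ i ∈ s, χ (f i) := by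
  classical
  induction s using Finset.induction_on with
  | empty => simp only [sum_empty, prod_empty, AddChar.map_zero_eq_one]
  | insert i s hi ih => rw [sum_insert hi, prod_insert hi, AddChar.map_add_eq_mul, ih]

lemma sum_prod_stdAddChar_mul {ι : Type*} [Fintype ι] [DecidableEq ι] (M : ι → ℕ)
    [∀ j, NeZero (M j)] (m : ι → ℤ) :
    ∑ g : ∀ j, ZMod (M j), ∏ j, (ZMod.stdAddChar (g j * (m j : ZMod (M j))) : ℂ) =
      if ∀ j, (M j : ℤ) ∣ m j then ∏ j, (M j : ℂ) else 0 := by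
  have sum_coord (j : ι) : ∑ z : ZMod (M j), (ZMod.stdAddChar (z * (m j : ZMod (M j))) : ℂ) =
      if (M j : ℤ) ∣ m j then (M j : ℂ) else 0 := by
    rw [AddChar.sum_mulShift _ (ZMod.isPrimitive_stdAddChar (M j)), ZMod.card]
    simp only [ZMod.intCast_zmod_eq_zero_iff_dvd, Nat.cast_ite, Nat.cast_zero]
  rw [← Fintype.prod_sum fun j z ↦ (ZMod.stdAddChar (z * (m j : ZMod (M j))) : ℂ)]
  simp only [sum_coord, prod_ite_zero, mem_univ, true_imp_iff]

variable {k M : ℕ} [NeZero M]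

lemma sum_phase_mul_conj_phase_eq_zero {m m' : Fin k → ℤ} (h : ¬ ∀ j, (M : ℤ) ∣ m j - m' j) :
    ∑ w : Fin k → ZMod M, phase w m * conj (phase w m') = 0 := by
  refine Eq.trans (sum_congr rfl fun w _ ↦ ?_)
    ((sum_prod_stdAddChar_mul (fun _ ↦ M) fun j ↦ m j - m' j).trans (if_neg h))
  rw [phase, phase, ← AddChar.map_neg_eq_conj, ← AddChar.map_add_eq_mul, ← sub_eq_add_neg,
    ← sum_sub_distrib, addChar_map_sum]
  simp only [← mul_sub, Int.cast_sub]

lemma sum_norm_curveSum_sq {ψ : Fin k → ℤ[X]} (a : ℤ → ℂ) (T : Finset ℤ) :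
    ((∑ w : Fin k → ZMod M, ‖curveSum ψ a T w‖ ^ 2 : ℝ) : ℂ) =
      ∑ x ∈ T, ∑ y ∈ T, a x * conj (a y) *
        ∑ w : Fin k → ZMod M, phase w (curvePoint ψ x) * conj (phase w (curvePoint ψ y)) := by
  simp only [mul_sum]
  rw [Complex.ofReal_sum, sum_congr rfl fun x _ ↦ sum_comm, sum_comm]
  refine sum_congr rfl fun w _ ↦ ?_
  rw [Complex.ofReal_pow, ← Complex.mul_conj', curveSum, map_sum, sum_mul_sum]
  refine sum_congr rfl fun x _ ↦ sum_congr rfl fun y _ ↦ ?_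
  rw [map_mul]
  ring

lemma sum_norm_curveSum_sq_residueClasses {m : ℕ} {ψ : Fin k → ℤ[X]}
    (hψ : ∀ x y : ℤ, (∀ j, (M : ℤ) ∣ (ψ j).eval x - (ψ j).eval y) → (m : ℤ) ∣ y - x)
    (a : ℤ → ℂ) (T : Finset ℤ) :
    ∑ w : Fin k → ZMod M, ‖curveSum ψ a T w‖ ^ 2 =
      ∑ U ∈ residueClasses m T, ∑ w : Fin k → ZMod M, ‖curveSum ψ a U w‖ ^ 2 := by
  refine Complex.ofReal_injective ?_
  rw [sum_norm_curveSum_sq, Complex.ofReal_sum]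
  simp only [sum_norm_curveSum_sq]
  rw [← sum_residueClasses m T]
  refine sum_congr rfl fun U hU ↦ sum_congr rfl fun x hx ↦
    (sum_subset (subset_of_mem_residueClasses hU) fun y hy hyU ↦ ?_).symm
  have hxy : ¬ (m : ℤ) ∣ y - x := fun hdvd ↦ hyU <| by
    rw [eq_residueClass_of_mem hU hx, mem_residueClass]
    exact ⟨hy, hdvd⟩
  exact mul_eq_zero_of_right _ (sum_phase_mul_conj_phase_eq_zero fun h ↦ hxy (hψ x y h))

end Orthogonality

lemma IsScaledMomentCurve.dvd_sub_of_dvd_eval_sub {p k n : ℕ} [Fact p.Prime]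
    {ψ : Fin (k + 1) → ℤ[X]} (hψ : IsScaledMomentCurve p ψ) {x y : ℤ}
    (h : ((p ^ n : ℕ) : ℤ) ∣ (ψ 0).eval x - (ψ 0).eval y) : ((p ^ n : ℕ) : ℤ) ∣ y - x := by
  obtain ⟨u, hu, hψ⟩ := hψ
  obtain ⟨q, hq⟩ := hψ 0
  obtain ⟨s, hs⟩ : x - y ∣ q.eval x - q.eval y := sub_dvd_eval_sub x y q
  have hfactor : (ψ 0).eval x - (ψ 0).eval y = (x - y) * (u + p * s) := by
    simp only [hq, Fin.val_zero, zero_add, pow_one, eval_add, eval_mul, eval_C, eval_X]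
    linear_combination (p : ℤ) * hs
  have hcoprime : IsCoprime ((p ^ n : ℕ) : ℤ) (u + p * s) := by
    rw [Nat.cast_pow]
    refine IsCoprime.pow_left ?_
    rw [(Nat.prime_iff_prime_int.1 Fact.out).coprime_iff_not_dvd]
    exact fun hdvd ↦ hu ((dvd_add_left (dvd_mul_right _ _)).1 hdvd)
  rw [dvd_sub_comm]
  exact hcoprime.dvd_of_dvd_mul_right (hfactor ▸ h)

lemma decouplingBound_one (p : ℕ) [Fact p.Prime] (n : ℕ) : DecouplingBound p 1 n 1 := by
  intro ψ hψ a T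
  simp only [squareFunction, curveNorm, show triangular 1 = 1 from rfl, mul_one, Nat.cast_one,
    div_one, Real.rpow_one, pow_one, one_mul]
  refine (sum_norm_curveSum_sq_residueClasses (fun x y h ↦
    hψ.dvd_sub_of_dvd_eval_sub ?_) a T).le
  simpa only [one_mul] using h 0

lemma DecouplingBound.mono {p k n : ℕ} [NeZero p] {K K' : ℝ} (h : DecouplingBound p k n K)
    (hK : K ≤ K') : DecouplingBound p k n K' := by
  intro ψ hψ a T
  have := squareFunction_nonneg (p := p) (n := n) ψ a T
  exact (h ψ hψ a T).trans (by gcongr)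

/-! ### Iterating the bilinear estimates -/

/-- The exponents `s` of the bilinear iteration: after `R` rounds the constant in the bilinear
estimate of order `l` at depth `b` has improved by `p ^ (-(H * s * b))`. The index
`k - (l + 1)` is only meant for `l < k`. -/
noncomputable def recursionExponent (k : ℕ) : ℕ → ℕ → ℝ
  | _, 0 => 1
  | 0, _ + 1 => 0
  | R + 1, l + 1 =>
    (k - (l + 1)) / (k - l) * recursionExponent k R l +
      recursionExponent k R (k - (l + 1)) / (l + 1)

lemma recursionExponent_zero_right (k R : ℕ) : recursionExponent k R 0 = 1 := by
  cases R <;> rfl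

lemma recursionExponent_zero_left (k : ℕ) {l : ℕ} (hl : 1 ≤ l) : recursionExponent k 0 l = 0 := by
  obtain ⟨m, rfl⟩ := Nat.exists_eq_add_of_le' hl
  rfl

lemma sum_recursionExponent (d R : ℕ) :
    ∑ l ∈ range d, recursionExponent (d + 1) R (l + 1) = R * (d / (d + 1)) := by
  induction R with
  | zero => simp only [recursionExponent, sum_const_zero, Nat.cast_zero, zero_mul]
  | succ R ih =>
    set s := recursionExponent (d + 1) R with hs
    have shifted : ∑ l ∈ range d, ((d + 1 : ℕ) - (l + 1) : ℝ) / ((d + 1 : ℕ) - l) * s l =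
        ∑ l ∈ range d, ((d : ℝ) - (l + 1)) / (d - l) * s (l + 1) + d / (d + 1) := by
      have h := sum_range_succ
        (fun l : ℕ ↦ ((d + 1 : ℕ) - (l + 1) : ℝ) / ((d + 1 : ℕ) - l) * s l) d
      rw [sum_range_succ'] at h
      simp only [Nat.cast_add, Nat.cast_one, Nat.cast_zero, hs, recursionExponent_zero_right,
        add_sub_add_right_eq_sub, add_sub_cancel_right, sub_self, zero_div, zero_mul, zero_add,
        add_zero, sub_zero, mul_one] at h ⊢
      exact h.symm
    have reflected : ∑ l ∈ range d, s (d + 1 - (l + 1)) / ((l : ℝ) + 1) =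
        ∑ l ∈ range d, s (l + 1) / ((d : ℝ) - l) := by
      rw [← sum_range_reflect]
      refine sum_congr rfl fun l hl ↦ ?_
      have hl := mem_range.1 hl
      rw [show d + 1 - (d - 1 - l + 1) = l + 1 by omega, ← Nat.cast_add_one,
        show d - 1 - l + 1 = d - l by omega, Nat.cast_sub hl.le]
    have merge : ∀ l ∈ range d,
        ((d : ℝ) - (l + 1)) / (d - l) * s (l + 1) + s (l + 1) / (d - l) = s (l + 1) := by
      intro l hl
      have hne : (d : ℝ) - l ≠ 0 := sub_ne_zero.2 (mod_cast (mem_range.1 hl).ne')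
      field_simp
      ring
    simp only [recursionExponent]
    rw [sum_add_distrib, shifted, reflected, add_right_comm, ← sum_add_distrib,
      sum_congr rfl merge, ih]
    push_cast
    ring

lemma exists_div_le_recursionExponent {k : ℕ} (hk : 2 ≤ k) (R : ℕ) :
    ∃ l, 1 ≤ l ∧ l < k ∧ (R : ℝ) / k ≤ recursionExponent k R l := by
  obtain ⟨d, rfl⟩ := Nat.exists_eq_add_of_le' (show 1 ≤ k by omega)
  have hsum : ∑ _l ∈ range d, (R : ℝ) / (d + 1 : ℕ) ≤
      ∑ l ∈ range d, recursionExponent (d + 1) R (l + 1) := by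
    rw [sum_recursionExponent, sum_const, card_range, nsmul_eq_mul]
    push_cast
    exact (mul_div_left_comm _ _ _).le
  obtain ⟨l, hl, hle⟩ := exists_le_of_sum_le (nonempty_range_iff.2 (by omega)) hsum
  exact ⟨l + 1, by omega, by simpa using hl, hle⟩

/-- The depth `A` solving `l * A = (k - l + 1) * b`, at which decoupling of order `l` is sharp
against depth `b`. The division is exact only if `l ∣ b`. -/
def conjugateDepth (k l b : ℕ) : ℕ := (k - l + 1) * (b / l)

section ConjugateDepth

variable {k l b : ℕ}

lemma mul_conjugateDepth (h : l ∣ b) : l * conjugateDepth k l b = (k - l + 1) * b := by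
  rw [conjugateDepth, mul_left_comm, Nat.mul_div_cancel' h]

lemma conjugateDepth_pos (hl : 1 ≤ l) (hb : 1 ≤ b) (h : l ∣ b) : 1 ≤ conjugateDepth k l b :=
  Nat.mul_pos (Nat.succ_pos _) (Nat.div_pos (Nat.le_of_dvd hb h) hl)

lemma conjugateDepth_le (hl : 1 ≤ l) (hlk : l ≤ k) (b : ℕ) : conjugateDepth k l b ≤ k * b :=
  Nat.mul_le_mul (by omega) (Nat.div_le_self _ _)

lemma conjugateDepth_le_pred (hl : 2 ≤ l) : conjugateDepth k l b ≤ conjugateDepth k (l - 1) b :=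
  Nat.mul_le_mul (by omega) (Nat.div_le_div_left (by omega) (by omega))

lemma le_conjugateDepth_conjugateDepth (hl : 1 ≤ l) (hlk : l < k) (h : l ∣ b)
    (h' : k - l ∣ conjugateDepth k l b) :
    b ≤ conjugateDepth k (k - l) (conjugateDepth k l b) := by
  refine Nat.le_of_mul_le_mul_left ?_ (Nat.mul_pos hl (show 0 < k - l by omega))
  calc l * (k - l) * b ≤ (l + 1) * (k - l + 1) * b := by gcongr <;> omega
    _ = (k - (k - l) + 1) * (l * conjugateDepth k l b) := by
      rw [mul_conjugateDepth h, show k - (k - l) = l by omega, mul_assoc]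
    _ = l * (k - l) * conjugateDepth k (k - l) (conjugateDepth k l b) := by
      rw [mul_assoc l, mul_conjugateDepth h']
      ring

lemma factorial_pow_dvd_conjugateDepth (hl : 1 ≤ l) (hlk : l ≤ k) {R : ℕ}
    (h : k.factorial ^ (R + 1) ∣ b) : k.factorial ^ R ∣ conjugateDepth k l b := by
  refine Dvd.dvd.mul_left (Nat.dvd_div_of_mul_dvd (dvd_trans ?_ h)) _
  rw [pow_succ']
  exact mul_dvd_mul_right (Nat.dvd_factorial hl hlk) _

lemma recursionExponent_identity (hl : 1 ≤ l) (hlk : l < k) (h : l ∣ b) (R : ℕ) (x : ℝ) :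
    (x - recursionExponent k R (l - 1) * b) * (k - l : ℕ) +
        (x - recursionExponent k R (k - l) * conjugateDepth k l b) =
      (x - recursionExponent k (R + 1) l * b) * (k - l + 1 : ℕ) := by
  have hdepth : (l : ℝ) * conjugateDepth k l b = (k - l + 1) * b := by
    rw [← Nat.cast_sub hlk.le]
    exact_mod_cast mul_conjugateDepth h
  obtain ⟨m, rfl⟩ := Nat.exists_eq_add_of_le' hl
  have hm : (m : ℝ) + 1 ≠ 0 := by positivity
  have hkm : (k : ℝ) - m ≠ 0 := sub_ne_zero.2 (by norm_cast; omega)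
  rw [Nat.cast_add_one (k - (m + 1)), Nat.cast_sub hlk.le, recursionExponent, Nat.add_sub_cancel]
  push_cast at hdepth ⊢
  field_simp
  linear_combination (-((k : ℝ) - m) * recursionExponent k R (k - (m + 1))) * hdepth

end ConjugateDepth

section Iteration

variable {p k n : ℕ} [Fact p.Prime] {H C L : ℝ} {R b l : ℕ}

lemma BilinearBound.of_conjugateDepth (hkp : k < p) (hl : 1 ≤ l) (hlk : l < k) {A : ℕ} {M : ℝ}
    (hL : 0 ≤ L) (hM : 0 ≤ M) (hlb : l ∣ b) (hbn : k * b ≤ n) (hA : 1 ≤ A)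
    (hAA' : A ≤ conjugateDepth k l b) (hD : ∀ m ≤ n, DecouplingBound p l m L)
    (hB : BilinearBound p k n l (conjugateDepth k l b) b M) :
    BilinearBound p k n l A b (L * M) := by
  have hA'n : conjugateDepth k l b ≤ n := (conjugateDepth_le hl hlk.le b).trans hbn
  have hb : b ≤ n := (Nat.le_mul_of_pos_left b (by omega)).trans hbn
  exact hB.of_decouplingBound hkp hl hlk.le hL hM hA hAA' hA'n (Nat.mul_le_mul (by omega) hb)
    (mul_conjugateDepth hlb).le (hD _ ((Nat.sub_le _ _).trans hA'n))

lemma bilinearBound_pred (hkp : k < p) (hl : 1 ≤ l) (hlk : l < k) (hC : 0 ≤ C) (hL : 1 ≤ L)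
    (hb : 1 ≤ b) (hbn : k * b ≤ n) (hdvd : ∀ j, 1 ≤ j → j ≤ k → j ∣ b)
    (hDk : ∀ m ≤ n, DecouplingBound p k m (C * (p : ℝ) ^ (H * m)))
    (hDl : ∀ j, 1 ≤ j → j < k → ∀ m ≤ n, DecouplingBound p j m L)
    (hB : 2 ≤ l → BilinearBound p k n (l - 1) (conjugateDepth k (l - 1) b) b
      (C * L ^ R * (p : ℝ) ^ (H * (n - recursionExponent k R (l - 1) * b)))) :
    BilinearBound p k n (l - 1) (conjugateDepth k l b) b
      (C * L ^ (R + 1) * (p : ℝ) ^ (H * (n - recursionExponent k R (l - 1) * b))) := by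
  rcases hl.eq_or_lt with rfl | hl
  · have hbn' : b ≤ n := (Nat.le_mul_of_pos_left b (by omega)).trans hbn
    refine ((hDk (n - b) (Nat.sub_le _ _)).bilinearBound_zero hlk.le (by positivity) hb hbn'
      _).mono ?_
    rw [recursionExponent_zero_right, one_mul, Nat.cast_sub hbn']
    gcongr
    exact le_mul_of_one_le_right hC (one_le_pow₀ hL)
  · refine ((hB hl).of_conjugateDepth hkp (by omega) (by omega) (by positivity) (by positivity)
      (hdvd _ (by omega) (by omega)) hbn
      (conjugateDepth_pos hl.le hb (hdvd l hl.le hlk.le))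
      (conjugateDepth_le_pred hl) (hDl _ (by omega) (by omega))).mono (le_of_eq ?_)
    ring

lemma bilinearBound_iterate (hk : 2 ≤ k) (hkp : k < p) (hC : 0 ≤ C) (hL : 1 ≤ L)
    (hDk : ∀ m ≤ n, DecouplingBound p k m (C * (p : ℝ) ^ (H * m)))
    (hDl : ∀ j, 1 ≤ j → j < k → ∀ m ≤ n, DecouplingBound p j m L) (R : ℕ) :
    ∀ b l, 1 ≤ b → k.factorial ^ (R + 1) ∣ b → k ^ (R + 1) * b ≤ n → 1 ≤ l → l < k →
      BilinearBound p k n l (conjugateDepth k l b) b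
        (C * L ^ R * (p : ℝ) ^ (H * (n - recursionExponent k R l * b))) := by
  have hp : (0 : ℝ) < p := mod_cast (Fact.out : p.Prime).pos
  induction R with
  | zero =>
    intro b l _ _ _ hl hlk
    simpa [recursionExponent_zero_left k hl] using
      (hDk n le_rfl).bilinearBound hl hlk (by positivity) (conjugateDepth k l b) b
  | succ R ih =>
    intro b l hb hfac hn hl hlk
    have dvd_of_factorial {x j : ℕ} (hx : k.factorial ^ (R + 1) ∣ x) (hj : 1 ≤ j) (hjk : j ≤ k) :
        j ∣ x := (Nat.dvd_factorial hj hjk).trans ((dvd_pow_self _ R.succ_ne_zero).trans hx)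
    have hfac' : k.factorial ^ (R + 1) ∣ b := (pow_dvd_pow _ (Nat.le_succ _)).trans hfac
    set A := conjugateDepth k l b
    have hlb := dvd_of_factorial hfac' hl hlk.le
    have hA1 : 1 ≤ A := conjugateDepth_pos hl hb hlb
    have hAfac : k.factorial ^ (R + 1) ∣ A := factorial_pow_dvd_conjugateDepth hl hlk.le hfac
    have hklA := dvd_of_factorial hAfac (show 1 ≤ k - l by omega) (Nat.sub_le _ _)
    have hRA : k ^ (R + 1) * A ≤ n := by
      refine (Nat.mul_le_mul_left _ (conjugateDepth_le hl hlk.le b)).trans ?_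
      rwa [← mul_assoc, ← pow_succ]
    have hkn {x : ℕ} (hx : k ^ (R + 1) * x ≤ n) : k * x ≤ n :=
      (Nat.mul_le_mul_right x (Nat.le_self_pow R.succ_ne_zero k)).trans hx
    have hRb : k ^ (R + 1) * b ≤ n :=
      (Nat.mul_le_mul_right b (Nat.pow_le_pow_right (by omega) (Nat.le_succ _))).trans hn
    have bound₁ := bilinearBound_pred (R := R) hkp hl hlk hC hL hb (hkn hRb)
      (fun j ↦ dvd_of_factorial hfac') hDk hDl
      fun hl ↦ ih b (l - 1) hb hfac' hRb (by omega) (by omega)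
    have bound₂ := (ih A (k - l) hA1 hAfac hRA (by omega) (by omega)).of_conjugateDepth hkp
      (by omega) (by omega) (by positivity) (by positivity) hklA (hkn hRA) hb
      (le_conjugateDepth_conjugateDepth hl hlk hlb hklA) (hDl _ (by omega) (by omega))
    refine BilinearBound.interpolate hl hlk.le (by positivity) (by positivity) (le_of_eq ?_)
      bound₁ bound₂
    calc _ = (C * L ^ (R + 1)) ^ (k - l + 1) *
          (p : ℝ) ^ (H * ((n - recursionExponent k R (l - 1) * b) * (k - l : ℕ) +
            (n - recursionExponent k R (k - l) * A))) := by
          rw [mul_add, Real.rpow_add hp, ← mul_assoc H, Real.rpow_mul_natCast hp.le]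
          ring
      _ = _ := by
          rw [recursionExponent_identity hl hlk hlb, ← mul_assoc H, Real.rpow_mul_natCast hp.le,
            ← mul_pow]

end Iteration

/-- The decoupling constants of degree `k` at scale `p ^ (-n)` grow at most like `p ^ (H * n)`. -/
def HasDecouplingExponent (p : ℕ) [NeZero p] (k : ℕ) (H : ℝ) : Prop :=
  ∃ C : ℝ, 0 ≤ C ∧ ∀ n : ℕ, DecouplingBound p k n (C * (p : ℝ) ^ (H * n))

section DecouplingExponent

variable {p k : ℕ} [Fact p.Prime] {H h δ ε : ℝ}

lemma one_le_cast_prime : (1 : ℝ) ≤ p := mod_cast (Fact.out : p.Prime).one_le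

lemma HasDecouplingExponent.mono {H' : ℝ} (hH : HasDecouplingExponent p k H) (hHH' : H ≤ H') :
    HasDecouplingExponent p k H' := by
  obtain ⟨C, hC, hD⟩ := hH
  refine ⟨C, hC, fun n ↦ (hD n).mono ?_⟩
  have hp := one_le_cast_prime (p := p)
  gcongr

lemma hasDecouplingExponent_one (hH : 0 ≤ H) : HasDecouplingExponent p 1 H :=
  ⟨1, zero_le_one, fun n ↦ (decouplingBound_one p n).mono <| by
    rw [one_mul]
    exact Real.one_le_rpow one_le_cast_prime (by positivity)⟩

lemma hasDecouplingExponent_crude (hk : 1 ≤ k) :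
    HasDecouplingExponent p k (2 * triangular k : ℕ) :=
  ⟨1, zero_le_one, fun n ↦ (DecouplingBound.crude hk).mono <| by
    rw [one_mul, mul_comm, ← Nat.cast_mul, Real.rpow_natCast]⟩

lemma exists_uniform_decouplingBound (hH : ∀ l, 1 ≤ l → l < k → HasDecouplingExponent p l H) :
    ∃ C : ℝ, 1 ≤ C ∧
      ∀ l, 1 ≤ l → l < k → ∀ n : ℕ, DecouplingBound p l n (C * (p : ℝ) ^ (H * n)) := by
  choose! F hF hD using hH
  have hF_sum : ∀ l ∈ Ico 1 k, 0 ≤ F l := fun l hl ↦ hF l (mem_Ico.1 hl).1 (mem_Ico.1 hl).2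
  refine ⟨1 + ∑ l ∈ Ico 1 k, F l, le_add_of_nonneg_right (sum_nonneg hF_sum),
    fun l hl hlk n ↦ (hD l hl hlk n).mono ?_⟩
  gcongr
  linarith [single_le_sum hF_sum (mem_Ico.2 ⟨hl, hlk⟩)]

end DecouplingExponent

lemma exists_dvd_and_mul_le_and_le_mul {Q K n : ℕ} (hQ : 1 ≤ Q) (hK : 1 ≤ K) (hn : K * Q ≤ n) :
    ∃ b, 1 ≤ b ∧ Q ∣ b ∧ K * b ≤ n ∧ n ≤ K * (b + Q) := by
  have hpos : 0 < K * Q := Nat.mul_pos hK hQ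
  refine ⟨Q * (n / (K * Q)), Nat.mul_pos hQ (Nat.div_pos hn hpos), dvd_mul_right _ _, ?_, ?_⟩
  · rw [← mul_assoc]
    exact Nat.mul_div_le _ _
  · rw [← Nat.mul_succ, ← mul_assoc]
    exact (Nat.lt_mul_div_succ n hpos).le

lemma bilinear_exponent_le {k r R K Q A b n : ℕ} {H h s ε : ℝ} (hK : 1 ≤ K) (hhH : h ≤ H)
    (hh : 0 ≤ h) (hR : 4 * k * r + 1 ≤ h * (R / k)) (hs : (R : ℝ) / k ≤ s)
    (hε : R * ε ≤ 1 / (2 * K)) (hA : A + b ≤ 2 * k * b) (hn : n ≤ K * (b + Q)) :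
    ((A + b) * (2 * r) : ℕ) + R * (ε * n) + H * (n - s * b) ≤
      Q + (H - 1 / (2 * K)) * n := by
  have crude_loss : (((A + b) * (2 * r) : ℕ) : ℝ) ≤ 4 * k * r * b := by
    calc (((A + b) * (2 * r) : ℕ) : ℝ) ≤ ((2 * k * b * (2 * r) : ℕ) : ℝ) := by gcongr
      _ = 4 * k * r * b := by push_cast; ring
  have gain : (4 * k * r + 1) * (b : ℝ) ≤ H * s * b := by
    refine mul_le_mul_of_nonneg_right (hR.trans ?_) (Nat.cast_nonneg b)
    gcongr
    exact hh.trans hhH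
  have lower_loss : R * (ε * n) ≤ 1 / (2 * K) * n := by
    rw [← mul_assoc]
    gcongr
  have depth : 1 / (2 * K) * (n : ℝ) + 1 / (2 * K) * n ≤ b + Q := by
    have hK0 : (0 : ℝ) < K := mod_cast hK
    calc 1 / (2 * K) * (n : ℝ) + 1 / (2 * K) * n = n / K := by field_simp; ring
      _ ≤ b + Q := by rw [div_le_iff₀' hK0]; exact_mod_cast hn
  linarith

section DecouplingExponentImprovement

variable {p k : ℕ} [Fact p.Prime] {H h ε : ℝ}

lemma exists_bilinearBound_one_one {R : ℕ} (hk : 2 ≤ k) (hkp : k < p) (hh : 0 ≤ h) (hhH : h ≤ H)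
    (hR : 4 * k * triangular k + 1 ≤ h * (R / k)) (hε : 0 ≤ ε)
    (hRε : R * ε ≤ 1 / (2 * (k ^ (R + 1) : ℕ)))
    (hlow : ∀ l, 1 ≤ l → l < k → HasDecouplingExponent p l ε)
    (hH : HasDecouplingExponent p k H) :
    ∃ C : ℝ, 0 ≤ C ∧ ∃ Z : ℕ, ∀ n ≥ Z, ∃ l M, 1 ≤ l ∧ l < k ∧ 0 ≤ M ∧
      M ≤ C * (p : ℝ) ^ ((H - 1 / (2 * (k ^ (R + 1) : ℕ))) * n) ∧ BilinearBound p k n l 1 1 M := by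
  obtain ⟨C, hC, hD⟩ := hH
  obtain ⟨C', hC', hD'⟩ := exists_uniform_decouplingBound hlow
  have hp1 := one_le_cast_prime (p := p)
  have hp : (0 : ℝ) < p := by positivity
  set Q := k.factorial ^ (R + 1)
  have hQ : 1 ≤ Q := Nat.one_le_pow _ _ k.factorial_pos
  have hK : 1 ≤ k ^ (R + 1) := Nat.one_le_pow _ _ (by omega)
  refine ⟨C * C' ^ R * (p : ℝ) ^ (Q : ℝ), by positivity, k ^ (R + 1) * Q, fun n hn ↦ ?_⟩
  obtain ⟨l, hl, hlk, hs⟩ := exists_div_le_recursionExponent hk R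
  obtain ⟨b, hb, hQb, hKb, hnb⟩ := exists_dvd_and_mul_le_and_le_mul hQ hK hn
  have hkb : k * b ≤ n := (Nat.mul_le_mul_right b (Nat.le_self_pow R.succ_ne_zero k)).trans hKb
  have hAb := conjugateDepth_le hl hlk.le b
  have hbkb : b ≤ k * b := Nat.le_mul_of_pos_left b (by omega)
  set L := C' * (p : ℝ) ^ (ε * n) with hL
  have hL1 : 1 ≤ L := one_le_mul_of_one_le_of_one_le hC' (Real.one_le_rpow hp1 (by positivity))
  have hB := bilinearBound_iterate hk hkp hC hL1 (fun m _ ↦ hD m)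
    (fun j hj hjk m hm ↦ (hD' j hj hjk m).mono (by rw [hL]; gcongr)) R b l hb hQb hKb hl hlk
  refine ⟨l, _, hl, hlk, by positivity, ?_,
    hB.to_one_one hl hlk (hAb.trans hkb) (hbkb.trans hkb) (by positivity)⟩
  set A := conjugateDepth k l b
  have hexp := bilinear_exponent_le (A := A) hK hhH hh hR hs hRε (by linarith) hnb
  calc (p : ℝ) ^ ((A + b) * (2 * triangular k)) *
        (C * L ^ R * (p : ℝ) ^ (H * (n - recursionExponent k R l * b)))
      = C * C' ^ R * (p : ℝ) ^ ((((A + b) * (2 * triangular k) : ℕ) : ℝ) + R * (ε * n) +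
          H * (n - recursionExponent k R l * b)) := by
        rw [Real.rpow_add hp, Real.rpow_add hp, Real.rpow_natCast, mul_comm (R : ℝ),
          Real.rpow_mul_natCast hp.le]
        ring
    _ ≤ C * C' ^ R * (p : ℝ) ^ (Q + (H - 1 / (2 * (k ^ (R + 1) : ℕ))) * n) := by gcongr
    _ = _ := by rw [Real.rpow_add hp]; ring

lemma hasDecouplingExponent_of_bilinearBound (hk : 1 ≤ k) (hH : 0 ≤ H)
    (hpH : (2 : ℝ) ^ (2 * triangular k + 1) ≤ (p : ℝ) ^ H) {C : ℝ} (hC : 0 ≤ C) {Z : ℕ}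
    (hB : ∀ n ≥ Z, ∃ l M, 1 ≤ l ∧ l < k ∧ 0 ≤ M ∧ M ≤ C * (p : ℝ) ^ (H * n) ∧
      BilinearBound p k n l 1 1 M) : HasDecouplingExponent p k H := by
  have hp1 := one_le_cast_prime (p := p)
  have hp : (0 : ℝ) < p := by positivity
  set D := 2 * ((p : ℝ) ^ (4 * triangular k) * C) + (p : ℝ) ^ (Z * (2 * triangular k))
  have hD0 : 0 ≤ D := by positivity
  have hCD : 2 * ((p : ℝ) ^ (4 * triangular k) * C) ≤ D := le_add_of_nonneg_right (by positivity)
  refine ⟨D, hD0, fun n ↦ ?_⟩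
  induction n with
  | zero =>
    refine (DecouplingBound.crude hk).mono ?_
    have : 0 ≤ 2 * ((p : ℝ) ^ (4 * triangular k) * C) := by positivity
    have : 1 ≤ (p : ℝ) ^ (Z * (2 * triangular k)) := one_le_pow₀ hp1
    simp only [zero_mul, pow_zero, Nat.cast_zero, mul_zero, Real.rpow_zero, mul_one]
    linarith
  | succ n ih =>
    rcases le_or_gt Z (n + 1) with hn | hn
    · obtain ⟨l, M, hl, hlk, hM, hMC, hB⟩ := hB (n + 1) hn
      refine (DecouplingBound.of_bilinearBound hl hlk n.succ_pos (by positivity) hM ih hB).mono ?_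
      have hstep : (p : ℝ) ^ (H * (n + 1 : ℕ)) = (p : ℝ) ^ H * (p : ℝ) ^ (H * n) := by
        rw [← Real.rpow_add hp]
        push_cast
        ring_nf
      have narrow : 2 * ((2 : ℝ) ^ (2 * triangular k) * (D * (p : ℝ) ^ (H * n))) ≤
          D * (p : ℝ) ^ (H * (n + 1 : ℕ)) := by
        calc _ = 2 ^ (2 * triangular k + 1) * (D * (p : ℝ) ^ (H * n)) := by ring
          _ ≤ (p : ℝ) ^ H * (D * (p : ℝ) ^ (H * n)) := by gcongr
          _ = _ := by rw [hstep]; ring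
      have broad : 2 * ((p : ℝ) ^ (4 * triangular k) * M) ≤ D * (p : ℝ) ^ (H * (n + 1 : ℕ)) := by
        calc _ ≤ 2 * ((p : ℝ) ^ (4 * triangular k) * (C * (p : ℝ) ^ (H * (n + 1 : ℕ)))) := by
              gcongr
          _ = 2 * ((p : ℝ) ^ (4 * triangular k) * C) * (p : ℝ) ^ (H * (n + 1 : ℕ)) := by ring
          _ ≤ _ := by gcongr
      linarith
    · refine (DecouplingBound.crude hk).mono ?_
      calc (p : ℝ) ^ ((n + 1) * (2 * triangular k))
          ≤ (p : ℝ) ^ (Z * (2 * triangular k)) := by gcongr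
        _ ≤ D := le_add_of_nonneg_left (by positivity)
        _ ≤ _ := le_mul_of_one_le_right hD0 (Real.one_le_rpow hp1 (by positivity))

lemma HasDecouplingExponent.improve {R : ℕ} (hk : 2 ≤ k) (hkp : k < p) (hh : 0 ≤ h) (hhH : h ≤ H)
    (hph : (2 : ℝ) ^ (2 * triangular k + 1) ≤ (p : ℝ) ^ h)
    (hR : 4 * k * triangular k + 1 ≤ h * (R / k)) (hε : 0 ≤ ε)
    (hRε : R * ε ≤ 1 / (2 * (k ^ (R + 1) : ℕ)))
    (hlow : ∀ l, 1 ≤ l → l < k → HasDecouplingExponent p l ε)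
    (hH : HasDecouplingExponent p k H) :
    HasDecouplingExponent p k (max (H - 1 / (2 * (k ^ (R + 1) : ℕ))) h) := by
  have hp1 := one_le_cast_prime (p := p)
  obtain ⟨C, hC, Z, hB⟩ := exists_bilinearBound_one_one hk hkp hh hhH hR hε hRε hlow hH
  refine hasDecouplingExponent_of_bilinearBound (Z := Z) (by omega) (hh.trans (le_max_right _ _))
    (hph.trans (Real.rpow_le_rpow_of_exponent_le hp1 (le_max_right _ _))) hC fun n hn ↦ ?_
  obtain ⟨l, M, hl, hlk, hM, hMC, hB⟩ := hB n hn
  refine ⟨l, M, hl, hlk, hM, hMC.trans ?_, hB⟩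
  gcongr
  exact le_max_left _ _

lemma HasDecouplingExponent.of_improve {δ : ℝ} (hδ : 0 < δ) (hH : HasDecouplingExponent p k H)
    (improve : ∀ H' ≥ h, HasDecouplingExponent p k H' →
      HasDecouplingExponent p k (max (H' - δ) h)) :
    HasDecouplingExponent p k h := by
  have descend (j : ℕ) : HasDecouplingExponent p k (max (H - j * δ) h) := by
    induction j with
    | zero => exact hH.mono (by simp only [Nat.cast_zero, zero_mul, sub_zero, le_max_left])
    | succ j ih =>
      refine (improve _ (le_max_right _ _) ih).mono (max_le ?_ (le_max_right _ _))
      rw [sub_le_iff_le_add]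
      refine max_le ?_ (le_add_of_le_of_nonneg (le_max_right _ _) hδ.le)
      rw [← sub_le_iff_le_add]
      exact le_max_of_le_left (by push_cast; linarith)
  obtain ⟨j, hj⟩ := exists_nat_ge ((H - h) / δ)
  rw [div_le_iff₀ hδ] at hj
  exact (descend j).mono (max_le (by linarith) le_rfl)

end DecouplingExponentImprovement

theorem eventually_hasDecouplingExponent {k : ℕ} (hk : 1 ≤ k) {h : ℝ} (hh : 0 < h) :
    ∀ᶠ p : ℕ in atTop, ∀ [Fact p.Prime], HasDecouplingExponent p k h := by
  induction k using Nat.strong_induction_on generalizing h with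
  | _ k ih =>
  rcases hk.eq_or_lt with rfl | hk
  · exact .of_forall fun p _ ↦ hasDecouplingExponent_one hh.le
  have hk0 : (0 : ℝ) < k := by positivity
  obtain ⟨R, hR⟩ := exists_nat_ge ((4 * k * triangular k + 1) * k / h)
  have hR : 4 * k * triangular k + 1 ≤ h * (R / k) := by
    rw [div_le_iff₀ hh] at hR
    rw [mul_div_assoc', le_div_iff₀ hk0, mul_comm h]
    exact hR
  set δ : ℝ := 1 / (2 * (k ^ (R + 1) : ℕ))
  have hδ0 : 0 < δ := by positivity
  have hRδ : R * (δ / (R + 1)) ≤ δ := by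
    rw [mul_div_assoc', div_le_iff₀ (by positivity)]
    linarith
  have lower : ∀ᶠ p : ℕ in atTop, ∀ l ∈ Ico 1 k, ∀ [Fact p.Prime],
      HasDecouplingExponent p l (δ / (R + 1)) :=
    (eventually_all_finset _).2 fun l hl ↦
      ih l (mem_Ico.1 hl).2 (mem_Ico.1 hl).1 (by positivity)
  have large := ((tendsto_rpow_atTop hh).comp tendsto_natCast_atTop_atTop).eventually_ge_atTop
    ((2 : ℝ) ^ (2 * triangular k + 1))
  filter_upwards [lower, large, eventually_gt_atTop k] with p hlow hph hkp _
  exact (hasDecouplingExponent_crude hk.le).of_improve hδ0 fun H hH hexp ↦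
    hexp.improve hk hkp hh.le hH hph hR (by positivity) hRδ
      fun l hl hlk ↦ hlow l (mem_Ico.2 ⟨hl, hlk⟩)

/-! ### Vinogradov's mean value theorem -/

section WeylSum

variable {d : ℕ}

/-- The discrete Weyl sum `∑ x ∈ T, e(∑ j, g j * x ^ (j + 1) / M j)`. -/
noncomputable def weylSum (M : Fin d → ℕ) [∀ j, NeZero (M j)] (T : Finset ℤ)
    (g : ∀ j, ZMod (M j)) : ℂ :=
  ∑ x ∈ T, ∏ j, (ZMod.stdAddChar (g j * ((x ^ ((j : ℕ) + 1) : ℤ) : ZMod (M j))) : ℂ)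

/-- The moduli `p ^ n, p ^ (2 * n), …, p ^ (d * n)`. -/
abbrev powerModuli (d p n : ℕ) : Fin d → ℕ := fun j ↦ p ^ (((j : ℕ) + 1) * n)

/-- The difference of the power sums of degree `j + 1` of `x` and `y`. -/
def powerSumDiff {r : ℕ} (x y : Fin r → ℤ) (j : ℕ) : ℤ := ∑ i, x i ^ (j + 1) - ∑ i, y i ^ (j + 1)

/-- The solutions in `T` of Vinogradov's system in `2 * r` variables, taken modulo `M j` in degree
`j + 1`. -/
def vinogradovSolutions (M : Fin d → ℕ) (T : Finset ℤ) (r : ℕ) :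
    Finset ((Fin r → ℤ) × (Fin r → ℤ)) :=
  {xy ∈ Fintype.piFinset (fun _ ↦ T) ×ˢ Fintype.piFinset (fun _ ↦ T) |
    ∀ j, (M j : ℤ) ∣ powerSumDiff xy.1 xy.2 j}

lemma weylSum_pow (M : Fin d → ℕ) [∀ j, NeZero (M j)] (T : Finset ℤ) (g : ∀ j, ZMod (M j))
    (r : ℕ) :
    weylSum M T g ^ r = ∑ x ∈ Fintype.piFinset (fun _ : Fin r ↦ T),
      ∏ j, (ZMod.stdAddChar (g j * ((∑ i, x i ^ ((j : ℕ) + 1) : ℤ) : ZMod (M j))) : ℂ) := by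
  rw [weylSum, sum_pow']
  refine sum_congr rfl fun x _ ↦ ?_
  rw [Finset.prod_comm]
  refine prod_congr rfl fun j _ ↦ ?_
  rw [← addChar_map_sum, ← mul_sum, Int.cast_sum]

lemma norm_weylSum_pow (M : Fin d → ℕ) [∀ j, NeZero (M j)] (T : Finset ℤ)
    (g : ∀ j, ZMod (M j)) (r : ℕ) :
    ((‖weylSum M T g‖ ^ (2 * r) : ℝ) : ℂ) =
      ∑ xy ∈ Fintype.piFinset (fun _ : Fin r ↦ T) ×ˢ Fintype.piFinset (fun _ : Fin r ↦ T),
        ∏ j, (ZMod.stdAddChar (g j * (powerSumDiff xy.1 xy.2 j : ZMod (M j))) : ℂ) := by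
  rw [Complex.ofReal_pow, pow_mul, ← Complex.mul_conj', mul_pow, ← map_pow, weylSum_pow, map_sum,
    sum_mul_sum, ← sum_product']
  refine sum_congr rfl fun xy _ ↦ ?_
  rw [map_prod, ← prod_mul_distrib]
  refine prod_congr rfl fun j _ ↦ ?_
  rw [← AddChar.map_neg_eq_conj, ← AddChar.map_add_eq_mul, ← sub_eq_add_neg, ← mul_sub,
    powerSumDiff, Int.cast_sub]

lemma sum_norm_weylSum_pow (M : Fin d → ℕ) [∀ j, NeZero (M j)] (T : Finset ℤ) (r : ℕ) :
    ∑ g : ∀ j, ZMod (M j), ‖weylSum M T g‖ ^ (2 * r) =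
      (∏ j, (M j : ℝ)) * (vinogradovSolutions M T r).card := by
  refine Complex.ofReal_injective ?_
  rw [Complex.ofReal_sum, sum_congr rfl fun g _ ↦ norm_weylSum_pow M T g r, sum_comm]
  rw [vinogradovSolutions, card_filter]
  push_cast
  rw [mul_sum]
  refine sum_congr rfl fun xy _ ↦ ?_
  rw [sum_prod_stdAddChar_mul]
  split_ifs <;> simp

lemma powerSumDiff_swap {r : ℕ} (x y : Fin r → ℤ) (j : ℕ) :
    powerSumDiff y x j = -powerSumDiff x y j := by
  simp only [powerSumDiff, neg_sub]

lemma powerSumDiff_lt {r u : ℕ} (hr : 1 ≤ r) {x y : Fin r → ℤ} (hx : ∀ i, x i ∈ Icc (1 : ℤ) u)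
    (hy : ∀ i, y i ∈ Icc (1 : ℤ) u) (j : ℕ) : powerSumDiff x y j < (r * u : ℤ) ^ (j + 1) := by
  have upper : ∑ i, x i ^ (j + 1) ≤ r * (u : ℤ) ^ (j + 1) := by
    refine (sum_le_card_nsmul _ _ ((u : ℤ) ^ (j + 1)) fun i _ ↦ ?_).trans_eq (by simp)
    obtain ⟨h1, hu⟩ := mem_Icc.1 (hx i)
    exact pow_le_pow_left₀ (by omega) hu _
  have lower : (r : ℤ) ≤ ∑ i, y i ^ (j + 1) := by
    refine Eq.trans_le (by simp) (card_nsmul_le_sum univ (fun i ↦ y i ^ (j + 1)) 1 fun i _ ↦ ?_)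
    exact one_le_pow₀ (mem_Icc.1 (hy i)).1
  have hr_pow : (r : ℤ) * u ^ (j + 1) ≤ (r * u : ℤ) ^ (j + 1) := by
    rw [mul_pow]
    gcongr
    exact le_self_pow₀ (by omega) j.succ_ne_zero
  rw [powerSumDiff]
  omega

lemma vinogradovSolutions_powerModuli_subset {p n r u : ℕ} (hr : 1 ≤ r) (hu : r * u ≤ p ^ n)
    (M : Fin d → ℕ) :
    vinogradovSolutions (powerModuli d p n) (Icc 1 (u : ℤ)) r ⊆
      vinogradovSolutions M (Icc 1 (u : ℤ)) r := by
  refine monotone_filter_right _ fun ⟨x, y⟩ hxy hdvd j ↦ ?_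
  simp only [mem_product, Fintype.mem_piFinset] at hxy
  have modulus_ge : (r * u : ℤ) ^ ((j : ℕ) + 1) ≤ (powerModuli d p n j : ℕ) := by
    rw [powerModuli, mul_comm _ n, pow_mul]
    exact_mod_cast Nat.pow_le_pow_left hu _
  have hxy_lt := powerSumDiff_lt hr hxy.1 hxy.2 j
  have hyx_lt := powerSumDiff_lt hr hxy.2 hxy.1 j
  rw [powerSumDiff_swap] at hyx_lt
  have powerSumDiff_eq_zero : powerSumDiff x y j = 0 :=
    Int.eq_zero_of_abs_lt_dvd (hdvd j) (abs_lt.2 ⟨by omega, by omega⟩)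
  exact powerSumDiff_eq_zero ▸ dvd_zero _

end WeylSum

section MomentCurve

variable {p k n u : ℕ}

lemma isScaledMomentCurve_X_pow [Fact p.Prime] :
    IsScaledMomentCurve p fun j : Fin k ↦ (X : ℤ[X]) ^ ((j : ℕ) + 1) := by
  refine ⟨1, fun h ↦ ?_, fun j ↦ ⟨0, by simp⟩⟩
  exact (Fact.out : p.Prime).not_dvd_one (by exact_mod_cast h)

lemma curveSum_X_pow {M : ℕ} [NeZero M] (T : Finset ℤ) (w : Fin k → ZMod M) :
    curveSum (fun j : Fin k ↦ (X : ℤ[X]) ^ ((j : ℕ) + 1)) (fun _ ↦ 1) T w =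
      weylSum (fun _ ↦ M) T w := by
  refine sum_congr rfl fun x _ ↦ ?_
  rw [one_mul, phase, addChar_map_sum]
  simp only [curvePoint, eval_pow, eval_X]

lemma card_le_one_of_mem_residueClasses {m : ℕ} (hum : u ≤ m) {U : Finset ℤ}
    (hU : U ∈ residueClasses m (Icc 1 (u : ℤ))) : U.card ≤ 1 := by
  refine card_le_one.2 fun x hx y hy ↦ ?_
  have hx' := mem_Icc.1 (subset_of_mem_residueClasses hU hx)
  have hy' := mem_Icc.1 (subset_of_mem_residueClasses hU hy)
  have := Int.eq_zero_of_abs_lt_dvd (dvd_sub_of_mem_residueClasses hU hx hy)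
    (abs_lt.2 ⟨by omega, by omega⟩)
  omega

lemma squareFunction_one_pow_le [NeZero p] (hk : 1 ≤ k) (hu : u ≤ p ^ n) (ψ : Fin k → ℤ[X]) :
    squareFunction p n ψ (fun _ ↦ 1) (Icc 1 (u : ℤ)) ^ triangular k ≤
      (u : ℝ) ^ triangular k * ∏ _j : Fin k, ((p ^ (k * n) : ℕ) : ℝ) := by
  have curveNorm_le : ∀ U ∈ residueClasses (p ^ n) (Icc 1 (u : ℤ)),
      curveNorm p n ψ (fun _ ↦ 1) U ≤
        (∏ _j : Fin k, ((p ^ (k * n) : ℕ) : ℝ)) ^ (1 / (triangular k : ℝ)) := by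
    intro U hU
    have hcard := card_le_one_of_mem_residueClasses hu hU
    have norm_le (w : Fin k → ZMod (p ^ (k * n))) : ‖curveSum ψ (fun _ ↦ 1) U w‖ ≤ 1 := by
      refine (norm_sum_le_of_le U fun x _ ↦ ?_).trans (b := ∑ _x ∈ U, (1 : ℝ)) ?_
      · rw [one_mul, norm_phase]
      · rw [sum_const, nsmul_one]
        exact_mod_cast hcard
    rw [curveNorm]
    refine Real.rpow_le_rpow (by positivity) ?_ (by positivity)
    have pow_norm_le (w : Fin k → ZMod (p ^ (k * n))) :
        ‖curveSum ψ (fun _ ↦ 1) U w‖ ^ (2 * triangular k) ≤ 1 :=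
      pow_le_one₀ (norm_nonneg _) (norm_le w)
    exact (sum_le_card_nsmul univ _ 1 fun w _ ↦ pow_norm_le w).trans_eq (by simp [ZMod.card])
  have hparts : ((residueClasses (p ^ n) (Icc 1 (u : ℤ))).card : ℝ) ≤ u := by
    have : (residueClasses (p ^ n) (Icc 1 (u : ℤ))).card ≤ (Icc 1 (u : ℤ)).card := card_image_le
    rw [Int.card_Icc] at this
    exact_mod_cast this.trans (by omega)
  calc squareFunction p n ψ (fun _ ↦ 1) (Icc 1 (u : ℤ)) ^ triangular k
      ≤ (u * (∏ _j : Fin k, ((p ^ (k * n) : ℕ) : ℝ)) ^ (1 / (triangular k : ℝ))) ^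
          triangular k := by
        refine pow_le_pow_left₀ (squareFunction_nonneg _ _ _) ?_ _
        refine (sum_le_card_nsmul _ _ _ curveNorm_le).trans ?_
        rw [nsmul_eq_mul]
        gcongr
    _ = _ := by
        rw [mul_pow, one_div, Real.rpow_inv_natCast_pow (by positivity) (triangular_pos hk).ne']

lemma DecouplingBound.card_vinogradovSolutions_le [Fact p.Prime] {K : ℝ} (hk : 1 ≤ k) (hK : 0 ≤ K)
    (hu : u ≤ p ^ n) (hD : DecouplingBound p k n K) :
    ((vinogradovSolutions (fun _ : Fin k ↦ p ^ (k * n)) (Icc 1 (u : ℤ)) (triangular k)).card : ℝ) ≤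
      K * (u : ℝ) ^ triangular k := by
  have hp : 0 < p := NeZero.pos p
  have bound := hD _ isScaledMomentCurve_X_pow (fun _ ↦ 1) (Icc 1 (u : ℤ))
  simp only [curveSum_X_pow] at bound
  rw [sum_norm_weylSum_pow] at bound
  refine le_of_mul_le_mul_left (bound.trans ?_)
    (show 0 < ∏ _j : Fin k, ((p ^ (k * n) : ℕ) : ℝ) by positivity)
  calc _ ≤ K * ((u : ℝ) ^ triangular k * ∏ _j : Fin k, ((p ^ (k * n) : ℕ) : ℝ)) :=
        mul_le_mul_of_nonneg_left (squareFunction_one_pow_le hk hu _) hK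
    _ = _ := by ring

lemma prod_powerModuli (d p n : ℕ) :
    ∏ j, (powerModuli d p n j : ℝ) = (p : ℝ) ^ (n * triangular d) := by
  have sum_exponents : ∑ j : Fin d, ((j : ℕ) + 1) * n = n * triangular d := by
    rw [Fin.sum_univ_eq_sum_range (fun j ↦ (j + 1) * n)]
    induction d with
    | zero => rfl
    | succ d ih => rw [sum_range_succ, ih, triangular_succ]; ring
  simp only [powerModuli, Nat.cast_pow]
  rw [prod_pow_eq_pow_sum, sum_exponents]

end MomentCurve

theorem exists_prime_vinogradov_mean_value {d : ℕ} (hd : 1 ≤ d) {h : ℝ} (hh : 0 < h) :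
    ∃ p : ℕ, ∃ _ : Fact p.Prime, ∃ C : ℝ, 0 ≤ C ∧ ∀ n u : ℕ, triangular d * u ≤ p ^ n →
      ∑ g : ∀ j, ZMod (powerModuli d p n j),
          ‖weylSum (powerModuli d p n) (Icc 1 (u : ℤ)) g‖ ^ (2 * triangular d) ≤
        C * (p : ℝ) ^ (h * n) * (p : ℝ) ^ (n * triangular d) * (u : ℝ) ^ triangular d := by
  obtain ⟨p₀, hp₀⟩ := Filter.eventually_atTop.1 (eventually_hasDecouplingExponent hd hh)
  obtain ⟨p, hp, hprime⟩ := Nat.exists_infinite_primes p₀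
  have : Fact p.Prime := ⟨hprime⟩
  obtain ⟨C, hC, hD⟩ := hp₀ p hp
  refine ⟨p, this, C, hC, fun n u hu ↦ ?_⟩
  have hr := triangular_pos hd
  have fine_count := (hD n).card_vinogradovSolutions_le hd (by positivity)
    ((Nat.le_mul_of_pos_left u hr).trans hu)
  have coarse_le_fine := card_le_card
    (vinogradovSolutions_powerModuli_subset hr hu fun _ : Fin d ↦ p ^ (d * n))
  rw [sum_norm_weylSum_pow, prod_powerModuli]
  calc (p : ℝ) ^ (n * triangular d) *
        (vinogradovSolutions (powerModuli d p n) (Icc 1 (u : ℤ)) (triangular d)).card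
      ≤ (p : ℝ) ^ (n * triangular d) * (C * (p : ℝ) ^ (h * n) * (u : ℝ) ^ triangular d) := by
        gcongr
        exact (Nat.cast_le.2 coarse_le_fine).trans fine_count
    _ = _ := by ring

theorem exists_vinogradov_mean_value {d : ℕ} (hd : 1 ≤ d) {h : ℝ} (hh : 0 < h) :
    ∃ C : ℝ, 0 ≤ C ∧ ∀ H : ℕ, 1 ≤ H → ∃ M : Fin d → ℕ, ∃ _ : ∀ j, NeZero (M j),
      (∀ j : Fin d, H ^ ((j : ℕ) + 1) < M j) ∧ ∀ u ≤ H,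
        ∑ g : ∀ j, ZMod (M j), ‖weylSum M (Icc 1 (u : ℤ)) g‖ ^ (2 * triangular d) ≤
          C * (H : ℝ) ^ h * (H : ℝ) ^ (2 * triangular d) := by
  obtain ⟨p, hp, C, hC, mean_value⟩ := exists_prime_vinogradov_mean_value hd hh
  have hp_gt : 1 < p := hp.out.one_lt
  have hr := triangular_pos hd
  set r := triangular d
  refine ⟨C * ((p * r : ℕ) : ℝ) ^ h * ((p * r : ℕ) : ℝ) ^ r, by positivity, fun H hH ↦ ?_⟩
  obtain ⟨m, hm_le, hm_lt⟩ := exists_nat_pow_near (Nat.mul_pos hr hH) hp_gt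
  have pow_le : ((p ^ (m + 1) : ℕ) : ℝ) ≤ ((p * r : ℕ) : ℝ) * H := by
    rw [pow_succ']
    exact_mod_cast (Nat.mul_le_mul_left p hm_le).trans_eq (mul_assoc p r H).symm
  refine ⟨powerModuli d p (m + 1), inferInstance, fun j ↦ ?_, fun u hu ↦ ?_⟩
  · rw [powerModuli, mul_comm ((j : ℕ) + 1), pow_mul]
    exact Nat.pow_lt_pow_left ((Nat.le_mul_of_pos_left H hr).trans_lt hm_lt) j.val.succ_ne_zero
  refine (mean_value (m + 1) u ((Nat.mul_le_mul_left r hu).trans hm_lt.le)).trans ?_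
  have rpow_le : (p : ℝ) ^ (h * (m + 1 : ℕ)) ≤ ((p * r : ℕ) : ℝ) ^ h * (H : ℝ) ^ h := by
    rw [mul_comm h, Real.rpow_mul (by positivity), Real.rpow_natCast,
      ← Real.mul_rpow (by positivity) (by positivity), ← Nat.cast_pow]
    gcongr
  have pow_mul_le : (p : ℝ) ^ ((m + 1) * r) ≤ ((p * r : ℕ) : ℝ) ^ r * (H : ℝ) ^ r := by
    rw [pow_mul, ← mul_pow, ← Nat.cast_pow]
    gcongr
  calc C * (p : ℝ) ^ (h * (m + 1 : ℕ)) * (p : ℝ) ^ ((m + 1) * r) * (u : ℝ) ^ r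
      ≤ C * (((p * r : ℕ) : ℝ) ^ h * (H : ℝ) ^ h) * (((p * r : ℕ) : ℝ) ^ r * (H : ℝ) ^ r) *
          (H : ℝ) ^ r := by gcongr
    _ = _ := by rw [two_mul, pow_add]; ring

/-! ### Counting -/

section Collisions

variable {ι G : Type*} [Fintype G] [DecidableEq G]

lemma card_collisions_eq_sum (P : Finset ι) (g : ι → G) :
    #{q ∈ P ×ˢ P | g q.1 = g q.2} = ∑ z, #{n ∈ P | g n = z} ^ 2 := by
  rw [card_eq_sum_card_fiberwise (f := fun q ↦ g q.1) (t := univ) fun _ _ ↦ by simp]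
  refine sum_congr rfl fun z _ ↦ ?_
  rw [sq, ← card_product]
  congr 1
  ext ⟨x, y⟩
  simp only [mem_filter, mem_product]
  grind

lemma sum_comp_sq_le (P : Finset ι) (g : ι → G) (v : G → ℝ) :
    (∑ n ∈ P, v (g n)) ^ 2 ≤ #{q ∈ P ×ˢ P | g q.1 = g q.2} * ∑ z, v z ^ 2 := by
  have sum_fibers : ∑ n ∈ P, v (g n) = ∑ z, (#{n ∈ P | g n = z} : ℝ) * v z := by
    rw [← sum_fiberwise P g]
    refine sum_congr rfl fun z _ ↦ ?_
    rw [← nsmul_eq_mul, ← sum_const]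
    exact sum_congr rfl fun n hn ↦ by rw [(mem_filter.1 hn).2]
  rw [sum_fibers, card_collisions_eq_sum, Nat.cast_sum]
  simp only [Nat.cast_pow]
  exact sum_mul_sq_le_sq_mul_sq _ _ _

lemma sum_comp_pow_le (P : Finset ι) (g : ι → G) {w : G → ℝ} (hw : ∀ z, 0 ≤ w z) {r : ℕ}
    (hr : 1 ≤ r) :
    (∑ n ∈ P, w (g n)) ^ (2 * r) ≤
      (#P : ℝ) ^ (2 * r - 2) * #{q ∈ P ×ˢ P | g q.1 = g q.2} * ∑ z, w z ^ (2 * r) := by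
  obtain ⟨r, rfl⟩ := Nat.exists_eq_add_of_le' hr
  have hsum : 0 ≤ ∑ n ∈ P, w (g n) := sum_nonneg fun n _ ↦ hw _
  calc (∑ n ∈ P, w (g n)) ^ (2 * (r + 1))
      = ((∑ n ∈ P, w (g n)) ^ (r + 1)) ^ 2 := by rw [← pow_mul, mul_comm]
    _ ≤ ((#P : ℝ) ^ r * ∑ n ∈ P, w (g n) ^ (r + 1)) ^ 2 := by
        gcongr
        exact pow_sum_le_card_mul_sum_pow (fun _ _ ↦ hw _) r
    _ = (#P : ℝ) ^ (2 * (r + 1) - 2) * (∑ n ∈ P, w (g n) ^ (r + 1)) ^ 2 := by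
        rw [mul_pow, ← pow_mul, mul_comm r, mul_add_one, Nat.add_sub_cancel]
    _ ≤ (#P : ℝ) ^ (2 * (r + 1) - 2) *
          (#{q ∈ P ×ˢ P | g q.1 = g q.2} * ∑ z, (w z ^ (r + 1)) ^ 2) := by
        gcongr
        exact sum_comp_sq_le P g fun z ↦ w z ^ (r + 1)
    _ = _ := by simp only [← pow_mul, mul_comm 2 (r + 1), mul_assoc]

end Collisions

lemma card_le_of_forall_sub_le {Q : Finset ℤ} {R : ℝ} (hR : 0 ≤ R)
    (h : ∀ x ∈ Q, ∀ y ∈ Q, (x : ℝ) - y ≤ R) : (#Q : ℝ) ≤ R + 1 := by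
  obtain rfl | hQ := Q.eq_empty_or_nonempty
  · rw [card_empty, Nat.cast_zero]
    positivity
  have card_le := card_le_card (show Q ⊆ Icc (Q.min' hQ) (Q.max' hQ) from fun x hx ↦
    mem_Icc.2 ⟨Q.min'_le x hx, Q.le_max' x hx⟩)
  have min_le_max := Q.min'_le _ (Q.max'_mem hQ)
  have diam_le := h _ (Q.max'_mem hQ) _ (Q.min'_mem hQ)
  rw [Int.card_Icc] at card_le
  have : (#Q : ℝ) ≤ Q.max' hQ + 1 - Q.min' hQ := by
    exact_mod_cast (show (#Q : ℤ) ≤ Q.max' hQ + 1 - Q.min' hQ by omega)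
  linarith

lemma card_le_of_forall_natCast_sub_le {Q : Finset ℕ} {R : ℝ} (hR : 0 ≤ R)
    (h : ∀ x ∈ Q, ∀ y ∈ Q, (x : ℝ) - y ≤ R) : (#Q : ℝ) ≤ R + 1 := by
  rw [← card_image_of_injective _ (Nat.cast_injective (R := ℤ))]
  refine card_le_of_forall_sub_le hR fun u hu v hv ↦ ?_
  obtain ⟨x, hx, rfl⟩ := mem_image.1 hu
  obtain ⟨y, hy, rfl⟩ := mem_image.1 hv
  exact_mod_cast h x hx y hy

lemma card_le_of_forall_near_int {Q : Finset ℕ} {D : ℕ → ℝ} {s S N η : ℝ} (hs : 0 < s)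
    (hS : 0 ≤ S) (hN : 0 ≤ N) (hη : 0 ≤ η)
    (lower : ∀ x ∈ Q, ∀ y ∈ Q, s * |(x : ℝ) - y| ≤ |D x - D y|)
    (upper : ∀ x ∈ Q, ∀ y ∈ Q, |D x - D y| ≤ S * |(x : ℝ) - y|)
    (diam : ∀ x ∈ Q, ∀ y ∈ Q, |(x : ℝ) - y| ≤ N)
    (near : ∀ x ∈ Q, ∃ z : ℤ, |D x - z| ≤ η) :
    (#Q : ℝ) ≤ (2 * η / s + 1) * (S * N + 2 * η + 1) := by
  classical
  choose! z hz using near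
  have dist_le {x y : ℕ} (hx : x ∈ Q) (hy : y ∈ Q) :
      |((z x : ℝ) - z y) - (D x - D y)| ≤ 2 * η := by
    have := abs_le.1 (hz x hx)
    have := abs_le.1 (hz y hy)
    exact abs_le.2 ⟨by linarith, by linarith⟩
  have image_card_le : (#(Q.image z) : ℝ) ≤ S * N + 2 * η + 1 := by
    refine card_le_of_forall_sub_le (by positivity) fun u hu v hv ↦ ?_
    obtain ⟨x, hx, rfl⟩ := mem_image.1 hu
    obtain ⟨y, hy, rfl⟩ := mem_image.1 hv
    have := (le_abs_self _).trans
      ((upper x hx y hy).trans (mul_le_mul_of_nonneg_left (diam x hx y hy) hS))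
    linarith [(abs_le.1 (dist_le hx hy)).2]
  have fiber_card_le (m : ℤ) : (#{x ∈ Q | z x = m} : ℝ) ≤ 2 * η / s + 1 := by
    refine card_le_of_forall_natCast_sub_le (by positivity) fun x hx y hy ↦ ?_
    obtain ⟨hx, hzx⟩ := mem_filter.1 hx
    obtain ⟨hy, hzy⟩ := mem_filter.1 hy
    have hdist := dist_le hx hy
    rw [hzx, hzy, sub_self, zero_sub, abs_neg] at hdist
    rw [le_div_iff₀' hs]
    exact (mul_le_mul_of_nonneg_left (le_abs_self _) hs.le).trans ((lower x hx y hy).trans hdist)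
  have card_le := card_le_mul_card_image Q ⌊2 * η / s + 1⌋₊ fun m (_ : m ∈ Q.image z) ↦
    Nat.le_floor (fiber_card_le m)
  calc (#Q : ℝ) ≤ (⌊2 * η / s + 1⌋₊ : ℝ) * #(Q.image z) := by exact_mod_cast card_le
    _ ≤ _ := by
      gcongr
      exact Nat.floor_le (by positivity)

/-! ### Taylor expansion -/

/-- `F 0, F 1, …, F k` are successive derivatives on `s`; nothing is asked of `F j` for `j > k`. -/
def IsDerivChain (k : ℕ) (F : ℕ → ℝ → ℝ) (s : Set ℝ) : Prop :=
  ∀ j < k, ∀ x ∈ s, HasDerivWithinAt (F j) (F (j + 1) x) s x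

/-- The coefficient of degree `j` in the Taylor expansion at `x` of `F 0`, where `F j` is its
derivative of order `j`. -/
noncomputable def taylorCoeff (F : ℕ → ℝ → ℝ) (j : ℕ) (x : ℝ) : ℝ := F j x / j.factorial

/-- The error in approximating `F 0 (x₀ + t)` by the `i` lowest terms of its Taylor expansion
at `x₀`. -/
noncomputable def taylorRemainder (F : ℕ → ℝ → ℝ) (x₀ : ℝ) (i : ℕ) (t : ℝ) : ℝ :=
  F 0 (x₀ + t) - ∑ l ∈ range i, taylorCoeff F l x₀ * t ^ l

section Taylor

variable {k : ℕ} {F : ℕ → ℝ → ℝ} {s : Set ℝ}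

lemma IsDerivChain.tail (hF : IsDerivChain (k + 1) F s) :
    IsDerivChain k (fun j ↦ F (j + 1)) s :=
  fun j hj ↦ hF (j + 1) (by omega)

lemma taylorCoeff_succ_mul (F : ℕ → ℝ → ℝ) (j : ℕ) (x : ℝ) :
    taylorCoeff F (j + 1) x * (j + 1 : ℕ) = taylorCoeff (fun j ↦ F (j + 1)) j x := by
  rw [taylorCoeff, taylorCoeff, Nat.factorial_succ, Nat.cast_mul]
  field_simp

lemma taylorRemainder_succ_zero (F : ℕ → ℝ → ℝ) (x₀ : ℝ) (i : ℕ) :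
    taylorRemainder F x₀ (i + 1) 0 = 0 := by
  simp [taylorRemainder, taylorCoeff, sum_range_succ']

variable [s.OrdConnected]

lemma exists_sub_eq_mul_sub {G G' : ℝ → ℝ} (hG : ∀ x ∈ s, HasDerivWithinAt G (G' x) s x) {x y : ℝ}
    (hx : x ∈ s) (hy : y ∈ s) : ∃ c ∈ s, G y - G x = G' c * (y - x) := by
  wlog hxy : x < y generalizing x y
  · obtain rfl | hyx := (not_lt.1 hxy).eq_or_lt
    · exact ⟨_, hx, by simp⟩
    · obtain ⟨c, hc, hslope⟩ := this hy hx hyx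
      exact ⟨c, hc, by linarith⟩
  have hsub : Set.Icc x y ⊆ s := Set.Icc_subset s hx hy
  obtain ⟨c, hc, hslope⟩ := exists_hasDerivAt_eq_slope G G' hxy
    (fun z hz ↦ (hG z (hsub hz)).continuousWithinAt.mono hsub)
    (fun z hz ↦ (hG z (hsub (Set.Ioo_subset_Icc_self hz))).hasDerivAt
      (Filter.mem_of_superset (Icc_mem_nhds hz.1 hz.2) hsub))
  exact ⟨c, hsub (Set.Ioo_subset_Icc_self hc), by
    rw [hslope, div_mul_cancel₀ _ (sub_pos.2 hxy).ne']⟩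

lemma add_mem_of_mem_Icc {x₀ T t : ℝ} (hx₀ : x₀ ∈ s) (hT : x₀ + T ∈ s) (ht : t ∈ Set.Icc 0 T) :
    x₀ + t ∈ s :=
  Set.Icc_subset s hx₀ hT ⟨by linarith [ht.1], by linarith [ht.2]⟩

lemma IsDerivChain.hasDerivWithinAt_taylorRemainder (hF : IsDerivChain (k + 1) F s) {x₀ T t : ℝ}
    (hx₀ : x₀ ∈ s) (hT : x₀ + T ∈ s) (ht : t ∈ Set.Icc 0 T) (i : ℕ) :
    HasDerivWithinAt (taylorRemainder F x₀ (i + 1))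
      (taylorRemainder (fun j ↦ F (j + 1)) x₀ i t) (Set.Icc 0 T) t := by
  have function_part :
      HasDerivWithinAt (fun t ↦ F 0 (x₀ + t)) (F 1 (x₀ + t)) (Set.Icc 0 T) t := by
    have hmaps : Set.MapsTo (fun t ↦ x₀ + t) (Set.Icc 0 T) s := fun _ ↦ add_mem_of_mem_Icc hx₀ hT
    have := (hF 0 k.succ_pos _ (hmaps ht)).comp t
      ((hasDerivAt_id' t).const_add x₀).hasDerivWithinAt hmaps
    exact this.congr_deriv (mul_one _)
  have polynomial_part :
      HasDerivAt (fun t ↦ ∑ l ∈ range (i + 1), taylorCoeff F l x₀ * t ^ l)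
        (∑ l ∈ range i, taylorCoeff (fun j ↦ F (j + 1)) l x₀ * t ^ l) t := by
    simp only [sum_range_succ', pow_zero]
    refine (HasDerivAt.fun_sum fun l _ ↦ ?_).add_const _
    refine ((hasDerivAt_pow (l + 1) t).const_mul (taylorCoeff F (l + 1) x₀)).congr_deriv ?_
    rw [← mul_assoc, taylorCoeff_succ_mul, Nat.add_sub_cancel]
  exact function_part.sub polynomial_part.hasDerivWithinAt

lemma IsDerivChain.abs_taylorRemainder_le (hF : IsDerivChain k F s) {B : ℝ}
    (hB : ∀ x ∈ s, |F k x| ≤ B) {x₀ t : ℝ} (hx₀ : x₀ ∈ s) (ht : 0 ≤ t) (hxt : x₀ + t ∈ s) :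
    |taylorRemainder F x₀ k t| ≤ B * t ^ k := by
  induction k generalizing F t with
  | zero => simpa [taylorRemainder] using hB _ hxt
  | succ k ih =>
    have hB_nonneg : 0 ≤ B := (abs_nonneg _).trans (hB x₀ hx₀)
    have deriv_le (u : ℝ) (hu : u ∈ Set.Icc 0 t) :
        ‖taylorRemainder (fun j ↦ F (j + 1)) x₀ k u‖ ≤ B * t ^ k :=
      (ih hF.tail hB hu.1 (add_mem_of_mem_Icc hx₀ hxt hu)).trans
        (mul_le_mul_of_nonneg_left (pow_le_pow_left₀ hu.1 hu.2 _) hB_nonneg)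
    have mean_value := Convex.norm_image_sub_le_of_norm_hasDerivWithin_le
      (fun u hu ↦ hF.hasDerivWithinAt_taylorRemainder hx₀ hxt hu k) deriv_le (convex_Icc 0 t)
      (Set.left_mem_Icc.2 ht) (Set.right_mem_Icc.2 ht)
    rwa [taylorRemainder_succ_zero, sub_zero, sub_zero, Real.norm_eq_abs, Real.norm_eq_abs,
      abs_of_nonneg ht, mul_assoc, ← pow_succ] at mean_value

lemma IsDerivChain.abs_taylorRemainder_sub_le (hF : IsDerivChain (k + 1) F s) {B : ℝ}
    (hB : ∀ x ∈ s, |F (k + 1) x| ≤ B) {x₀ T t u : ℝ} (hx₀ : x₀ ∈ s) (hT : x₀ + T ∈ s)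
    (ht : t ∈ Set.Icc 0 T) (hu : u ∈ Set.Icc 0 T) :
    |taylorRemainder F x₀ (k + 1) u - taylorRemainder F x₀ (k + 1) t| ≤ B * T ^ k * |u - t| := by
  have hB_nonneg : 0 ≤ B := (abs_nonneg _).trans (hB x₀ hx₀)
  refine Convex.norm_image_sub_le_of_norm_hasDerivWithin_le
    (fun v hv ↦ hF.hasDerivWithinAt_taylorRemainder hx₀ hT hv k) (fun v hv ↦ ?_)
    (convex_Icc 0 T) ht hu
  exact (hF.tail.abs_taylorRemainder_le hB hx₀ hv.1 (add_mem_of_mem_Icc hx₀ hT hv)).trans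
    (mul_le_mul_of_nonneg_left (pow_le_pow_left₀ hv.1 hv.2 _) hB_nonneg)

lemma IsDerivChain.exists_second_difference_eq {j : ℕ} (hF : IsDerivChain (j + 2) F s)
    {δ x y : ℝ} (hx : x ∈ s) (hxδ : x + δ ∈ s) (hy : y ∈ s) (hyδ : y + δ ∈ s) :
    ∃ c ∈ s, F j (y + δ) - F j y - (F j (x + δ) - F j x) = F (j + 2) c * δ * (y - x) := by
  set s' : Set ℝ := s ∩ (fun z ↦ z + δ) ⁻¹' s
  have : s'.OrdConnected := Set.OrdConnected.inter ‹_›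
    (Set.OrdConnected.preimage_mono ‹_› fun _ _ h ↦ by gcongr)
  have hasDeriv (z : ℝ) (hz : z ∈ s') :
      HasDerivWithinAt (fun z ↦ F j (z + δ) - F j z) (F (j + 1) (z + δ) - F (j + 1) z) s' z := by
    have shifted := ((hF j (by omega) _ hz.2).comp z
      ((hasDerivAt_id' z).add_const δ).hasDerivWithinAt (fun _ h ↦ h.2 : Set.MapsTo _ s' s))
    exact (shifted.congr_deriv (mul_one _)).sub ((hF j (by omega) z hz.1).mono fun _ h ↦ h.1)
  obtain ⟨c, hc, hslope⟩ := exists_sub_eq_mul_sub hasDeriv ⟨hx, hxδ⟩ ⟨hy, hyδ⟩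
  obtain ⟨c', hc', hslope'⟩ := exists_sub_eq_mul_sub (hF (j + 1) (by omega)) hc.1 hc.2
  exact ⟨c', hc', by rw [hslope, hslope', add_sub_cancel_left]⟩

end Taylor

/-! ### Coincidences among discretised Taylor coefficients -/

lemma card_collisions_le {G : Type*} [DecidableEq G] {P : Finset ℕ} {g : ℕ → G} {K : ℕ}
    (hK : ∀ x ∈ P, ∀ y ∈ P, g x = g y → y ≤ x + K) :
    #{q ∈ P ×ˢ P | g q.1 = g q.2} ≤
      #P + 2 * ∑ δ ∈ Icc 1 K, #{n ∈ P | n + δ ∈ P ∧ g (n + δ) = g n} := by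
  set E : Finset (ℕ × ℕ) := {q ∈ P ×ˢ P | q.1 < q.2 ∧ g q.1 = g q.2}
  have card_E_le : #E ≤ ∑ δ ∈ Icc 1 K, #{n ∈ P | n + δ ∈ P ∧ g (n + δ) = g n} := by
    rw [← card_sigma]
    refine card_le_card_of_injOn (fun q ↦ ⟨q.2 - q.1, q.1⟩) (fun q hq ↦ ?_) fun q hq q' hq' h ↦ ?_
    · obtain ⟨hmem, hlt, hg⟩ := mem_filter.1 hq
      obtain ⟨h1, h2⟩ := mem_product.1 hmem
      have := hK _ h1 _ h2 hg
      simp only [coe_sigma, Set.mem_sigma_iff, mem_coe, mem_Icc, mem_filter,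
        Nat.add_sub_cancel' hlt.le]
      exact ⟨by omega, h1, h2, hg.symm⟩
    · have hlt := (mem_filter.1 hq).2.1
      have hlt' := (mem_filter.1 hq').2.1
      simp only [Sigma.mk.injEq, heq_eq_eq] at h
      exact Prod.ext h.2 (by omega)
  have hsub : {q ∈ P ×ˢ P | g q.1 = g q.2} ⊆ P.diag ∪ (E ∪ E.image Prod.swap) := by
    rintro ⟨x, y⟩ hq
    have := lt_trichotomy x y
    simp only [E, mem_union, mem_diag, mem_image, mem_filter, mem_product, Prod.exists,
      Prod.swap_prod_mk, Prod.mk.injEq] at hq ⊢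
    grind
  calc #{q ∈ P ×ˢ P | g q.1 = g q.2} ≤ #P.diag + (#E + #(E.image Prod.swap)) :=
        (card_le_card hsub).trans ((card_union_le _ _).trans
          (Nat.add_le_add_left (card_union_le E _) _))
    _ ≤ #P + 2 * #E := by
        rw [diag_card, two_mul]
        exact Nat.add_le_add_left (Nat.add_le_add_left card_image_le _) _
    _ ≤ _ := by gcongr

/-- The Taylor coefficients of degree `1, …, d`, rounded down to multiples of `1 / M j` and then
reduced modulo `1`; the coordinate `z : ZMod (M j)` stands for `z / M j`. -/
noncomputable def discreteTaylor {d : ℕ} (M : Fin d → ℕ) (F : ℕ → ℝ → ℝ) (x : ℝ) :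
    ∀ j, ZMod (M j) :=
  fun j ↦ (⌊taylorCoeff F (j + 1) x * M j⌋ : ℤ)

lemma abs_sub_floor_mul_div_le (x : ℝ) {M : ℕ} (hM : 0 < M) :
    |x - ⌊x * M⌋ / M| ≤ 1 / M := by
  have hfract : x - ⌊x * M⌋ / M = Int.fract (x * M) / M := by
    rw [Int.fract, sub_div, mul_div_cancel_right₀ _ (Nat.cast_pos.2 hM).ne']
  rw [hfract, abs_div, Nat.abs_cast, abs_of_nonneg (Int.fract_nonneg _)]
  gcongr
  exact (Int.fract_lt_one _).le

lemma exists_int_of_floor_mul_eq {x y : ℝ} {M : ℕ} (hM : 0 < M)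
    (h : (⌊x * M⌋ : ZMod M) = (⌊y * M⌋ : ZMod M)) : ∃ z : ℤ, |x - y - z| < 1 / M := by
  obtain ⟨z, hz⟩ := (ZMod.intCast_eq_intCast_iff_dvd_sub _ _ _).1 h
  have hM' : (0 : ℝ) < M := Nat.cast_pos.2 hM
  have hz' : (⌊y * M⌋ : ℝ) - ⌊x * M⌋ = M * z := by exact_mod_cast hz
  have hfract : x - y - (-z : ℤ) = (Int.fract (x * M) - Int.fract (y * M)) / M := by
    rw [Int.fract, Int.fract, eq_div_iff hM'.ne']
    push_cast
    linarith
  refine ⟨-z, ?_⟩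
  rw [hfract, abs_div, Nat.abs_cast]
  gcongr
  exact Int.abs_sub_lt_one_of_floor_eq_floor (by rw [Int.floor_fract, Int.floor_fract])

lemma exists_int_of_discreteTaylor_eq {d : ℕ} {M : Fin d → ℕ} (hM : ∀ j, 0 < M j)
    {F : ℕ → ℝ → ℝ} {x y : ℝ} (h : discreteTaylor M F x = discreteTaylor M F y) (j : Fin d) :
    ∃ z : ℤ, |taylorCoeff F (j + 1) x - taylorCoeff F (j + 1) y - z| < 1 / M j :=
  exists_int_of_floor_mul_eq (hM j) (congrFun h j)

lemma sum_Icc_one_div_le {h : ℝ} (hh : 0 < h) (K : ℕ) {H : ℕ} (hH : 1 ≤ H) :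
    ∑ δ ∈ Icc 1 (K * H), (1 : ℝ) / δ ≤ (1 + (K : ℝ) ^ h / h) * (H : ℝ) ^ h := by
  have harmonic_eq : ((harmonic (K * H) : ℚ) : ℝ) = ∑ δ ∈ Icc 1 (K * H), (1 : ℝ) / δ := by
    rw [harmonic_eq_sum_Icc]
    push_cast
    simp only [one_div]
  calc ∑ δ ∈ Icc 1 (K * H), (1 : ℝ) / δ
      ≤ 1 + Real.log ((K * H : ℕ) : ℝ) := harmonic_eq ▸ harmonic_le_one_add_log (K * H)
    _ ≤ (H : ℝ) ^ h + ((K * H : ℕ) : ℝ) ^ h / h := by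
        gcongr
        · exact Real.one_le_rpow (Nat.one_le_cast.2 hH) hh.le
        · exact Real.log_le_rpow_div (Nat.cast_nonneg _) hh
    _ = (1 + (K : ℝ) ^ h / h) * (H : ℝ) ^ h := by
        rw [Nat.cast_mul, Real.mul_rpow (by positivity) (by positivity)]
        ring

section

variable {F : ℕ → ℝ → ℝ} {s : Set ℝ} [s.OrdConnected] {A lam : ℝ}

lemma IsDerivChain.mul_abs_sub_le_of_near_int {d : ℕ} (hF : IsDerivChain (d + 1) F s)
    (hbd : ∀ x ∈ s, |F (d + 1) x| ∈ Set.Icc lam (A * lam)) {x y η : ℝ} (hx : x ∈ s) (hy : y ∈ s)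
    (hxy : A * lam * |x - y| ≤ 1 / 2) (hη : η ≤ 1 / 2)
    (near : ∃ z : ℤ, |taylorCoeff F d x - taylorCoeff F d y - z| < η) :
    lam * |x - y| ≤ η * d.factorial := by
  obtain ⟨z, hz⟩ := near
  obtain ⟨c, hc, hslope⟩ := exists_sub_eq_mul_sub (hF d d.lt_succ_self) hy hx
  have abs_sub_eq :
      |taylorCoeff F d x - taylorCoeff F d y| = |F (d + 1) c| * |x - y| / d.factorial := by
    rw [taylorCoeff, taylorCoeff, ← sub_div, hslope, abs_div, abs_mul, Nat.abs_cast]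
  have abs_sub_le : |taylorCoeff F d x - taylorCoeff F d y| ≤ 1 / 2 := by
    rw [abs_sub_eq]
    refine (div_le_self (by positivity) (Nat.one_le_cast.2 d.factorial_pos)).trans (le_trans ?_ hxy)
    gcongr
    exact (hbd c hc).2
  have z_eq_zero : z = 0 := by
    have : |(z : ℝ)| < 1 := by
      have := abs_lt.1 hz
      have := abs_le.1 abs_sub_le
      exact abs_lt.2 ⟨by linarith, by linarith⟩
    exact Int.abs_lt_one_iff.1 (by exact_mod_cast this)
  rw [z_eq_zero, Int.cast_zero, sub_zero, abs_sub_eq, div_lt_iff₀ (by positivity)] at hz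
  refine le_trans ?_ hz.le
  gcongr
  exact (hbd c hc).1

lemma IsDerivChain.card_le_of_near_int {j : ℕ} (hF : IsDerivChain (j + 2) F s) (hA : 0 ≤ A)
    (hlam : 0 < lam) (hbd : ∀ x ∈ s, |F (j + 2) x| ∈ Set.Icc lam (A * lam)) {δ N η : ℝ}
    (hδ : 0 < δ) (hN : 0 ≤ N) (hη : 0 ≤ η) {Q : Finset ℕ}
    (hQ : ∀ x ∈ Q, (x : ℝ) ∈ s ∧ (x : ℝ) + δ ∈ s) (diam : ∀ x ∈ Q, ∀ y ∈ Q, |(x : ℝ) - y| ≤ N)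
    (near : ∀ x ∈ Q, ∃ z : ℤ, |taylorCoeff F j (x + δ) - taylorCoeff F j x - z| ≤ η) :
    (#Q : ℝ) ≤
      (2 * η / (lam * δ / j.factorial) + 1) * (A * lam * δ / j.factorial * N + 2 * η + 1) := by
  have second_difference {x y : ℕ} (hx : x ∈ Q) (hy : y ∈ Q) : ∃ c ∈ s,
      |taylorCoeff F j (x + δ) - taylorCoeff F j x - (taylorCoeff F j (y + δ) - taylorCoeff F j y)|
        = |F (j + 2) c| * δ / j.factorial * |(x : ℝ) - y| := by
    obtain ⟨c, hc, hdiff⟩ := hF.exists_second_difference_eq (hQ y hy).1 (hQ y hy).2 (hQ x hx).1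
      (hQ x hx).2
    refine ⟨c, hc, ?_⟩
    simp only [taylorCoeff]
    rw [← sub_div, ← sub_div, ← sub_div, hdiff, abs_div, Nat.abs_cast, abs_mul, abs_mul,
      abs_of_pos hδ, div_mul_eq_mul_div]
  refine card_le_of_forall_near_int (by positivity) (by positivity) hN hη (fun x hx y hy ↦ ?_)
    (fun x hx y hy ↦ ?_) diam near <;>
  · obtain ⟨c, hc, hdiff⟩ := second_difference hx hy
    have hbd_c := hbd c hc
    rw [hdiff]
    gcongr
    first | exact hbd_c.1 | exact hbd_c.2

variable {d H : ℕ} {M : Fin (d + 2) → ℕ}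

lemma IsDerivChain.le_add_of_discreteTaylor_eq (hF : IsDerivChain (d + 3) F s) (hlam : 0 < lam)
    (hbd : ∀ x ∈ s, |F (d + 3) x| ∈ Set.Icc lam (A * lam)) (hH : 1 ≤ H)
    (hM : ∀ j : Fin (d + 2), H ^ ((j : ℕ) + 1) < M j) (hlamH : 1 ≤ lam * (2 * H) ^ (d + 3))
    {x y : ℕ} (hx : (x : ℝ) ∈ s) (hy : (y : ℝ) ∈ s) (hxy : A * lam * |(x : ℝ) - y| ≤ 1 / 2)
    (heq : discreteTaylor M F x = discreteTaylor M F y) :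
    y ≤ x + (d + 2).factorial * 2 ^ (d + 3) * H := by
  have hM_pos (j) : 0 < M j := (Nat.zero_le _).trans_lt (hM j)
  set M₁ := M (Fin.last (d + 1))
  have hHM : H ^ (d + 2) < M₁ := hM (Fin.last (d + 1))
  have hM_two : (2 : ℝ) ≤ M₁ := by
    exact_mod_cast (Nat.one_le_pow _ _ hH).trans_lt hHM
  have hdist : lam * |(x : ℝ) - y| ≤ 1 / M₁ * (d + 2).factorial :=
    hF.mul_abs_sub_le_of_near_int hbd hx hy hxy (by gcongr)
      (exists_int_of_discreteTaylor_eq hM_pos heq (Fin.last (d + 1)))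
  have hinv : (1 : ℝ) / M₁ ≤ 1 / (H : ℝ) ^ (d + 2) := by
    gcongr
    exact_mod_cast hHM.le
  have hfactor : (1 : ℝ) / (H : ℝ) ^ (d + 2) ≤ lam * (2 ^ (d + 3) * H) := by
    rw [div_le_iff₀ (by positivity)]
    exact hlamH.trans_eq (by ring)
  have abs_sub_le : |(x : ℝ) - y| ≤ (d + 2).factorial * 2 ^ (d + 3) * H := by
    refine le_of_mul_le_mul_left ?_ hlam
    calc lam * |(x : ℝ) - y| ≤ lam * (2 ^ (d + 3) * H) * (d + 2).factorial :=
          hdist.trans (by gcongr; exact hinv.trans hfactor)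
      _ = _ := by ring
  have := (abs_le.1 abs_sub_le).1
  exact_mod_cast (by linarith : (y : ℝ) ≤ x + (d + 2).factorial * 2 ^ (d + 3) * H)

lemma IsDerivChain.card_shift_collisions_le (hF : IsDerivChain (d + 3) F s) (hA : 0 ≤ A)
    (hlam : 0 < lam) (hbd : ∀ x ∈ s, |F (d + 3) x| ∈ Set.Icc lam (A * lam)) (hH : 1 ≤ H)
    (hM : ∀ j : Fin (d + 2), H ^ ((j : ℕ) + 1) < M j) (hlamH : 1 ≤ lam * (2 * H) ^ (d + 3))
    {N : ℝ} (hN : 0 ≤ N) (hAN : A * lam * N ≤ 1 / 2) {P : Finset ℕ} (hP : ∀ x ∈ P, (x : ℝ) ∈ s)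
    (diam : ∀ x ∈ P, ∀ y ∈ P, |(x : ℝ) - y| ≤ N) {δ : ℕ} (hδ : 1 ≤ δ) :
    (#{n ∈ P | n + δ ∈ P ∧ discreteTaylor M F ((n + δ : ℕ) : ℝ) = discreteTaylor M F n} : ℝ) ≤
      2 * A * N / H + δ +
        3 * (2 * (d + 1).factorial * 2 ^ (d + 3) * (H : ℝ) ^ 2 * (1 / δ) + 1) := by
  have hM_pos (j) : 0 < M j := (Nat.zero_le _).trans_lt (hM j)
  have hδ_pos : (0 : ℝ) < δ := Nat.cast_pos.2 hδ
  have hH_one : (1 : ℝ) ≤ H := Nat.one_le_cast.2 hH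
  let i : Fin (d + 2) := ⟨d, by omega⟩
  set η : ℝ := 1 / M i
  have hη : η ≤ 1 / (H : ℝ) ^ (d + 1) :=
    one_div_le_one_div_of_le (by positivity) (by exact_mod_cast (hM i).le)
  have hη_inv : η ≤ 1 / H := hη.trans (by gcongr; exact le_self_pow₀ hH_one d.succ_ne_zero)
  have hη_one : η ≤ 1 := hη_inv.trans (div_le_self zero_le_one hH_one)
  have hη_lam : η ≤ lam * (2 ^ (d + 3) * (H : ℝ) ^ 2) := by
    refine hη.trans ?_
    rw [div_le_iff₀ (by positivity)]
    exact hlamH.trans_eq (by ring)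
  refine (hF.card_le_of_near_int hA hlam hbd hδ_pos hN (by positivity) (η := η) (fun x hx ↦ ?_)
    (fun x hx y hy ↦ diam x (mem_filter.1 hx).1 y (mem_filter.1 hy).1) fun x hx ↦ ?_).trans ?_
  · have hmem := (mem_filter.1 hx).2.1
    exact ⟨hP x (mem_filter.1 hx).1, by exact_mod_cast hP _ hmem⟩
  · obtain ⟨z, hz⟩ := exists_int_of_discreteTaylor_eq hM_pos (mem_filter.1 hx).2.2 i
    exact ⟨z, by exact_mod_cast hz.le⟩
  set φ : ℝ := ((d + 1).factorial : ℝ)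
  have hφ : 1 ≤ φ := Nat.one_le_cast.2 (Nat.factorial_pos _)
  have ratio_le : 2 * η / (lam * δ / φ) ≤ 2 * φ * 2 ^ (d + 3) * (H : ℝ) ^ 2 * (1 / δ) := by
    calc 2 * η / (lam * δ / φ) ≤ 2 * (lam * (2 ^ (d + 3) * (H : ℝ) ^ 2)) / (lam * δ / φ) := by
          gcongr
      _ = _ := by field_simp
  calc (2 * η / (lam * δ / φ) + 1) * (A * lam * δ / φ * N + 2 * η + 1)
      = 2 * A * N * η + A * lam * N * δ / φ + (2 * η + 1) * (2 * η / (lam * δ / φ) + 1) := by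
        field_simp
        ring
    _ ≤ 2 * A * N * (1 / H) + 1 * δ / 1 +
          (2 * 1 + 1) * (2 * φ * 2 ^ (d + 3) * (H : ℝ) ^ 2 * (1 / δ) + 1) := by
        gcongr
        linarith
    _ = _ := by ring

lemma IsDerivChain.sum_card_shift_collisions_le (hF : IsDerivChain (d + 3) F s) (hA : 0 ≤ A)
    (hlam : 0 < lam) (hbd : ∀ x ∈ s, |F (d + 3) x| ∈ Set.Icc lam (A * lam)) (hH : 1 ≤ H)
    (hM : ∀ j : Fin (d + 2), H ^ ((j : ℕ) + 1) < M j) (hlamH : 1 ≤ lam * (2 * H) ^ (d + 3))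
    {N : ℝ} (hN : 0 ≤ N) (hAN : A * lam * N ≤ 1 / 2) {P : Finset ℕ} (hP : ∀ x ∈ P, (x : ℝ) ∈ s)
    (diam : ∀ x ∈ P, ∀ y ∈ P, |(x : ℝ) - y| ≤ N) {h : ℝ} (hh : 0 < h) (K : ℕ) :
    ∑ δ ∈ Icc 1 (K * H),
      (#{n ∈ P | n + δ ∈ P ∧ discreteTaylor M F ((n + δ : ℕ) : ℝ) = discreteTaylor M F n} : ℝ) ≤
        2 * A * K * N + (K ^ 2 + 3 * K +
          6 * (d + 1).factorial * 2 ^ (d + 3) * (1 + K ^ h / h)) * (H : ℝ) ^ 2 * (H : ℝ) ^ h := by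
  have hH_one : (1 : ℝ) ≤ H := Nat.one_le_cast.2 hH
  have hHh : 1 ≤ (H : ℝ) ^ h := Real.one_le_rpow hH_one hh.le
  set c : ℝ := 2 * (d + 1).factorial * 2 ^ (d + 3)
  calc _ ≤ ∑ δ ∈ Icc 1 (K * H),
          (2 * A * N / H + K * H + 3 + 3 * c * (H : ℝ) ^ 2 * ((1 : ℝ) / δ)) := by
        refine sum_le_sum fun δ hδ ↦ ?_
        obtain ⟨hδ_one, hδ_le⟩ := mem_Icc.1 hδ
        have := hF.card_shift_collisions_le hA hlam hbd hH hM hlamH hN hAN hP diam hδ_one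
        have : (δ : ℝ) ≤ K * H := by exact_mod_cast hδ_le
        linarith
    _ = 2 * A * K * N + K ^ 2 * (H : ℝ) ^ 2 + 3 * K * H +
          3 * c * (H : ℝ) ^ 2 * ∑ δ ∈ Icc 1 (K * H), (1 : ℝ) / δ := by
        rw [sum_add_distrib, sum_const, Nat.card_Icc, Nat.add_sub_cancel, ← mul_sum,
          nsmul_eq_mul]
        push_cast
        field_simp
    _ ≤ 2 * A * K * N + K ^ 2 * (H : ℝ) ^ 2 * (H : ℝ) ^ h + 3 * K * (H : ℝ) ^ 2 * (H : ℝ) ^ h +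
          3 * c * (H : ℝ) ^ 2 * ((1 + (K : ℝ) ^ h / h) * (H : ℝ) ^ h) := by
        refine add_le_add (add_le_add (add_le_add_right ?_ _) ?_)
          (mul_le_mul_of_nonneg_left (sum_Icc_one_div_le hh K hH) (by positivity))
        · exact le_mul_of_one_le_right (by positivity) hHh
        · rw [mul_assoc (3 * (K : ℝ))]
          gcongr
          nlinarith
    _ = _ := by ring

lemma exists_card_discreteTaylor_collisions_le {d : ℕ} (hd : 2 ≤ d) {A h : ℝ} (hA : 0 ≤ A)
    (hh : 0 < h) :
    ∃ C : ℝ, 0 ≤ C ∧ ∀ {H : ℕ} {M : Fin d → ℕ} {F : ℕ → ℝ → ℝ} {s : Set ℝ} {lam N : ℝ}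
      {P : Finset ℕ} [s.OrdConnected], 1 ≤ H → (∀ j : Fin d, H ^ ((j : ℕ) + 1) < M j) →
      IsDerivChain (d + 1) F s → 0 < lam → (∀ x ∈ s, |F (d + 1) x| ∈ Set.Icc lam (A * lam)) →
      1 ≤ lam * (2 * H) ^ (d + 1) → 0 ≤ N → A * lam * N ≤ 1 / 2 → (∀ x ∈ P, (x : ℝ) ∈ s) →
      (∀ x ∈ P, ∀ y ∈ P, |(x : ℝ) - y| ≤ N) → (#P : ℝ) ≤ 2 * N →
      (#{q ∈ P ×ˢ P | discreteTaylor M F q.1 = discreteTaylor M F q.2} : ℝ) ≤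
        C * (N + (H : ℝ) ^ 2) * (H : ℝ) ^ h := by
  obtain ⟨d, rfl⟩ := Nat.exists_eq_add_of_le' hd
  set K : ℕ := (d + 2).factorial * 2 ^ (d + 3)
  set B : ℝ := 2 + 4 * A * K
  set B' : ℝ := K ^ 2 + 3 * K + 6 * (d + 1).factorial * 2 ^ (d + 3) * (1 + K ^ h / h)
  have : 0 ≤ B := by positivity
  have : 0 ≤ B' := by positivity
  refine ⟨B + 2 * B', by positivity, ?_⟩
  intro H M F s lam N P _ hH hM hF hlam hbd hlamH hN hAN hP diam hPN
  have hHh : 1 ≤ (H : ℝ) ^ h := Real.one_le_rpow (Nat.one_le_cast.2 hH) hh.le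
  have shift_le (x) (hx : x ∈ P) (y) (hy : y ∈ P)
      (heq : discreteTaylor M F x = discreteTaylor M F y) : y ≤ x + K * H :=
    hF.le_add_of_discreteTaylor_eq hlam hbd hH hM hlamH (hP x hx) (hP y hy)
      ((mul_le_mul_of_nonneg_left (diam x hx y hy) (by positivity)).trans hAN) heq
  have sum_shifts_le :=
    hF.sum_card_shift_collisions_le hA hlam hbd hH hM hlamH hN hAN hP diam hh K
  calc _ ≤ (#P : ℝ) + 2 * ∑ δ ∈ Icc 1 (K * H),
          (#{n ∈ P | n + δ ∈ P ∧
            discreteTaylor M F ((n + δ : ℕ) : ℝ) = discreteTaylor M F n} : ℝ) := by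
        exact_mod_cast card_collisions_le (g := fun n : ℕ ↦ discreteTaylor M F n) shift_le
    _ ≤ B * N + 2 * B' * (H : ℝ) ^ 2 * (H : ℝ) ^ h := by linarith
    _ ≤ (B * N * (H : ℝ) ^ h + 2 * B' * (H : ℝ) ^ 2 * (H : ℝ) ^ h) +
          (B * (H : ℝ) ^ 2 * (H : ℝ) ^ h + 2 * B' * N * (H : ℝ) ^ h) := by
        refine le_add_of_le_of_nonneg (add_le_add_left ?_ _) (by positivity)
        exact le_mul_of_one_le_right (by positivity) hHh
    _ = _ := by ring

end

/-! ### Summation by parts -/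

lemma eexp_eq_exp_I_mul (x : ℝ) : eexp x = Complex.exp (Complex.I * (2 * Real.pi * x : ℝ)) := by
  rw [eexp]
  congr 1
  push_cast
  ring

lemma norm_eexp (x : ℝ) : ‖eexp x‖ = 1 := by
  rw [eexp_eq_exp_I_mul, mul_comm, Complex.norm_exp_ofReal_mul_I]

lemma eexp_add (x y : ℝ) : eexp (x + y) = eexp x * eexp y := by
  rw [eexp, eexp, eexp, ← Complex.exp_add, Complex.ofReal_add, mul_add]

lemma eexp_sum {ι : Type*} (s : Finset ι) (f : ι → ℝ) :
    eexp (∑ i ∈ s, f i) = ∏ i ∈ s, eexp (f i) := by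
  simp only [eexp, Complex.ofReal_sum, mul_sum, Complex.exp_sum]

lemma norm_eexp_sub_le (x y : ℝ) : ‖eexp x - eexp y‖ ≤ 2 * Real.pi * |x - y| := by
  have factor : eexp x - eexp y = eexp y * (eexp (x - y) - 1) := by
    rw [mul_sub, ← eexp_add, mul_one, add_sub_cancel]
  rw [factor, norm_mul, norm_eexp, one_mul, eexp_eq_exp_I_mul]
  refine Real.norm_exp_I_mul_ofReal_sub_one_le.trans_eq ?_
  rw [Real.norm_eq_abs, abs_mul, abs_of_pos Real.two_pi_pos]

/-- The Taylor polynomial of `F 0` at `x` without constant term, its coefficient of degree `j + 1`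
rounded down to a multiple of `1 / M j`. -/
noncomputable def discretePhase {d : ℕ} (M : Fin d → ℕ) (F : ℕ → ℝ → ℝ) (x t : ℝ) : ℝ :=
  ∑ j : Fin d, (⌊taylorCoeff F (j + 1) x * M j⌋ / M j : ℝ) * t ^ ((j : ℕ) + 1)

lemma weylSum_discreteTaylor {d : ℕ} (M : Fin d → ℕ) [∀ j, NeZero (M j)] (F : ℕ → ℝ → ℝ) (x : ℝ)
    (u : ℕ) :
    weylSum M (Icc 1 (u : ℤ)) (discreteTaylor M F x) =
      ∑ i ∈ range u, eexp (discretePhase M F x (i + 1)) := by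
  have Icc_eq : Icc 1 (u : ℤ) = (range u).image fun i : ℕ ↦ (i : ℤ) + 1 := by
    ext z
    simp only [mem_Icc, mem_image, mem_range]
    exact ⟨fun h ↦ ⟨(z - 1).toNat, by omega⟩, by rintro ⟨i, hi, rfl⟩; omega⟩
  rw [weylSum, Icc_eq, sum_image fun _ _ _ _ h ↦ by simpa using h]
  refine sum_congr rfl fun i _ ↦ ?_
  rw [discretePhase, eexp_sum]
  refine prod_congr rfl fun j _ ↦ ?_
  rw [discreteTaylor, ← Int.cast_mul, ZMod.stdAddChar_coe, eexp]
  congr 1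
  push_cast
  ring

section

variable {d H : ℕ} {M : Fin d → ℕ} {F : ℕ → ℝ → ℝ} {s : Set ℝ}

lemma abs_sum_mul_pow_sub_pow_le {c : Fin d → ℝ} (hH : 1 ≤ H)
    (hc : ∀ j, |c j| ≤ 1 / (H : ℝ) ^ ((j : ℕ) + 1)) {t : ℝ} (ht : 0 ≤ t) (htH : t + 1 ≤ H) :
    |∑ j, c j * ((t + 1) ^ ((j : ℕ) + 1) - t ^ ((j : ℕ) + 1))| ≤ d ^ 2 / H := by
  have : (0 : ℝ) < H := Nat.cast_pos.2 hH
  have term_le (j : Fin d) : |c j * ((t + 1) ^ ((j : ℕ) + 1) - t ^ ((j : ℕ) + 1))| ≤ d / H := by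
    have hj : ((j + 1 : ℕ) : ℝ) ≤ d := Nat.cast_le.2 j.isLt
    have hmax : max |t + 1| |t| ≤ H := by
      rw [abs_of_nonneg ht, abs_of_nonneg (by linarith)]
      exact max_le htH (by linarith)
    have pow_sub_le := abs_pow_sub_pow_le (t + 1) t ((j : ℕ) + 1)
    rw [add_sub_cancel_left, abs_one, one_mul, Nat.add_sub_cancel] at pow_sub_le
    rw [abs_mul]
    calc _ ≤ 1 / (H : ℝ) ^ ((j : ℕ) + 1) * (d * (H : ℝ) ^ (j : ℕ)) := by
          gcongr
          · exact hc j
          · exact pow_sub_le.trans (by gcongr)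
      _ = d / H := by
          field_simp
          ring
  calc _ ≤ ∑ _j : Fin d, (d / H : ℝ) :=
        (abs_sum_le_sum_abs _ _).trans (sum_le_sum fun j _ ↦ term_le j)
    _ = _ := by
        rw [sum_const, card_univ, Fintype.card_fin, nsmul_eq_mul]
        ring

lemma sub_discretePhase_eq (M : Fin d → ℕ) (F : ℕ → ℝ → ℝ) (x t : ℝ) :
    F 0 (x + t) - discretePhase M F x t = taylorRemainder F x (d + 1) t + F 0 x +
      ∑ j : Fin d, (taylorCoeff F (j + 1) x - ⌊taylorCoeff F (j + 1) x * M j⌋ / M j) *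
        t ^ ((j : ℕ) + 1) := by
  simp only [taylorRemainder, discretePhase, sub_mul, sum_sub_distrib, sum_range_succ',
    sum_range fun j ↦ taylorCoeff F (j + 1) x * t ^ (j + 1)]
  simp only [taylorCoeff, Nat.factorial_zero, Nat.cast_one, div_one, pow_zero, mul_one]
  ring

variable [s.OrdConnected] {B : ℝ}

lemma IsDerivChain.abs_sub_discretePhase_sub_le (hF : IsDerivChain (d + 1) F s)
    (hH : 1 ≤ H) (hM : ∀ j : Fin d, H ^ ((j : ℕ) + 1) < M j) (hB : ∀ x ∈ s, |F (d + 1) x| ≤ B)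
    {x t : ℝ} (hx : x ∈ s) (hxH : x + H ∈ s) (ht : 0 ≤ t) (htH : t + 1 ≤ H) :
    |F 0 (x + (t + 1)) - discretePhase M F x (t + 1) - (F 0 (x + t) - discretePhase M F x t)| ≤
      B * (H : ℝ) ^ d + d ^ 2 / H := by
  set c : Fin d → ℝ := fun j ↦ taylorCoeff F (j + 1) x - ⌊taylorCoeff F (j + 1) x * M j⌋ / M j
  have hc (j : Fin d) : |c j| ≤ 1 / (H : ℝ) ^ ((j : ℕ) + 1) := by
    have hMj : (H : ℝ) ^ ((j : ℕ) + 1) ≤ M j := by exact_mod_cast (hM j).le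
    exact (abs_sub_floor_mul_div_le _ ((Nat.zero_le _).trans_lt (hM j))).trans (by gcongr)
  have remainder_le := hF.abs_taylorRemainder_sub_le hB hx hxH (t := t) (u := t + 1)
    ⟨ht, by linarith⟩ ⟨by linarith, htH⟩
  rw [add_sub_cancel_left, abs_one, mul_one] at remainder_le
  refine le_trans (le_of_eq ?_)
    ((abs_add_le _ _).trans (add_le_add remainder_le (abs_sum_mul_pow_sub_pow_le hH hc ht htH)))
  rw [sub_discretePhase_eq, sub_discretePhase_eq]
  simp only [c, mul_sub, sum_sub_distrib]
  ring_nf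

lemma IsDerivChain.norm_sum_eexp_le [∀ j, NeZero (M j)] (hF : IsDerivChain (d + 1) F s)
    (hH : 1 ≤ H) (hM : ∀ j : Fin d, H ^ ((j : ℕ) + 1) < M j) (hB : ∀ x ∈ s, |F (d + 1) x| ≤ B)
    {x : ℝ} (hx : x ∈ s) (hxH : x + H ∈ s) :
    ‖∑ i ∈ range H, eexp (F 0 (x + (i + 1)))‖ ≤
      ‖weylSum M (Icc 1 (H : ℤ)) (discreteTaylor M F x)‖ +
      ∑ i ∈ range (H - 1), 2 * Real.pi * (B * (H : ℝ) ^ d + d ^ 2 / H) *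
        ‖weylSum M (Icc 1 ((i + 1 : ℕ) : ℤ)) (discreteTaylor M F x)‖ := by
  have split (i : ℕ) : eexp (F 0 (x + (i + 1))) =
      eexp (F 0 (x + (i + 1)) - discretePhase M F x (i + 1)) •
        eexp (discretePhase M F x (i + 1)) := by
    rw [smul_eq_mul, ← eexp_add, sub_add_cancel]
  rw [sum_congr rfl fun i _ ↦ split i, sum_range_by_parts
    (fun i : ℕ ↦ eexp (F 0 (x + (i + 1)) - discretePhase M F x (i + 1)))]
  refine (norm_sub_le _ _).trans (add_le_add ?_ ((norm_sum_le _ _).trans ?_))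
  · rw [norm_smul, norm_eexp, one_mul, ← weylSum_discreteTaylor]
  · refine sum_le_sum fun i hi ↦ ?_
    have hi_le : i + 2 ≤ H := by
      have := mem_range.1 hi
      omega
    have hi_le' : (i : ℝ) + 2 ≤ H := by exact_mod_cast hi_le
    rw [norm_smul, ← weylSum_discreteTaylor]
    gcongr
    refine (norm_eexp_sub_le _ _).trans ?_
    gcongr
    rw [Nat.cast_succ]
    exact hF.abs_sub_discretePhase_sub_le hH hM hB hx hxH (by positivity) (by linarith)

end

/-! ### Short sums -/

lemma exists_sum_norm_weylSum_pow_le {d : ℕ} (hd : 2 ≤ d) {A h : ℝ} (hA : 0 ≤ A) (hh : 0 < h) :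
    ∃ C : ℝ, 0 ≤ C ∧ ∀ {H : ℕ}, 1 ≤ H → ∃ M : Fin d → ℕ, ∃ _ : ∀ j, NeZero (M j),
      (∀ j : Fin d, H ^ ((j : ℕ) + 1) < M j) ∧
      ∀ {F : ℕ → ℝ → ℝ} {s : Set ℝ} {lam N : ℝ} {P : Finset ℕ} [s.OrdConnected],
        IsDerivChain (d + 1) F s → 0 < lam → (∀ x ∈ s, |F (d + 1) x| ∈ Set.Icc lam (A * lam)) →
        1 ≤ lam * (2 * H) ^ (d + 1) → 1 ≤ N → A * lam * N ≤ 1 / 2 → (∀ x ∈ P, (x : ℝ) ∈ s) →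
        (∀ x ∈ P, ∀ y ∈ P, |(x : ℝ) - y| ≤ N) → ∀ u ≤ H,
        (∑ x ∈ P, ‖weylSum M (Icc 1 (u : ℤ)) (discreteTaylor M F x)‖) ^ (2 * triangular d) ≤
          C * (H * N) ^ (2 * triangular d) * ((H : ℝ) ^ h * (1 / N + (H / N) ^ 2)) := by
  obtain ⟨C₁, hC₁, collisions⟩ := exists_card_discreteTaylor_collisions_le hd hA (half_pos hh)
  obtain ⟨C₂, hC₂, mean_value⟩ :=
    exists_vinogradov_mean_value (one_le_two.trans hd) (half_pos hh)
  have hr : 1 ≤ triangular d := triangular_pos (one_le_two.trans hd)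
  set r := triangular d
  refine ⟨2 ^ (2 * r) * C₁ * C₂, by positivity, fun {H} hH ↦ ?_⟩
  obtain ⟨M, hM_ne, hM, mean_value⟩ := mean_value H hH
  refine ⟨M, hM_ne, hM, ?_⟩
  intro F s lam N P _ hF hlam hbd hlamH hN hAN hP diam u hu
  have hN_pos : 0 < N := one_pos.trans_le hN
  have hPN : (#P : ℝ) ≤ 2 * N :=
    (card_le_of_forall_natCast_sub_le hN_pos.le fun x hx y hy ↦
      (le_abs_self _).trans (diam x hx y hy)).trans (by linarith)
  calc _ ≤ (#P : ℝ) ^ (2 * r - 2) *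
          #{q ∈ P ×ˢ P | discreteTaylor M F q.1 = discreteTaylor M F q.2} *
            ∑ g, ‖weylSum M (Icc 1 (u : ℤ)) g‖ ^ (2 * r) :=
        sum_comp_pow_le P (fun x : ℕ ↦ discreteTaylor M F x) (fun _ ↦ norm_nonneg _) hr
    _ ≤ (2 * N) ^ (2 * r - 2) * (C₁ * (N + (H : ℝ) ^ 2) * (H : ℝ) ^ (h / 2)) *
          (C₂ * (H : ℝ) ^ (h / 2) * (H : ℝ) ^ (2 * r)) := by
        gcongr
        · exact collisions hH hM hF hlam hbd hlamH hN_pos.le hAN hP diam hPN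
        · exact mean_value u hu
    _ ≤ (2 ^ (2 * r) * N ^ (2 * r - 2)) * (C₁ * (N + (H : ℝ) ^ 2) * (H : ℝ) ^ (h / 2)) *
          (C₂ * (H : ℝ) ^ (h / 2) * (H : ℝ) ^ (2 * r)) := by
        rw [mul_pow]
        gcongr
        · exact one_le_two
        · exact Nat.sub_le _ _
    _ = _ := by
        have hN_split : N ^ (2 * r) = N ^ (2 * r - 2) * N ^ 2 := by
          rw [← pow_add, Nat.sub_add_cancel (by omega)]
        have hH_split : (H : ℝ) ^ h = (H : ℝ) ^ (h / 2) * (H : ℝ) ^ (h / 2) := by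
          rw [← Real.rpow_add (Nat.cast_pos.2 hH), add_halves]
        rw [mul_pow, hN_split, hH_split]
        field_simp

lemma IsDerivChain.sum_norm_sum_eexp_le {d H : ℕ} {M : Fin d → ℕ} [∀ j, NeZero (M j)]
    {F : ℕ → ℝ → ℝ} {s : Set ℝ} [s.OrdConnected] {A lam T : ℝ} {P : Finset ℕ}
    (hF : IsDerivChain (d + 1) F s) (hH : 1 ≤ H) (hM : ∀ j : Fin d, H ^ ((j : ℕ) + 1) < M j)
    (hA : 0 ≤ A) (hbd : ∀ x ∈ s, |F (d + 1) x| ≤ A * lam) (hlamH : lam * (H : ℝ) ^ (d + 1) ≤ 1)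
    (hP : ∀ x ∈ P, (x : ℝ) ∈ s ∧ (x : ℝ) + H ∈ s)
    (hT : ∀ u ≤ H, ∑ x ∈ P, ‖weylSum M (Icc 1 (u : ℤ)) (discreteTaylor M F x)‖ ≤ T) :
    ∑ x ∈ P, ‖∑ i ∈ range H, eexp (F 0 (x + (i + 1)))‖ ≤
      (1 + 2 * Real.pi * (A + d ^ 2)) * T := by
  have hT_nonneg : 0 ≤ T := (sum_nonneg fun _ _ ↦ norm_nonneg _).trans (hT H le_rfl)
  set c : ℝ := 2 * Real.pi * (A + d ^ 2)
  have hH_pos : (0 : ℝ) < H := Nat.cast_pos.2 hH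
  have slope_le : 2 * Real.pi * (A * lam * (H : ℝ) ^ d + d ^ 2 / H) ≤ c / H := by
    rw [le_div_iff₀ hH_pos]
    calc _ = 2 * Real.pi * (A * (lam * (H : ℝ) ^ (d + 1)) + d ^ 2) := by
          field_simp
          ring
      _ ≤ 2 * Real.pi * (A * 1 + d ^ 2) := by gcongr
      _ = c := by rw [mul_one]
  calc _ ≤ ∑ x ∈ P, (‖weylSum M (Icc 1 (H : ℤ)) (discreteTaylor M F x)‖ +
          ∑ i ∈ range (H - 1),
            c / H * ‖weylSum M (Icc 1 ((i + 1 : ℕ) : ℤ)) (discreteTaylor M F x)‖) := by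
        refine sum_le_sum fun x hx ↦
          (hF.norm_sum_eexp_le hH hM hbd (hP x hx).1 (hP x hx).2).trans ?_
        gcongr
    _ ≤ T + ∑ _i ∈ range (H - 1), c / H * T := by
        rw [sum_add_distrib, sum_comm]
        refine add_le_add (hT H le_rfl) (sum_le_sum fun i hi ↦ ?_)
        rw [← mul_sum]
        exact mul_le_mul_of_nonneg_left
          (hT _ (by have := mem_range.1 hi; omega)) (by positivity)
    _ ≤ T + H * (c / H * T) := by
        rw [sum_const, card_range, nsmul_eq_mul]
        gcongr
        exact Nat.sub_le _ _
    _ = (1 + c) * T := by field_simp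

lemma exists_sum_norm_sum_eexp_le_of_diam_le {d : ℕ} (hd : 2 ≤ d) {A h : ℝ} (hA : 0 ≤ A)
    (hh : 0 < h) :
    ∃ C : ℝ, 0 ≤ C ∧ ∀ {H : ℕ} {F : ℕ → ℝ → ℝ} {s : Set ℝ} {lam N : ℝ} {P : Finset ℕ}
      [s.OrdConnected], 1 ≤ H → IsDerivChain (d + 1) F s → 0 < lam →
      (∀ x ∈ s, |F (d + 1) x| ∈ Set.Icc lam (A * lam)) → 1 ≤ lam * (2 * H) ^ (d + 1) →
      lam * (H : ℝ) ^ (d + 1) ≤ 1 → 1 ≤ N → A * lam * N ≤ 1 / 2 →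
      (∀ x ∈ P, (x : ℝ) ∈ s ∧ (x : ℝ) + H ∈ s) → (∀ x ∈ P, ∀ y ∈ P, |(x : ℝ) - y| ≤ N) →
      ∑ x ∈ P, ‖∑ i ∈ range H, eexp (F 0 (x + (i + 1)))‖ ≤
        C * (H * N) * ((H : ℝ) ^ h * (1 / N + (H / N) ^ 2)) ^ ((2 * triangular d : ℕ) : ℝ)⁻¹ := by
  obtain ⟨K, hK, weylSum_le⟩ := exists_sum_norm_weylSum_pow_le hd hA hh
  have hr : 2 * triangular d ≠ 0 := (mul_pos two_pos (triangular_pos (one_le_two.trans hd))).ne'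
  set r := 2 * triangular d
  set c : ℝ := 2 * Real.pi * (A + d ^ 2)
  refine ⟨(1 + c) * K ^ (r : ℝ)⁻¹, by positivity, ?_⟩
  intro H F s lam N P _ hH hF hlam hbd hlamH hlamH' hN hAN hP diam
  obtain ⟨M, _, hM, weylSum_le⟩ := weylSum_le hH
  set Y : ℝ := (H : ℝ) ^ h * (1 / N + (H / N) ^ 2)
  have hY : 0 ≤ Y := by positivity
  set T : ℝ := K ^ (r : ℝ)⁻¹ * (H * N) * Y ^ (r : ℝ)⁻¹
  have hT : 0 ≤ T := by positivity
  have T_pow : T ^ r = K * (H * N) ^ r * Y := by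
    simp only [T, mul_pow, Real.rpow_inv_natCast_pow hK hr, Real.rpow_inv_natCast_pow hY hr]
  calc _ ≤ (1 + c) * T := by
        refine hF.sum_norm_sum_eexp_le hH hM hA (fun y hy ↦ (hbd y hy).2) hlamH' hP fun u hu ↦ ?_
        exact le_of_pow_le_pow_left₀ hr hT ((weylSum_le hF hlam hbd hlamH hN hAN
          (fun x hx ↦ (hP x hx).1) diam u hu).trans_eq T_pow.symm)
    _ = _ := by ring

lemma sum_le_of_forall_diam_le {P : Finset ℕ} {w : ℕ → ℝ} {a b N S : ℝ} (hab : a ≤ b) (hN : 0 < N)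
    (hP : ∀ x ∈ P, (x : ℝ) ∈ Set.Icc a b)
    (hS : ∀ Q ⊆ P, (∀ x ∈ Q, ∀ y ∈ Q, |(x : ℝ) - y| ≤ N) → ∑ x ∈ Q, w x ≤ S) :
    ∑ x ∈ P, w x ≤ ((b - a) / N + 1) * S := by
  have hS_nonneg : 0 ≤ S := by simpa using hS ∅ (empty_subset P)
  set index : ℕ → ℕ := fun x ↦ ⌊((x : ℝ) - a) / N⌋₊
  have index_mem (x) (hx : x ∈ P) : index x ∈ range (⌊(b - a) / N⌋₊ + 1) := by
    have := (hP x hx).2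
    exact mem_range.2 (Nat.lt_succ_of_le (Nat.floor_le_floor (by gcongr)))
  have piece_le (i : ℕ) : ∑ x ∈ P with index x = i, w x ≤ S := by
    have window {x : ℕ} (hx : x ∈ P.filter (index · = i)) :
        (x : ℝ) - a ∈ Set.Icc (i * N) ((i + 1) * N) := by
      obtain ⟨hxP, rfl⟩ := mem_filter.1 hx
      have quot_nonneg : 0 ≤ ((x : ℝ) - a) / N :=
        div_nonneg (sub_nonneg.2 (hP x hxP).1) hN.le
      exact ⟨(le_div_iff₀ hN).1 (Nat.floor_le quot_nonneg),
        (div_le_iff₀ hN).1 (Nat.lt_floor_add_one _).le⟩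
    refine hS _ (filter_subset _ _) fun x hx y hy ↦ abs_le.2 ?_
    obtain ⟨hx_ge, hx_le⟩ := window hx
    obtain ⟨hy_ge, hy_le⟩ := window hy
    constructor <;> linarith
  rw [← sum_fiberwise_of_maps_to index_mem]
  calc _ ≤ ∑ _i ∈ range (⌊(b - a) / N⌋₊ + 1), S := sum_le_sum fun i _ ↦ piece_le i
    _ = (⌊(b - a) / N⌋₊ + 1) * S := by rw [sum_const, card_range, nsmul_eq_mul, Nat.cast_succ]
    _ ≤ _ := by
        gcongr
        exact Nat.floor_le (div_nonneg (sub_nonneg.2 hab) hN.le)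

lemma one_div_min_add_sq_le {A a lam H : ℝ} (hA : 0 < A) (ha : 0 < a) (hlam : 0 < lam)
    (hH : lam * H ^ 2 ≤ 1) :
    1 / min a (1 / (2 * (A * lam))) + (H / min a (1 / (2 * (A * lam)))) ^ 2 ≤
      (2 * A + 4 * A ^ 2 + 1) * (lam + 1 / a + (H / a) ^ 2) := by
  have lam_le : lam ≤ lam + 1 / a + (H / a) ^ 2 := by
    rw [add_assoc]
    exact le_add_of_nonneg_right (by positivity)
  set Z := lam + 1 / a + (H / a) ^ 2
  have hZ : 0 ≤ (2 * A + 4 * A ^ 2) * Z := by positivity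
  obtain hmin | hmin := min_choice a (1 / (2 * (A * lam))) <;> rw [hmin]
  · linarith
  · calc _ = 2 * A * lam + 4 * A ^ 2 * lam * (lam * H ^ 2) := by
          field_simp
          ring
      _ ≤ 2 * A * lam + 4 * A ^ 2 * lam * 1 := by gcongr
      _ = (2 * A + 4 * A ^ 2) * lam := by ring
      _ ≤ (2 * A + 4 * A ^ 2) * Z := by gcongr
      _ ≤ (2 * A + 4 * A ^ 2 + 1) * Z := by linarith [hlam.le.trans lam_le]

lemma exists_sum_norm_sum_eexp_le {d : ℕ} (hd : 2 ≤ d) {A h : ℝ} (hA : 0 < A) (hh : 0 < h) :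
    ∃ C : ℝ, 0 ≤ C ∧ ∀ {H : ℕ} {F : ℕ → ℝ → ℝ} {a b lam : ℝ} {P : Finset ℕ}, 1 ≤ H → 1 ≤ a →
      a ≤ b → b ≤ 2 * a → (H : ℝ) ≤ a → IsDerivChain (d + 1) F (Set.Icc a b) → 0 < lam →
      (∀ x ∈ Set.Icc a b, |F (d + 1) x| ∈ Set.Icc lam (A * lam)) → A * lam ≤ 1 / 2 →
      1 ≤ lam * (2 * H) ^ (d + 1) → lam * (H : ℝ) ^ (d + 1) ≤ 1 →
      (∀ x ∈ P, (x : ℝ) ∈ Set.Icc a b ∧ (x : ℝ) + H ∈ Set.Icc a b) →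
      ∑ x ∈ P, ‖∑ i ∈ range H, eexp (F 0 (x + (i + 1)))‖ ≤
        C * (H * a) * (a ^ h * (lam + 1 / a + (H / a) ^ 2)) ^ ((2 * triangular d : ℕ) : ℝ)⁻¹ := by
  obtain ⟨C, hC, short_le⟩ := exists_sum_norm_sum_eexp_le_of_diam_le hd hA.le hh
  set θ : ℝ := ((2 * triangular d : ℕ) : ℝ)⁻¹
  set K : ℝ := 2 * A + 4 * A ^ 2 + 1
  refine ⟨2 * C * K ^ θ, by positivity, ?_⟩
  intro H F a b lam P hH ha hab hb hHa hF hlam hbd hAlam hlamH hlamH' hP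
  have hH_one : (1 : ℝ) ≤ H := Nat.one_le_cast.2 hH
  set N : ℝ := min a (1 / (2 * (A * lam)))
  have hN : 1 ≤ N := le_min ha ((one_le_div (by positivity)).2 (by linarith))
  have hNa : N ≤ a := min_le_left _ _
  have hAN : A * lam * N ≤ 1 / 2 := by
    have := (le_div_iff₀ (by positivity)).1 (min_le_right a (1 / (2 * (A * lam))))
    linarith
  have balance : 1 / N + (H / N) ^ 2 ≤ K * (lam + 1 / a + (H / a) ^ 2) := by
    refine one_div_min_add_sq_le hA (by positivity) hlam (le_trans ?_ hlamH')
    gcongr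
    omega
  refine (sum_le_of_forall_diam_le hab (by positivity) (fun x hx ↦ (hP x hx).1) fun Q hQ diam ↦
    short_le hH hF hlam hbd hlamH hlamH' hN hAN (fun x hx ↦ hP x (hQ hx)) diam).trans ?_
  have pieces_le : (b - a) / N + 1 ≤ 2 * (a / N) := by
    have : (b - a) / N ≤ a / N := by
      gcongr
      linarith
    have : 1 ≤ a / N := (one_le_div (by positivity)).2 hNa
    linarith
  calc _ ≤ 2 * (a / N) *
          (C * (H * N) * (a ^ h * (K * (lam + 1 / a + (H / a) ^ 2))) ^ θ) := by
        gcongr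
    _ = 2 * (a / N) *
          (C * (H * N) * (K ^ θ * (a ^ h * (lam + 1 / a + (H / a) ^ 2)) ^ θ)) := by
        rw [mul_left_comm _ K, Real.mul_rpow (by positivity) (by positivity)]
    _ = _ := by
        field_simp

/-! ### The `k`-th derivative estimate -/

lemma norm_sum_le_card {ι : Type*} {g : ι → ℂ} (hg : ∀ n, ‖g n‖ ≤ 1) (s : Finset ι) :
    ‖∑ n ∈ s, g n‖ ≤ #s := by
  simpa using norm_sum_le_of_le s fun n _ ↦ hg n

lemma norm_sum_Ioc_floor_le {g : ℕ → ℂ} (hg : ∀ n, ‖g n‖ ≤ 1) {a b : ℝ} (hb : 0 ≤ b)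
    (hab : a ≤ b) : ‖∑ n ∈ Ioc ⌊a⌋₊ ⌊b⌋₊, g n‖ ≤ b - a + 1 := by
  refine (norm_sum_le_card hg _).trans ?_
  rw [Nat.card_Ioc, Nat.cast_sub (Nat.floor_le_floor hab)]
  linarith [Nat.floor_le hb, Nat.lt_floor_add_one a]

lemma norm_sum_Ioc_sub_sum_shift_le {g : ℕ → ℂ} (hg : ∀ n, ‖g n‖ ≤ 1) (A B : ℕ) {H j : ℕ}
    (hj : j ≤ H) : ‖∑ n ∈ Ioc A B, g n - ∑ x ∈ Ioc A (B - H), g (x + j)‖ ≤ H := by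
  obtain hBA | hAB := lt_or_ge B (A + H)
  · rw [Ioc_eq_empty_of_le (a := A) (b := B - H) (by omega), sum_empty, sub_zero]
    refine (norm_sum_le_card hg _).trans ?_
    rw [Nat.card_Ioc]
    exact_mod_cast (by omega : B - A ≤ H)
  · have shift_subset : (Ioc A (B - H)).map (addRightEmbedding j) ⊆ Ioc A B := by
      rw [map_add_right_Ioc]
      exact Ioc_subset_Ioc (by omega) (by omega)
    have sum_shift : ∑ x ∈ Ioc A (B - H), g (x + j) =
        ∑ n ∈ (Ioc A (B - H)).map (addRightEmbedding j), g n := by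
      simp only [sum_map, addRightEmbedding_apply]
    rw [sum_shift, ← sum_sdiff shift_subset, add_sub_cancel_right]
    refine (norm_sum_le_card hg _).trans ?_
    rw [card_sdiff_of_subset shift_subset, card_map, Nat.card_Ioc, Nat.card_Ioc]
    exact_mod_cast (by omega : B - A - (B - H - A) ≤ H)

lemma mul_norm_sum_Ioc_le {g : ℕ → ℂ} (hg : ∀ n, ‖g n‖ ≤ 1) (A B H : ℕ) :
    H * ‖∑ n ∈ Ioc A B, g n‖ ≤
      H * H + ∑ x ∈ Ioc A (B - H), ‖∑ i ∈ range H, g (x + (i + 1))‖ := by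
  have average : (H : ℂ) * ∑ n ∈ Ioc A B, g n =
      ∑ i ∈ range H, (∑ n ∈ Ioc A B, g n - ∑ x ∈ Ioc A (B - H), g (x + (i + 1))) +
        ∑ x ∈ Ioc A (B - H), ∑ i ∈ range H, g (x + (i + 1)) := by
    rw [sum_sub_distrib, sum_comm (s := Ioc A (B - H)), sub_add_cancel, sum_const, card_range,
      nsmul_eq_mul]
  calc _ = ‖(H : ℂ) * ∑ n ∈ Ioc A B, g n‖ := by rw [norm_mul, Complex.norm_natCast]
    _ ≤ ∑ _i ∈ range H, (H : ℝ) +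
          ∑ x ∈ Ioc A (B - H), ‖∑ i ∈ range H, g (x + (i + 1))‖ := by
        rw [average]
        exact norm_add_le_of_le
          (norm_sum_le_of_le _ fun i hi ↦ norm_sum_Ioc_sub_sum_shift_le hg A B (mem_range.1 hi))
          (norm_sum_le _ _)
    _ = _ := by rw [sum_const, card_range, nsmul_eq_mul]

lemma isDerivChain_iteratedDerivWithin {k : ℕ} {f : ℝ → ℝ} {s : Set ℝ} (hs : UniqueDiffOn ℝ s)
    (hf : ContDiffOn ℝ k f s) : IsDerivChain k (fun j ↦ iteratedDerivWithin j f s) s := by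
  intro j hj x hx
  have := hf.differentiableOn_iteratedDerivWithin (by exact_mod_cast hj) hs x hx
  simpa only [iteratedDerivWithin_succ] using this.hasDerivWithinAt

/-- The factor by which the `k`-th derivative estimate improves on the trivial bound `a`, up to
`a ^ ε`. -/
noncomputable def saving (k : ℕ) (a lam : ℝ) : ℝ :=
  lam ^ ((1 : ℝ) / ((k : ℝ) * ((k : ℝ) - 1))) +
    a ^ (-(1 : ℝ) / ((k : ℝ) * ((k : ℝ) - 1))) +
    a ^ (-(2 : ℝ) / ((k : ℝ) * ((k : ℝ) - 1))) *
      lam ^ (-(2 : ℝ) / ((k : ℝ) ^ 2 * ((k : ℝ) - 1)))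

section Saving

variable {d : ℕ} {a lam : ℝ}

lemma saving_succ (hd : 1 ≤ d) (ha : 0 < a) (hlam : 0 < lam) :
    saving (d + 1) a lam = lam ^ ((2 * triangular d : ℕ) : ℝ)⁻¹ +
      (1 / a) ^ ((2 * triangular d : ℕ) : ℝ)⁻¹ +
      ((lam ^ (-((d + 1 : ℕ) : ℝ)⁻¹) / a) ^ 2) ^ ((2 * triangular d : ℕ) : ℝ)⁻¹ := by
  have : (0 : ℝ) < d := Nat.cast_pos.2 hd
  have hk : ((d + 1 : ℕ) : ℝ) - 1 = d := by rw [Nat.cast_succ, add_sub_cancel_right]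
  have hθ : (1 : ℝ) / ((d + 1 : ℕ) * d) = ((d * (d + 1) : ℕ) : ℝ)⁻¹ := by
    rw [one_div, Nat.cast_mul, mul_comm]
  rw [saving, hk, two_mul_triangular, neg_div, hθ, Real.rpow_neg ha.le, one_div,
    Real.inv_rpow ha.le]
  congr 1
  rw [← Real.rpow_natCast (_ / a) 2, ← Real.rpow_mul (by positivity),
    Real.div_rpow (by positivity) ha.le, ← Real.rpow_mul hlam.le,
    div_eq_mul_inv (lam ^ _) (a ^ _), ← Real.rpow_neg ha.le, mul_comm]
  congr 2 <;> push_cast <;> field_simp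

lemma inv_two_mul_triangular_le (hd : 1 ≤ d) : ((2 * triangular d : ℕ) : ℝ)⁻¹ ≤ 1 / 2 := by
  rw [one_div]
  gcongr
  exact_mod_cast Nat.le_mul_of_pos_right 2 (triangular_pos hd)

lemma rpow_le_saving (hd : 1 ≤ d) (ha : 0 < a) (hlam : 0 < lam) :
    (lam + 1 / a + (lam ^ (-((d + 1 : ℕ) : ℝ)⁻¹) / a) ^ 2) ^ ((2 * triangular d : ℕ) : ℝ)⁻¹ ≤
      saving (d + 1) a lam := by
  have hθ : ((2 * triangular d : ℕ) : ℝ)⁻¹ ≤ 1 :=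
    (inv_two_mul_triangular_le hd).trans one_half_lt_one.le
  rw [saving_succ hd ha hlam]
  refine (Real.rpow_add_le_add_rpow (by positivity) (by positivity) (by positivity) hθ).trans ?_
  gcongr
  exact Real.rpow_add_le_add_rpow hlam.le (by positivity) (by positivity) hθ

lemma rpow_le_mul_saving (hd : 1 ≤ d) (ha : 0 < a) (hlam : 0 < lam)
    (hL : lam ^ (-((d + 1 : ℕ) : ℝ)⁻¹) ≤ a) :
    lam ^ (-((d + 1 : ℕ) : ℝ)⁻¹) ≤ a * saving (d + 1) a lam := by
  set q : ℝ := lam ^ (-((d + 1 : ℕ) : ℝ)⁻¹) / a with hq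
  have hq_pos : 0 < q := by positivity
  rw [← div_le_iff₀' ha, ← hq]
  calc q = (q ^ 2) ^ (1 / 2 : ℝ) := by rw [← Real.sqrt_eq_rpow, Real.sqrt_sq hq_pos.le]
    _ ≤ (q ^ 2) ^ ((2 * triangular d : ℕ) : ℝ)⁻¹ :=
        Real.rpow_le_rpow_of_exponent_ge (by positivity)
          (pow_le_one₀ hq_pos.le ((div_le_one ha).2 hL)) (inv_two_mul_triangular_le hd)
    _ ≤ _ := by
        rw [saving_succ hd ha hlam]
        exact le_add_of_nonneg_left (by positivity)

lemma one_le_mul_saving {A : ℝ} (hd : 1 ≤ d) (ha : 0 < a) (hlam : 0 < lam) (hA : 1 ≤ A)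
    (h : A * lam ≤ 1 / 2 → a < lam ^ (-((d + 1 : ℕ) : ℝ)⁻¹)) :
    1 ≤ 2 * A * saving (d + 1) a lam := by
  set θ : ℝ := ((2 * triangular d : ℕ) : ℝ)⁻¹
  have hθ : 0 ≤ θ := by positivity
  rw [saving_succ hd ha hlam]
  obtain hAlam | hAlam := le_or_gt (A * lam) (1 / 2)
  · have : 1 ≤ ((lam ^ (-((d + 1 : ℕ) : ℝ)⁻¹) / a) ^ 2) ^ θ :=
      Real.one_le_rpow (one_le_pow₀ ((one_le_div ha).2 (h hAlam).le)) hθ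
    refine one_le_mul_of_one_le_of_one_le (by linarith) (this.trans ?_)
    exact le_add_of_nonneg_left (by positivity)
  · have hθ_one : θ ≤ 1 := (inv_two_mul_triangular_le hd).trans one_half_lt_one.le
    calc 1 ≤ (2 * A * lam) ^ θ := Real.one_le_rpow (by linarith) hθ
      _ = (2 * A) ^ θ * lam ^ θ := Real.mul_rpow (by positivity) hlam.le
      _ ≤ 2 * A * lam ^ θ := by
          gcongr
          exact Real.rpow_le_self_of_one_le (by linarith) hθ_one
      _ ≤ _ := by
          rw [add_assoc]
          gcongr
          exact le_add_of_nonneg_right (by positivity)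

lemma norm_sum_eexp_le_mul_saving (f : ℕ → ℝ) {A b : ℝ} (hd : 1 ≤ d) (ha : 1 ≤ a) (hab : a ≤ b)
    (hb : b ≤ 2 * a) (hlam : 0 < lam) (hA : 1 ≤ A)
    (h : A * lam ≤ 1 / 2 → a < lam ^ (-((d + 1 : ℕ) : ℝ)⁻¹)) :
    ‖∑ n ∈ Ioc ⌊a⌋₊ ⌊b⌋₊, eexp (f n)‖ ≤ 4 * A * a * saving (d + 1) a lam := by
  have ha_pos : 0 < a := one_pos.trans_le ha
  calc _ ≤ b - a + 1 := norm_sum_Ioc_floor_le (fun n ↦ (norm_eexp _).le) (by linarith) hab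
    _ ≤ 2 * a * 1 := by linarith
    _ ≤ 2 * a * (2 * A * saving (d + 1) a lam) := by
        gcongr
        exact one_le_mul_saving hd ha_pos hlam hA h
    _ = _ := by ring

end Saving

lemma exists_nat_mul_pow_near_one {k : ℕ} (hk : k ≠ 0) {lam : ℝ} (hlam : 0 < lam)
    (hlam_one : lam ≤ 1) :
    ∃ H : ℕ, 1 ≤ H ∧ (H : ℝ) ≤ lam ^ (-(k : ℝ)⁻¹) ∧ lam * (H : ℝ) ^ k ≤ 1 ∧
      1 ≤ lam * (2 * H) ^ k := by
  have hL_pow : lam * (lam ^ (-(k : ℝ)⁻¹)) ^ k = 1 := by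
    rw [Real.rpow_neg hlam.le, inv_pow, Real.rpow_inv_natCast_pow hlam.le hk,
      mul_inv_cancel₀ hlam.ne']
  set L : ℝ := lam ^ (-(k : ℝ)⁻¹)
  have hL : 1 ≤ L := Real.one_le_rpow_of_pos_of_le_one_of_nonpos hlam hlam_one (by simp)
  have hL_ge : (⌊L⌋₊ : ℝ) ≤ L := Nat.floor_le (by positivity)
  have hL_le : L ≤ 2 * ⌊L⌋₊ := by
    have : (1 : ℝ) ≤ ⌊L⌋₊ := Nat.one_le_cast.2 (Nat.floor_pos.2 hL)
    linarith [Nat.lt_floor_add_one L]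
  refine ⟨⌊L⌋₊, Nat.floor_pos.2 hL, hL_ge, ?_, ?_⟩ <;> rw [← hL_pow] <;> gcongr

lemma exists_norm_sum_eexp_le_of_pow_near_one {d : ℕ} (hd : 2 ≤ d) {A h : ℝ} (hA : 0 < A)
    (hh : 0 < h) :
    ∃ C : ℝ, 0 ≤ C ∧ ∀ {H : ℕ} {F : ℕ → ℝ → ℝ} {a b lam : ℝ}, 1 ≤ H → 1 ≤ a → a ≤ b →
      b ≤ 2 * a → (H : ℝ) ≤ a → IsDerivChain (d + 1) F (Set.Icc a b) → 0 < lam →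
      (∀ x ∈ Set.Icc a b, |F (d + 1) x| ∈ Set.Icc lam (A * lam)) → A * lam ≤ 1 / 2 →
      1 ≤ lam * (2 * H) ^ (d + 1) → lam * (H : ℝ) ^ (d + 1) ≤ 1 →
      ‖∑ n ∈ Ioc ⌊a⌋₊ ⌊b⌋₊, eexp (F 0 n)‖ ≤
        H + C * a * (a ^ h * (lam + 1 / a + (H / a) ^ 2)) ^ ((2 * triangular d : ℕ) : ℝ)⁻¹ := by
  obtain ⟨C, hC, short_le⟩ := exists_sum_norm_sum_eexp_le hd hA hh
  refine ⟨C, hC, ?_⟩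
  intro H F a b lam hH ha hab hb hHa hF hlam hbd hAlam hlamH hlamH'
  have mem_Icc (x) (hx : x ∈ Ioc ⌊a⌋₊ (⌊b⌋₊ - H)) :
      (x : ℝ) ∈ Set.Icc a b ∧ (x : ℝ) + H ∈ Set.Icc a b := by
    obtain ⟨ha_lt, hle_b⟩ := mem_Ioc.1 hx
    have hx_ge : a ≤ x := ((Nat.floor_lt (by linarith)).1 ha_lt).le
    have hx_le : (x : ℝ) + H ≤ b := by
      rw [← Nat.cast_add, ← Nat.le_floor_iff (by linarith)]
      omega
    have : (0 : ℝ) ≤ H := H.cast_nonneg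
    exact ⟨⟨hx_ge, by linarith⟩, ⟨by linarith, hx_le⟩⟩
  have hH_pos : (0 : ℝ) < H := Nat.cast_pos.2 hH
  refine le_of_mul_le_mul_left ((mul_norm_sum_Ioc_le (g := fun n ↦ eexp (F 0 n))
    (fun n ↦ (norm_eexp _).le) _ _ H).trans ?_) hH_pos
  simp only [Nat.cast_add, Nat.cast_one]
  exact (add_le_add le_rfl (short_le hH ha hab hb hHa hF hlam hbd hAlam hlamH hlamH'
    mem_Icc)).trans_eq (by ring)

lemma exists_norm_sum_eexp_le {d : ℕ} (hd : 2 ≤ d) {A ε : ℝ} (hA : 1 ≤ A) (hε : 0 < ε) :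
    ∃ C : ℝ, 0 < C ∧ ∀ {F : ℕ → ℝ → ℝ} {a b lam : ℝ}, 1 ≤ a → a ≤ b → b ≤ 2 * a → 0 < lam →
      IsDerivChain (d + 1) F (Set.Icc a b) →
      (∀ x ∈ Set.Icc a b, |F (d + 1) x| ∈ Set.Icc lam (A * lam)) →
      ‖∑ n ∈ Ioc ⌊a⌋₊ ⌊b⌋₊, eexp (F 0 n)‖ ≤ C * a ^ (1 + ε) * saving (d + 1) a lam := by
  have hd_one : 1 ≤ d := one_le_two.trans hd
  obtain ⟨C, hC, main_le⟩ := exists_norm_sum_eexp_le_of_pow_near_one hd (by positivity : 0 < A) hε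
  refine ⟨1 + C + 4 * A, by positivity, ?_⟩
  intro F a b lam ha hab hb hlam hF hbd
  have ha_pos : 0 < a := by positivity
  have haε : 1 ≤ a ^ ε := Real.one_le_rpow ha hε.le
  set θ : ℝ := ((2 * triangular d : ℕ) : ℝ)⁻¹
  have hθ : θ ≤ 1 := (inv_two_mul_triangular_le hd_one).trans one_half_lt_one.le
  set S := saving (d + 1) a lam
  have hS : 0 ≤ S := (Real.rpow_nonneg (by positivity) _).trans (rpow_le_saving hd_one ha_pos hlam)
  suffices ‖∑ n ∈ Ioc ⌊a⌋₊ ⌊b⌋₊, eexp (F 0 n)‖ ≤ (1 + C + 4 * A) * (a * a ^ ε) * S by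
    rwa [Real.rpow_add ha_pos, Real.rpow_one]
  by_cases h : A * lam ≤ 1 / 2 → a < lam ^ (-((d + 1 : ℕ) : ℝ)⁻¹)
  · calc _ ≤ 4 * A * (a * 1) * S := by
          rw [mul_one]
          exact norm_sum_eexp_le_mul_saving (fun n ↦ F 0 n) hd_one ha hab hb hlam hA h
      _ ≤ _ := by
          gcongr
          linarith
  · obtain ⟨hAlam, hLa⟩ := Classical.not_imp.1 h
    rw [not_lt] at hLa
    obtain ⟨H, hH, hHL, hlamH', hlamH⟩ :=
      exists_nat_mul_pow_near_one (Nat.succ_ne_zero d) hlam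
        (by linarith [le_mul_of_one_le_left hlam.le hA])
    have hHS : (H : ℝ) ≤ a * S := hHL.trans (rpow_le_mul_saving hd_one ha_pos hlam hLa)
    have main_term_le : (a ^ ε * (lam + 1 / a + (H / a) ^ 2)) ^ θ ≤ a ^ ε * S := by
      rw [Real.mul_rpow (by positivity) (by positivity)]
      gcongr
      · exact Real.rpow_le_self_of_one_le haε hθ
      · refine le_trans ?_ (rpow_le_saving hd_one ha_pos hlam)
        gcongr
    calc _ ≤ H + C * a * (a ^ ε * (lam + 1 / a + (H / a) ^ 2)) ^ θ :=
          main_le hH ha hab hb (hHL.trans hLa) hF hlam hbd hAlam hlamH hlamH'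
      _ ≤ a * 1 * S + C * a * (a ^ ε * S) := by
          rw [mul_one]
          gcongr
      _ ≤ a * a ^ ε * S + C * a * (a ^ ε * S) := by gcongr
      _ ≤ _ := by
          have : 0 ≤ 4 * A * (a * a ^ ε) * S := by positivity
          linarith

end HeathBrown

theorem heath_brown_kth_derivative (k : ℕ) (hk : 3 ≤ k) (A : ℝ) (hA : 1 ≤ A)
    (ε : ℝ) (hε : 0 < ε) :
    ∃ C > (0 : ℝ), ∀ (a b : ℝ) (f : ℝ → ℝ) (lam : ℝ),
      1 ≤ a → a < b → b ≤ 2 * a → 0 < lam →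
      ContDiffOn ℝ k f (Set.Icc a b) →
      (∀ x ∈ Set.Icc a b,
        lam ≤ |iteratedDerivWithin k f (Set.Icc a b) x| ∧
        |iteratedDerivWithin k f (Set.Icc a b) x| ≤ A * lam) →
      ‖∑ n ∈ Finset.Ioc ⌊a⌋₊ ⌊b⌋₊, eexp (f n)‖ ≤
        C * a ^ (1 + ε) *
          (lam ^ ((1 : ℝ) / ((k : ℝ) * ((k : ℝ) - 1))) +
            a ^ (-(1 : ℝ) / ((k : ℝ) * ((k : ℝ) - 1))) +
            a ^ (-(2 : ℝ) / ((k : ℝ) * ((k : ℝ) - 1))) *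
              lam ^ (-(2 : ℝ) / ((k : ℝ) ^ 2 * ((k : ℝ) - 1)))) := by
  obtain ⟨d, rfl⟩ : ∃ d, k = d + 1 := ⟨k - 1, by omega⟩
  obtain ⟨C, hC, sum_le⟩ := HeathBrown.exists_norm_sum_eexp_le (d := d) (by omega) hA hε
  refine ⟨C, hC, fun a b f lam ha hab hb hlam hf hbd ↦ ?_⟩
  have chain := HeathBrown.isDerivChain_iteratedDerivWithin (uniqueDiffOn_Icc hab) hf
  simpa only [iteratedDerivWithin_zero, HeathBrown.saving] using sum_le ha hab.le hb hlam chain hbd
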